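/- arXiv:1708.03250 — 4 statements merged into one kernel-verified Lean document; each statement's English description precedes it below -/
import Mathlib

section
/- If P_1, ..., P_n are n-dimensional lattice polytopes in R^n, then MV(P_1,...,P_n) = 1 + sum over nonempty subsets I of [n] of (-1)^(n-|I|) times the number of interior lattice points of the Minkowski sum P_I. -/
open scoped Pointwise
open MeasureTheory Finset

def IsLatticePt {n : ℕ} (x : Fin n → ℝ) : Prop := ∀ i, ∃ z : ℤ, x i = (z : ℝ)

def IsLatticePolytope {n : ℕ} (P : Set (Fin n → ℝ)) : Prop :=
  ∃ V : Finset (Fin n → ℝ), V.Nonempty ∧ (∀ v ∈ V, IsLatticePt v) ∧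
    P = convexHull ℝ (V : Set (Fin n → ℝ))

noncomputable def adim {n : ℕ} (A : Set (Fin n → ℝ)) : ℕ :=
  Module.finrank ℝ (affineSpan ℝ A).direction

def relintLat {n : ℕ} (A : Set (Fin n → ℝ)) : Set (Fin n → ℝ) :=
  {x ∈ intrinsicInterior ℝ A | IsLatticePt x}

def intLat {n : ℕ} (A : Set (Fin n → ℝ)) : Set (Fin n → ℝ) :=
  {x ∈ interior A | IsLatticePt x}

noncomputable def mixedVol {n m : ℕ} (P : Fin m → Set (Fin n → ℝ)) : ℝ :=
  ∑ I : Finset (Fin m), (-1 : ℝ) ^ (m - I.card) * (volume (∑ i ∈ I, P i)).toReal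
set_option linter.unusedSectionVars false
set_option linter.unusedVariables false

namespace MVP
open Filter Topology

section lin
variable {E ι : Type} [AddCommGroup E] [Module ℝ E] [Fintype ι] [DecidableEq ι]

/-- `B` indexes a basis of `E`. -/
def Bas (U : ι → E) (B : Finset ι) : Prop :=
  LinearIndependent ℝ (fun b : B => U b) ∧
    ⊤ ≤ Submodule.span ℝ (Set.range (fun b : B => U b))

open Classical in
/-- Coordinates with respect to the basis `B`. -/
noncomputable def crd (U : ι → E) (B : Finset ι) (u : ι) : E →ₗ[ℝ] ℝ :=
  if h : Bas U B ∧ u ∈ B then (Module.Basis.mk h.1.1 h.1.2).coord ⟨u, h.2⟩ else 0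

lemma crd_sum {U : ι → E} {B : Finset ι} (h : Bas U B) (z : E) :
    ∑ b ∈ B, crd U B b z • U b = z := by
  conv_rhs => rw [← (Module.Basis.mk h.1 h.2).sum_repr z]
  rw [← Finset.sum_coe_sort B]
  refine Finset.sum_congr rfl fun b _ => ?_
  simp [crd, h]

lemma crd_self {U : ι → E} {B : Finset ι} (h : Bas U B) {b b' : ι} (hb : b ∈ B) (hb' : b' ∈ B) :
    crd U B b (U b') = if b' = b then 1 else 0 := by
  have : U b' = Module.Basis.mk h.1 h.2 ⟨b', hb'⟩ := by simp
  rw [crd, dif_pos ⟨h, hb⟩, this, Module.Basis.coord_apply, Module.Basis.repr_self]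
  simp [Finsupp.single_apply]

lemma crd_eq {U : ι → E} {B : Finset ι} (h : Bas U B) {c : ι → ℝ} {z : E}
    (hc : ∑ b ∈ B, c b • U b = z) {b : ι} (hb : b ∈ B) : crd U B b z = c b := by
  rw [← hc, map_sum]
  rw [Finset.sum_congr rfl (g := fun b' => if b' = b then c b' else 0)]
  · simp [hb]
  · intro b' hb'
    rw [map_smul, crd_self h hb hb']
    simp

/-- Cone membership. -/
def Cn (U : ι → E) (y : E) : Prop := ∃ c : ι → ℝ, (∀ u, 0 ≤ c u) ∧ ∑ u, c u • U u = y

lemma Cn.add {U : ι → E} {y y' : E} (h : Cn U y) (h' : Cn U y') : Cn U (y + y') := by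
  obtain ⟨c, hc, rfl⟩ := h
  obtain ⟨d, hd, rfl⟩ := h'
  exact ⟨c + d, fun u => add_nonneg (hc u) (hd u), by simp [add_smul, Finset.sum_add_distrib]⟩

lemma Cn.smul {U : ι → E} {y : E} (h : Cn U y) {t : ℝ} (ht : 0 ≤ t) : Cn U (t • y) := by
  obtain ⟨c, hc, rfl⟩ := h
  exact ⟨fun u => t * c u, fun u => mul_nonneg ht (hc u), by simp [mul_smul, Finset.smul_sum]⟩

lemma Cn_of_bas {U : ι → E} {B : Finset ι} (h : Bas U B) {y : E}
    (hy : ∀ b ∈ B, 0 ≤ crd U B b y) : Cn U y := by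
  refine ⟨fun u => if u ∈ B then crd U B u y else 0, fun u => ?_, ?_⟩
  · dsimp only; split_ifs with hu
    · exact hy u hu
    · exact le_rfl
  · conv_rhs => rw [← crd_sum h y]
    simp [ite_smul]

/-- Generic vectors. -/
def Gen (U : ι → E) (y : E) : Prop := ∀ B, Bas U B → ∀ b ∈ B, crd U B b y ≠ 0

/-- Generic costs. -/
def GenW (U : ι → E) (w : ι → ℝ) : Prop :=
  ∀ B, Bas U B → ∀ v, v ∉ B → ∑ b ∈ B, crd U B b (U v) * w b ≠ w v

/-- Dual feasible bases. -/
def DF (U : ι → E) (w : ι → ℝ) (B : Finset ι) : Prop :=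
  Bas U B ∧ ∀ v, v ∉ B → ∑ b ∈ B, crd U B b (U v) * w b < w v

lemma exists_pos_generic (S : Finset (ι → ℝ)) (hS : ∀ f ∈ S, f ≠ 0) :
    ∃ a : ι → ℝ, (∀ u, 0 < a u) ∧ ∀ f ∈ S, ∑ u, f u * a u ≠ 0 := by
  induction S using Finset.induction_on with
  | empty => exact ⟨fun _ => 1, by simp, by simp⟩
  | insert f S hf ih =>
    obtain ⟨a, ha, haS⟩ := ih (fun g hg => hS g (Finset.mem_insert_of_mem hg))
    by_cases h0 : ∑ u, f u * a u = 0
    · have hff : ∑ u, f u * f u ≠ 0 := by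
        intro h
        apply hS f (Finset.mem_insert_self _ _)
        funext u
        have := (Finset.sum_eq_zero_iff_of_nonneg (fun u _ => mul_self_nonneg (f u))).1 h u
          (Finset.mem_univ _)
        simpa using this
      have e1 : ∀ᶠ t : ℝ in 𝓝[>] 0, ∀ u, 0 < a u + t * f u := by
        rw [eventually_all]
        intro u
        have : Tendsto (fun t : ℝ => a u + t * f u) (𝓝[>] 0) (𝓝 (a u + 0 * f u)) :=
          ((continuous_const.add (continuous_id.mul continuous_const)).tendsto 0).mono_left
            nhdsWithin_le_nhds
        exact this.eventually (lt_mem_nhds (by simpa using ha u))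
      have e2 : ∀ᶠ t : ℝ in 𝓝[>] 0, ∀ g ∈ S, ∑ u, g u * (a u + t * f u) ≠ 0 := by
        rw [Filter.eventually_all_finset]
        intro g hg
        have : Tendsto (fun t : ℝ => ∑ u, g u * (a u + t * f u)) (𝓝[>] 0)
            (𝓝 (∑ u, g u * (a u + 0 * f u))) :=
          ((continuous_finsetSum _ fun u _ => continuous_const.mul
            (continuous_const.add (continuous_id.mul continuous_const))).tendsto 0).mono_left
            nhdsWithin_le_nhds
        exact this.eventually_ne (by simpa using haS g hg)
      obtain ⟨t, ⟨h1, h2⟩, ht⟩ := ((e1.and e2).and self_mem_nhdsWithin).exists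
      have ht : (0:ℝ) < t := ht
      refine ⟨fun u => a u + t * f u, h1, fun g hg => ?_⟩
      rcases Finset.mem_insert.1 hg with rfl | hg
      · have : ∑ u, g u * (a u + t * g u) = ∑ u, g u * a u + t * ∑ u, g u * g u := by
          rw [Finset.mul_sum, ← Finset.sum_add_distrib]
          exact Finset.sum_congr rfl fun u _ => by ring
        rw [this, h0, zero_add]
        exact mul_ne_zero ht.ne' hff
      · exact h2 g hg
    · refine ⟨a, ha, fun g hg => ?_⟩
      rcases Finset.mem_insert.1 hg with rfl | hg
      · exact h0
      · exact haS g hg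

lemma exists_GenW (U : ι → E) : ∃ w, GenW U w := by
  classical
  let F : Finset ι × ι → (ι → ℝ) := fun p u =>
    (if u ∈ p.1 then crd U p.1 u (U p.2) else 0) - if u = p.2 then 1 else 0
  obtain ⟨a, -, ha⟩ := exists_pos_generic
    (((Finset.univ : Finset (Finset ι × ι)).filter (fun p => p.2 ∉ p.1)).image F) (by
      intro f hf
      obtain ⟨p, hp, rfl⟩ := Finset.mem_image.1 hf
      have hp : p.2 ∉ p.1 := by simpa using hp
      intro h
      have := congrFun h p.2
      simp [F, hp] at this)
  refine ⟨a, fun B hB v hv h => ?_⟩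
  apply ha (F (B, v)) (Finset.mem_image.2 ⟨(B, v), by simpa using hv, rfl⟩)
  simp [F, sub_mul, ite_mul, Finset.sum_sub_distrib, h]

lemma exists_Gen (U : ι → E) : ∃ a : ι → ℝ, (∀ u, 0 < a u) ∧ Gen U (∑ u, a u • U u) := by
  classical
  let F : Finset ι × ι → (ι → ℝ) := fun p u => crd U p.1 p.2 (U u)
  obtain ⟨a, ha0, ha⟩ := exists_pos_generic
    (((Finset.univ : Finset (Finset ι × ι)).filter (fun p => Bas U p.1 ∧ p.2 ∈ p.1)).image F) (by
      intro f hf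
      obtain ⟨p, hp, rfl⟩ := Finset.mem_image.1 hf
      have hp : Bas U p.1 ∧ p.2 ∈ p.1 := by simpa using hp
      intro h
      have := congrFun h p.2
      simp [F, crd_self hp.1 hp.2 hp.2] at this)
  refine ⟨a, ha0, fun B hB v hv h => ?_⟩
  apply ha (F (B, v)) (Finset.mem_image.2 ⟨(B, v), by simpa using ⟨hB, hv⟩, rfl⟩)
  rw [map_sum] at h
  rw [← h]
  refine Finset.sum_congr rfl fun u _ => ?_
  simp [F, mul_comm]

lemma lp_reduce {U : ι → E} {ht : E →ₗ[ℝ] ℝ} (hht : ∀ u, 0 < ht (U u)) (w : ι → ℝ) (y : E) :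
    ∀ (k : ℕ) (c : ι → ℝ), (Finset.univ.filter (fun u => c u ≠ 0)).card = k →
      (∀ u, 0 ≤ c u) → ∑ u, c u • U u = y →
      ∃ c' : ι → ℝ, (∀ u, 0 ≤ c' u) ∧ ∑ u, c' u • U u = y ∧ ∑ u, c' u * w u ≤ ∑ u, c u * w u ∧
        LinearIndependent ℝ (fun b : (Finset.univ.filter (fun u => c' u ≠ 0) : Finset ι) => U b) := by
  intro k
  induction k using Nat.strong_induction_on with
  | _ k ih =>
  intro c hk hc hy
  by_cases hli : LinearIndependent ℝ
      (fun b : (Finset.univ.filter (fun u => c u ≠ 0) : Finset ι) => U b)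
  · exact ⟨c, hc, hy, le_rfl, hli⟩
  -- a relation with nonpositive cost
  obtain ⟨d, hd0, hdU, u0, hu0, hdw⟩ : ∃ d : ι → ℝ, (∀ u, c u = 0 → d u = 0) ∧
      ∑ u, d u • U u = 0 ∧ ∃ u, d u ≠ 0 ∧ ∑ u, d u * w u ≤ 0 := by
    rw [Fintype.linearIndependent_iff] at hli
    push Not at hli
    obtain ⟨g, hg, ⟨u1, hu1⟩, hgu⟩ := hli
    let e : ι → ℝ := fun u => if h : u ∈ (Finset.univ.filter (fun u => c u ≠ 0) : Finset ι)
      then g ⟨u, h⟩ else 0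
    have he0 : ∀ u, c u = 0 → e u = 0 := by
      intro u hu; simp [e, hu]
    have heU : ∑ u, e u • U u = 0 := by
      rw [← hg, Finset.sum_coe_sort_eq_attach, ← Finset.sum_subset (Finset.subset_univ
        (Finset.univ.filter (fun u => c u ≠ 0) : Finset ι)), ← Finset.sum_attach]
      · refine Finset.sum_congr rfl fun u _ => ?_
        have := (Finset.mem_filter.1 u.2).2
        simp [e, this]
      · intro u _ hu
        simp only [e, dif_neg hu, zero_smul]
    have heu : e u1 ≠ 0 := by simp only [e, dif_pos hu1]; exact hgu
    rcases le_total (∑ u, e u * w u) 0 with h | h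
    · exact ⟨e, he0, heU, u1, heu, h⟩
    · exact ⟨-e, fun u hu => by simp [he0 u hu], by simp [heU], u1, by simpa using heu,
        by simpa using h⟩
  -- it has a negative entry
  obtain ⟨v, hv⟩ : ∃ v, d v < 0 := by
    by_contra hcon
    push Not at hcon
    have := congrArg ht hdU
    rw [map_sum, map_zero, Finset.sum_eq_zero_iff_of_nonneg] at this
    · have := this u0 (Finset.mem_univ _)
      rw [map_smul, smul_eq_mul, mul_eq_zero] at this
      rcases this with h | h
      · exact hu0 h
      · exact (hht u0).ne' h
    · intro u _
      rw [map_smul]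
      exact mul_nonneg (hcon u) (hht u).le
  obtain ⟨v, hvN, hmin⟩ := Finset.exists_min_image
    (Finset.univ.filter (fun u => d u < 0)) (fun u => c u / (-d u)) ⟨v, by simpa using hv⟩
  have hv : d v < 0 := by simpa using hvN
  set t := c v / (-d v) with ht'
  have ht0 : 0 ≤ t := div_nonneg (hc v) (by linarith)
  have hcv : c v + t * d v = 0 := by
    have hne : d v ≠ 0 := hv.ne
    rw [ht', div_neg, neg_mul, div_mul_cancel₀ _ hne]; ring
  obtain ⟨c', h1, h2, h3, h4⟩ := ih
    (Finset.univ.filter (fun u => c u + t * d u ≠ 0)).card (by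
      rw [← hk]
      apply Finset.card_lt_card
      rw [Finset.ssubset_iff_of_subset]
      · refine ⟨v, ?_, ?_⟩
        · simp only [Finset.mem_filter, Finset.mem_univ, true_and]
          intro h
          exact hv.ne (hd0 v h)
        · simp [hcv]
      · intro u
        simp only [Finset.mem_filter, Finset.mem_univ, true_and]
        intro h h'
        simp [h', hd0 u h'] at h) (fun u => c u + t * d u) rfl (by
      intro u
      rcases lt_or_ge (d u) 0 with h | h
      · have := hmin u (by simpa using h)
        rw [le_div_iff₀ (by linarith)] at this
        linarith
      · have := hc u
        positivity) (by
      simp only [add_smul, Finset.sum_add_distrib, mul_smul, ← Finset.smul_sum, hdU, hy]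
      simp)
  refine ⟨c', h1, h2, h3.trans ?_, h4⟩
  have : ∑ u, (c u + t * d u) * w u = ∑ u, c u * w u + t * ∑ u, d u * w u := by
    rw [Finset.mul_sum, ← Finset.sum_add_distrib]
    exact Finset.sum_congr rfl fun u _ => by ring
  rw [this]
  nlinarith

lemma extend_bas {U : ι → E} (hU : Submodule.span ℝ (Set.range U) = ⊤) {T : Finset ι}
    (hT : LinearIndependent ℝ (fun b : T => U b)) : ∃ B, T ⊆ B ∧ Bas U B := by
  classical
  have hT' : LinearIndepOn ℝ U (T : Set ι) := hT
  have h1 := hT'.linearIndepOn_extend (Set.subset_univ _)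
  have h2 := hT'.subset_extend (Set.subset_univ _)
  have h3 := hT'.span_image_extend_eq_span_image (Set.subset_univ _)
  set X := hT'.extend (Set.subset_univ _)
  refine ⟨X.toFinset, by intro u hu; simpa using h2 hu, ?_, ?_⟩
  · have : LinearIndepOn ℝ U ((X.toFinset : Finset ι) : Set ι) := by simpa using h1
    exact this
  · rw [Set.image_univ, hU] at h3
    rw [← h3]
    apply Submodule.span_mono
    rintro _ ⟨u, hu, rfl⟩
    exact ⟨⟨u, by simpa using hu⟩, rfl⟩

lemma exists_DF {U : ι → E} (hU : Submodule.span ℝ (Set.range U) = ⊤)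
    {ht : E →ₗ[ℝ] ℝ} (hht : ∀ u, 0 < ht (U u)) {w : ι → ℝ} (hw : GenW U w) {y : E}
    (hy : Gen U y) (hC : Cn U y) : ∃ B, DF U w B ∧ ∀ b ∈ B, 0 ≤ crd U B b y := by
  let S : Set (ι → ℝ) := {c | (∀ u, 0 ≤ c u) ∧ ∑ u, c u • U u = y ∧
    LinearIndependent ℝ (fun b : (Finset.univ.filter (fun u => c u ≠ 0) : Finset ι) => U b)}
  have key : ∀ c ∈ S, Bas U (Finset.univ.filter (fun u => c u ≠ 0)) ∧
      ∀ u, c u ≠ 0 → crd U (Finset.univ.filter (fun u => c u ≠ 0)) u y = c u := by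
    rintro c ⟨hc, hcy, hli⟩
    obtain ⟨B, hTB, hB⟩ := extend_bas hU hli
    have hsum : ∑ b ∈ B, c b • U b = y := by
      rw [← hcy]
      apply Finset.sum_subset (Finset.subset_univ _)
      intro u _ hu
      have : c u = 0 := by
        by_contra h
        exact hu (hTB (by simpa using h))
      simp [this]
    have : B = Finset.univ.filter (fun u => c u ≠ 0) := by
      apply Finset.Subset.antisymm _ hTB
      intro b hb
      have h1 := hy B hB b hb
      rw [crd_eq hB hsum hb] at h1
      simpa using h1
    rw [← this]
    refine ⟨hB, fun u hu => crd_eq hB hsum (hTB (by simpa using hu))⟩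
  have hfin : S.Finite := by
    apply Set.Finite.of_finite_image (f := fun c : ι → ℝ => Finset.univ.filter (fun u => c u ≠ 0))
      (Set.toFinite _)
    intro c hc c' hc' h
    dsimp only at h
    funext u
    have h1 := key c hc
    have h2 := key c' hc'
    by_cases hu : c u = 0
    · have : u ∉ Finset.univ.filter (fun u => c u ≠ 0) := by simpa using hu
      rw [h] at this
      have : c' u = 0 := by simpa using this
      rw [hu, this]
    · have : u ∈ Finset.univ.filter (fun u => c u ≠ 0) := by simpa using hu
      rw [h] at this
      have hu' : c' u ≠ 0 := by simpa using this
      rw [← h1.2 u hu, ← h2.2 u hu', h]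
  have hne : S.Nonempty := by
    obtain ⟨c, hc, hcy⟩ := hC
    obtain ⟨c', h1, h2, h3, h4⟩ := lp_reduce hht w y _ c rfl hc hcy
    exact ⟨c', h1, h2, h4⟩
  obtain ⟨c, hcS, hmin⟩ := Set.exists_min_image S (fun c => ∑ u, c u * w u) hfin hne
  have hmin' : ∀ c' : ι → ℝ, (∀ u, 0 ≤ c' u) → ∑ u, c' u • U u = y →
      ∑ u, c u * w u ≤ ∑ u, c' u * w u := by
    intro c' h1 h2
    obtain ⟨c'', k1, k2, k3, k4⟩ := lp_reduce hht w y _ c' rfl h1 h2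
    exact (hmin c'' ⟨k1, k2, k4⟩).trans k3
  obtain ⟨hB, hcr⟩ := key c hcS
  set B := Finset.univ.filter (fun u => c u ≠ 0) with hBdef
  have hmem : ∀ u, u ∈ B ↔ c u ≠ 0 := by simp [hBdef]
  refine ⟨B, ⟨hB, fun v hv => ?_⟩, fun b hb => ?_⟩
  · refine lt_of_le_of_ne ?_ (hw B hB v hv)
    let α : ι → ℝ := fun u => if u ∈ B then crd U B u (U v) else 0
    have e1 : ∀ᶠ t : ℝ in 𝓝[>] 0, ∀ u ∈ B, 0 < c u - t * α u := by
      rw [Filter.eventually_all_finset]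
      intro u hu
      have : Tendsto (fun t : ℝ => c u - t * α u) (𝓝[>] 0) (𝓝 (c u - 0 * α u)) :=
        ((continuous_const.sub (continuous_id.mul continuous_const)).tendsto 0).mono_left
          nhdsWithin_le_nhds
      refine this.eventually (lt_mem_nhds ?_)
      have := lt_of_le_of_ne (hcS.1 u) (Ne.symm ((hmem u).1 hu))
      simpa using this
    obtain ⟨t, h1, ht⟩ := (e1.and self_mem_nhdsWithin).exists
    have ht : (0:ℝ) < t := ht
    have h2 := hmin' (fun u => c u - t * α u + if u = v then t else 0) (by
      intro u
      by_cases hu : u ∈ B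
      · have := h1 u hu
        split_ifs <;> linarith
      · simp only [α, if_neg hu]
        have := hcS.1 u
        split_ifs <;> linarith) (by
      simp only [add_smul, sub_smul, Finset.sum_add_distrib, Finset.sum_sub_distrib, hcS.2.1,
        mul_smul, ← Finset.smul_sum]
      have : ∑ u, α u • U u = U v := by
        conv_rhs => rw [← crd_sum hB (U v)]
        simp [α, ite_smul]
      rw [this]
      simp [ite_smul])
    have h3 : ∑ u, (c u - t * α u + if u = v then t else 0) * w u =
        ∑ u, c u * w u - t * ∑ b ∈ B, crd U B b (U v) * w b + t * w v := by
      have : ∑ b ∈ B, crd U B b (U v) * w b = ∑ u, α u * w u := by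
        simp [α, ite_mul]
      rw [this]
      simp only [add_mul, sub_mul, Finset.sum_add_distrib, Finset.sum_sub_distrib, Finset.mul_sum]
      simp [ite_mul, mul_assoc]
    rw [h3] at h2
    have : t * ∑ b ∈ B, crd U B b (U v) * w b ≤ t * w v := by linarith
    exact le_of_mul_le_mul_left this ht
  · rw [hcr b ((hmem b).1 hb)]
    exact hcS.1 b

lemma DF_subset {U : ι → E} {w : ι → ℝ} {y : E} {B B' : Finset ι}
    (hB : DF U w B) (hB' : DF U w B') (h : ∀ b ∈ B, 0 ≤ crd U B b y)
    (h' : ∀ b ∈ B', 0 ≤ crd U B' b y) (hy : Gen U y)  :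
    ∑ b ∈ B, crd U B b y * w b ≤ ∑ b ∈ B', crd U B' b y * w b ∧
    (¬ B' ⊆ B → ∑ b ∈ B, crd U B b y * w b < ∑ b ∈ B', crd U B' b y * w b) := by
  have key : ∑ b ∈ B, crd U B b y * w b =
      ∑ b' ∈ B', crd U B' b' y * ∑ b ∈ B, crd U B b (U b') * w b := by
    conv_lhs => rw [← crd_sum hB'.1 y]
    simp only [map_sum, map_smul, smul_eq_mul, Finset.sum_mul, Finset.mul_sum]
    rw [Finset.sum_comm]
    simp only [mul_assoc]
  have hle : ∀ b' ∈ B', ∑ b ∈ B, crd U B b (U b') * w b ≤ w b' := by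
    intro b' _
    by_cases hb : b' ∈ B
    · rw [Finset.sum_congr rfl (g := fun b => if b = b' then w b else 0)]
      · simp [hb]
      · intro b hbB
        rw [crd_self hB.1 hbB hb]
        simp [eq_comm]
    · exact (hB.2 b' hb).le
  rw [key]
  refine ⟨Finset.sum_le_sum fun b' hb' => mul_le_mul_of_nonneg_left (hle b' hb') (h' b' hb'), ?_⟩
  intro hns
  obtain ⟨v, hv, hvB⟩ := Finset.not_subset.1 hns
  refine Finset.sum_lt_sum
    (fun b' hb' => mul_le_mul_of_nonneg_left (hle b' hb') (h' b' hb')) ⟨v, hv, ?_⟩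
  exact mul_lt_mul_of_pos_left (hB.2 v hvB)
    (lt_of_le_of_ne (h' v hv) (Ne.symm (hy B' hB'.1 v hv)))

lemma DF_unique {U : ι → E} {w : ι → ℝ} {y : E} {B B' : Finset ι}
    (hB : DF U w B) (hB' : DF U w B') (h : ∀ b ∈ B, 0 ≤ crd U B b y)
    (h' : ∀ b ∈ B', 0 ≤ crd U B' b y) (hy : Gen U y) : B = B' := by
  have h1 := DF_subset hB hB' h h' hy
  have h2 := DF_subset hB' hB h' h hy
  apply Finset.Subset.antisymm
  · by_contra hc
    exact absurd (h2.2 hc) (not_lt.2 h1.1)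
  · by_contra hc
    exact absurd (h1.2 hc) (not_lt.2 h2.1)

/-- half-open sign condition -/
def W (p : Prop) (x : ℝ) : Prop := (p ∧ 0 ≤ x) ∨ (¬ p ∧ 0 < x)

lemma W.nonneg {p : Prop} {x : ℝ} (h : W p x) : 0 ≤ x := by
  rcases h with h | h
  · exact h.2
  · exact h.2.le

lemma ev_sign (x σ : ℝ) (hσ : σ ≠ 0) :
    ∀ᶠ t : ℝ in 𝓝[>] 0, x + t * σ ≠ 0 ∧ (0 ≤ x + t * σ ↔ W (0 < σ) x) := by
  have hT : Tendsto (fun t : ℝ => x + t * σ) (𝓝[>] 0) (𝓝 (x + 0 * σ)) :=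
    ((continuous_const.add (continuous_id.mul continuous_const)).tendsto 0).mono_left
      nhdsWithin_le_nhds
  rw [zero_mul, add_zero] at hT
  rcases lt_trichotomy x 0 with hx | rfl | hx
  · filter_upwards [hT.eventually (gt_mem_nhds hx)] with t ht
    refine ⟨ht.ne, ⟨fun h => absurd ht (not_lt.2 h), fun h => absurd h.nonneg (not_le.2 hx)⟩⟩
  · filter_upwards [self_mem_nhdsWithin] with t ht
    have ht : (0:ℝ) < t := ht
    refine ⟨by simpa using ⟨ht.ne', hσ⟩, ?_⟩
    rw [zero_add, mul_nonneg_iff_of_pos_left ht]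
    simp only [W, le_refl, and_true, lt_irrefl, and_false, or_false]
    exact ⟨fun h => lt_of_le_of_ne h (Ne.symm hσ), le_of_lt⟩
  · filter_upwards [hT.eventually (lt_mem_nhds hx)] with t ht
    refine ⟨ht.ne', ⟨fun _ => ?_, fun _ => ht.le⟩⟩
    by_cases h : 0 < σ
    · exact Or.inl ⟨h, hx.le⟩
    · exact Or.inr ⟨h, hx⟩

lemma ev_gen {U : ι → E} {s : E} (hs : Gen U s) (z : E) :
    ∀ᶠ t : ℝ in 𝓝[>] 0, Gen U (z + t • s) ∧ ∀ B, Bas U B → ∀ b ∈ B,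
      (0 ≤ crd U B b (z + t • s) ↔ W (0 < crd U B b s) (crd U B b z)) := by
  have : ∀ᶠ t : ℝ in 𝓝[>] 0, ∀ B : Finset ι, ∀ b : ι, Bas U B → b ∈ B →
      (crd U B b (z + t • s) ≠ 0 ∧
      (0 ≤ crd U B b (z + t • s) ↔ W (0 < crd U B b s) (crd U B b z))) := by
    rw [eventually_all]; intro B
    rw [eventually_all]; intro b
    by_cases h : Bas U B ∧ b ∈ B
    · filter_upwards [ev_sign (crd U B b z) (crd U B b s) (hs B h.1 b h.2)] with t ht _ _
      simpa using ht
    · filter_upwards with t h1 h2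
      exact absurd ⟨h1, h2⟩ h
  filter_upwards [this] with t ht
  exact ⟨fun B hB b hb => (ht B b hB hb).1, fun B hB b hb => (ht B b hB hb).2⟩

/-- half open cell -/
def Cell (U : ι → E) (s : E) (B : Finset ι) (z : E) : Prop :=
  ∀ b ∈ B, W (0 < crd U B b s) (crd U B b z)

lemma Cell_unique {U : ι → E} {w : ι → ℝ} {s : E} (hs : Gen U s) {z : E} {B B' : Finset ι}
    (hB : DF U w B) (hB' : DF U w B') (h : Cell U s B z) (h' : Cell U s B' z) : B = B' := by
  obtain ⟨t, h1, h2⟩ := (ev_gen hs z).exists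
  exact DF_unique hB hB' (fun b hb => (h2 B hB.1 b hb).2 (h b hb))
    (fun b hb => (h2 B' hB'.1 b hb).2 (h' b hb)) h1

lemma cone_iff_cell {U : ι → E} (hU : Submodule.span ℝ (Set.range U) = ⊤)
    {ht : E →ₗ[ℝ] ℝ} (hht : ∀ u, 0 < ht (U u)) {w : ι → ℝ} (hw : GenW U w) {s : E}
    (hs : Gen U s) (hsC : Cn U s) (z : E) : Cn U z ↔ ∃ B, DF U w B ∧ Cell U s B z := by
  constructor
  · intro hz
    obtain ⟨t, ⟨h1, h2⟩, ht'⟩ := ((ev_gen hs z).and self_mem_nhdsWithin).exists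
    have ht' : (0:ℝ) < t := ht'
    obtain ⟨B, hB, hb⟩ := exists_DF hU hht hw h1 (hz.add (hsC.smul ht'.le))
    exact ⟨B, hB, fun b hbB => (h2 B hB.1 b hbB).1 (hb b hbB)⟩
  · rintro ⟨B, hB, h⟩
    exact Cn_of_bas hB.1 fun b hb => (h b hb).nonneg

lemma Gen.neg {U : ι → E} {s : E} (hs : Gen U s) : Gen U (-s) := by
  intro B hB b hb
  simpa using hs B hB b hb

lemma open_iff_cell {U : ι → E} (hU : Submodule.span ℝ (Set.range U) = ⊤)
    {ht : E →ₗ[ℝ] ℝ} (hht : ∀ u, 0 < ht (U u)) {w : ι → ℝ} (hw : GenW U w) {s : E}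
    (hs : Gen U s) (hsC : Cn U s) (z : E) :
    (∃ t : ℝ, 0 < t ∧ Cn U (z - t • s)) ↔ ∃ B, DF U w B ∧ Cell U (-s) B z := by
  constructor
  · rintro ⟨t0, ht0, hz⟩
    obtain ⟨t, ⟨h1, h2⟩, ht'⟩ := ((ev_gen hs.neg z).and (Ioo_mem_nhdsGT ht0)).exists
    have hC : Cn U (z + t • (-s)) := by
      have := hz.add (hsC.smul (sub_nonneg.2 ht'.2.le))
      convert this using 1
      module
    obtain ⟨B, hB, hb⟩ := exists_DF hU hht hw h1 hC
    exact ⟨B, hB, fun b hbB => (h2 B hB.1 b hbB).1 (hb b hbB)⟩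
  · rintro ⟨B, hB, h⟩
    obtain ⟨t, ⟨h1, h2⟩, ht'⟩ := ((ev_gen hs.neg z).and self_mem_nhdsWithin).exists
    refine ⟨t, ht', ?_⟩
    have := Cn_of_bas hB.1 (y := z + t • (-s)) fun b hb => (h2 B hB.1 b hb).2 (h b hb)
    convert this using 1
    module

end lin
end MVP
namespace MVP
open Filter Topology

set_option linter.unusedSectionVars false

section cnt
open Polynomial

/-- half-open unit interval -/
def BoxW (p : Prop) (x : ℝ) : Prop := (p ∧ 0 ≤ x ∧ x < 1) ∨ (¬ p ∧ 0 < x ∧ x ≤ 1)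

lemma exists_int_part {p : Prop} {x : ℝ} (h : W p x) : ∃ m : ℕ, BoxW p (x - m) := by
  rcases h with ⟨hp, hx⟩ | ⟨hp, hx⟩
  · exact ⟨⌊x⌋₊, Or.inl ⟨hp, sub_nonneg.2 (Nat.floor_le hx),
      by have := Nat.lt_floor_add_one x; linarith⟩⟩
  · refine ⟨⌈x⌉₊ - 1, Or.inr ⟨hp, ?_, ?_⟩⟩
    · have h1 := Nat.ceil_lt_add_one hx.le
      have h2 : 1 ≤ ⌈x⌉₊ := Nat.one_le_ceil_iff.2 hx
      push_cast [Nat.cast_sub h2]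
      linarith
    · have h1 := Nat.le_ceil x
      have h2 : 1 ≤ ⌈x⌉₊ := Nat.one_le_ceil_iff.2 hx
      push_cast [Nat.cast_sub h2]
      linarith

lemma int_part_unique {p : Prop} {x y : ℝ} {m m' : ℕ} (h : BoxW p x) (h' : BoxW p y)
    (he : x + m = y + m') : m = m' := by
  have h1 : |x - y| < 1 := by
    rw [abs_lt]
    rcases h with ⟨hp, h1, h2⟩ | ⟨hp, h1, h2⟩ <;> rcases h' with ⟨hp', h1', h2'⟩ | ⟨hp', h1', h2'⟩
    · constructor <;> linarith
    · exact absurd hp hp'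
    · exact absurd hp' hp
    · constructor <;> linarith
  rw [abs_lt] at h1
  have a1 : (m : ℝ) < m' + 1 := by linarith
  have a2 : (m' : ℝ) < m + 1 := by linarith
  norm_cast at a1 a2
  omega

lemma BoxW.add {p : Prop} {x : ℝ} (h : BoxW p x) (m : ℕ) : W p (x + m) := by
  have : (0:ℝ) ≤ m := Nat.cast_nonneg m
  rcases h with ⟨hp, h1, h2⟩ | ⟨hp, h1, h2⟩
  · exact Or.inl ⟨hp, by linarith⟩
  · exact Or.inr ⟨hp, by linarith⟩

lemma BoxW.nonneg {p : Prop} {x : ℝ} (h : BoxW p x) : 0 ≤ x := by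
  rcases h with ⟨hp, h1, h2⟩ | ⟨hp, h1, h2⟩ <;> linarith

lemma BoxW.le_one {p : Prop} {x : ℝ} (h : BoxW p x) : x ≤ 1 := by
  rcases h with ⟨hp, h1, h2⟩ | ⟨hp, h1, h2⟩ <;> linarith

lemma BoxW.compl {p p' : Prop} (hpp : p' ↔ ¬ p) {x : ℝ} (h : BoxW p x) : BoxW p' (1 - x) := by
  rcases h with ⟨hp, h1, h2⟩ | ⟨hp, h1, h2⟩
  · exact Or.inr ⟨by tauto, by linarith, by linarith⟩
  · exact Or.inl ⟨by tauto, by linarith, by linarith⟩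

/-- the counting polynomial -/
noncomputable def qp (k : ℕ) (h : ℝ) : ℝ[X] :=
  C (((k - 1).factorial : ℝ)⁻¹) * ∏ j ∈ Finset.range (k - 1), (X + C ((j : ℝ) + 1 - h))

lemma qp_natDegree (k : ℕ) (h : ℝ) : (qp k h).natDegree ≤ k - 1 := by
  refine (natDegree_C_mul_le _ _).trans ((natDegree_prod_le _ _).trans ?_)
  exact (Finset.sum_le_card_nsmul _ _ 1 fun j _ => (natDegree_X_add_C _).le).trans (by simp)

lemma qp_eval (k : ℕ) (h t : ℝ) : (qp k h).eval t =
    ((k - 1).factorial : ℝ)⁻¹ * ∏ j ∈ Finset.range (k - 1), (t + ((j : ℝ) + 1 - h)) := by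
  simp [qp, eval_prod]

lemma qp_eval_nat {k h t : ℕ} (hk : 1 ≤ k) (hh : h < k + t) :
    (qp k (h : ℝ)).eval (t : ℝ) = ((if h ≤ t then Nat.multichoose k (t - h) else 0 : ℕ) : ℝ) := by
  rw [qp_eval]
  obtain ⟨k, rfl⟩ : ∃ k', k = k' + 1 := ⟨k - 1, by omega⟩
  split_ifs with hle
  · obtain ⟨l, rfl⟩ := Nat.exists_eq_add_of_le hle
    have h1 := Nat.ascFactorial_eq_factorial_mul_choose l k
    rw [Nat.ascFactorial_eq_prod_range] at h1
    have h2 : Nat.multichoose (k + 1) (h + l - h) = (l + k).choose k := by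
      rw [Nat.multichoose_eq, Nat.add_sub_cancel_left, show k + 1 + l - 1 = l + k by omega]
      exact (Nat.choose_symm_add).symm ▸ rfl
    rw [h2]
    have h3 : ((∏ j ∈ Finset.range k, (l + 1 + j) : ℕ) : ℝ) = k.factorial * (l + k).choose k := by
      rw [h1]; push_cast; ring
    have h4 : ∏ j ∈ Finset.range k, (((h + l : ℕ) : ℝ) + ((j : ℝ) + 1 - h)) =
        ((∏ j ∈ Finset.range k, (l + 1 + j) : ℕ) : ℝ) := by
      push_cast
      exact Finset.prod_congr rfl fun j _ => by ring
    rw [Nat.add_sub_cancel, h4, h3, inv_mul_cancel_left₀]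
    exact_mod_cast k.factorial_ne_zero
  · rw [Nat.add_sub_cancel, Nat.cast_zero, Finset.prod_eq_zero (i := h - t - 1), mul_zero]
    · simp; omega
    · have h1 : t + (h - t - 1) + 1 = h := by omega
      have h2 : (t : ℝ) + ((h - t - 1 : ℕ) : ℝ) + 1 = h := by exact_mod_cast h1
      linarith

lemma qp_neg (k : ℕ) (hk : 1 ≤ k) (h t : ℝ) :
    (qp k h).eval (-t) = (-1) ^ (k - 1) * (qp k (k - h)).eval t := by
  rw [qp_eval, qp_eval]
  obtain ⟨k, rfl⟩ : ∃ k', k = k' + 1 := ⟨k - 1, by omega⟩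
  rw [Nat.add_sub_cancel, ← Finset.prod_range_reflect, mul_left_comm]
  congr 1
  have hc : (-1 : ℝ) ^ k = ∏ _j ∈ Finset.range k, (-1 : ℝ) := by simp
  rw [hc, ← Finset.prod_mul_distrib]
  refine Finset.prod_congr rfl fun j hj => ?_
  have hj := Finset.mem_range.1 hj
  have : ((k - 1 - j : ℕ) : ℝ) = k - 1 - j := by
    have : (k - 1 - j) + (j + 1) = k := by omega
    have : ((k - 1 - j : ℕ) : ℝ) + (j + 1) = k := by exact_mod_cast this
    linarith
  rw [this]
  push_cast
  ring

variable {E ι τ : Type} [AddCommGroup E] [Module ℝ E] [Fintype ι] [DecidableEq ι]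
  [Fintype τ] [DecidableEq τ]

lemma card_piAntidiag_nat (s : Finset ι) (n : ℕ) :
    (Finset.piAntidiag s n).card = Nat.multichoose s.card n := by
  rw [← Finset.card_finsuppAntidiag_nat_eq_multichoose]
  refine Finset.card_bij' (fun f _ => Finsupp.equivFunOnFinite.symm f) (fun f _ => f) ?_ ?_ ?_ ?_
  · intro f hf
    simpa [Finset.subset_iff] using hf
  · intro f hf
    simpa [Finset.subset_iff] using hf
  · intro f hf
    rfl
  · intro f hf
    ext; rfl

lemma card_mults (B : Finset ι) (typ : ι → τ) (h l : τ → ℕ) : ∃ M : Finset (ι → ℕ),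
    (∀ m, m ∈ M ↔ (∀ u, u ∉ B → m u = 0) ∧
      ∀ i, h i + ∑ u ∈ B.filter (fun u => typ u = i), m u = l i) ∧
    M.card = ∏ i, if h i ≤ l i then
      Nat.multichoose (B.filter (fun u => typ u = i)).card (l i - h i) else 0 := by
  classical
  let A : τ → Finset (ι → ℕ) := fun i =>
    if h i ≤ l i then Finset.piAntidiag (B.filter (fun u => typ u = i)) (l i - h i) else ∅
  have hA : ∀ i f, f ∈ A i ↔ (∀ u, f u ≠ 0 → u ∈ B ∧ typ u = i) ∧
      h i + ∑ u ∈ B.filter (fun u => typ u = i), f u = l i := by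
    intro i f
    by_cases hi : h i ≤ l i
    · simp only [A, if_pos hi, Finset.mem_piAntidiag, Finset.mem_filter]
      have e : ∑ u ∈ B.filter (fun u => typ u = i), f u = l i - h i ↔
        h i + ∑ u ∈ B.filter (fun u => typ u = i), f u = l i := by omega
      rw [e, and_comm]
    · simp only [A, if_neg hi, Finset.notMem_empty, false_iff]
      rintro ⟨_, h2⟩
      omega
  refine ⟨(Fintype.piFinset A).image (fun g u => g (typ u) u), ?_, ?_⟩
  · intro m
    rw [Finset.mem_image]
    constructor
    · rintro ⟨g, hg, rfl⟩
      rw [Fintype.mem_piFinset] at hg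
      refine ⟨fun u hu => ?_, fun i => ?_⟩
      · by_contra hne
        exact hu (((hA _ _).1 (hg (typ u))).1 u hne).1
      · rw [← ((hA _ _).1 (hg i)).2]
        congr 1
        refine Finset.sum_congr rfl fun u hu => ?_
        simp only [(Finset.mem_filter.1 hu).2]
    · rintro ⟨h1, h2⟩
      refine ⟨fun i u => if typ u = i then m u else 0, ?_, by simp⟩
      rw [Fintype.mem_piFinset]
      intro i
      rw [hA]
      refine ⟨fun u hu => ?_, ?_⟩
      · by_cases ht : typ u = i
        · refine ⟨?_, ht⟩
          by_contra hB
          simp [h1 u hB] at hu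
        · simp [ht] at hu
      · rw [← h2 i]
        congr 1
        refine Finset.sum_congr rfl fun u hu => ?_
        rw [if_pos (Finset.mem_filter.1 hu).2]
  · rw [Finset.card_image_of_injOn, Fintype.card_piFinset]
    · refine Finset.prod_congr rfl fun i _ => ?_
      by_cases hi : h i ≤ l i
      · simp only [A, if_pos hi, card_piAntidiag_nat]
      · simp only [A, if_neg hi, Finset.card_empty]
    · intro g hg g' hg' he
      rw [Finset.mem_coe, Fintype.mem_piFinset] at hg hg'
      funext i u
      by_cases hu : typ u = i
      · subst hu
        exact congrFun he u
      · have e1 : g i u = 0 := by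
          by_contra hne
          exact hu (((hA _ _).1 (hg i)).1 u hne).2
        have e2 : g' i u = 0 := by
          by_contra hne
          exact hu (((hA _ _).1 (hg' i)).1 u hne).2
        rw [e1, e2]

lemma ht_eq {U : ι → E} {B : Finset ι} (hB : Bas U B) {typ : ι → τ} {hh : τ → E →ₗ[ℝ] ℝ}
    (hhU : ∀ i u, hh i (U u) = if typ u = i then 1 else 0) (i : τ) (z : E) :
    hh i z = ∑ u ∈ B.filter (fun u => typ u = i), crd U B u z := by
  conv_lhs => rw [← crd_sum hB z]
  rw [map_sum, Finset.sum_filter]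
  refine Finset.sum_congr rfl fun u _ => ?_
  rw [map_smul, hhU]
  simp

lemma count_cell {U : ι → E} {B : Finset ι} (hB : Bas U B) {typ : ι → τ} {hh : τ → E →ₗ[ℝ] ℝ}
    (hhU : ∀ i u, hh i (U u) = if typ u = i then 1 else 0) (Λ : AddSubgroup E)
    (hUΛ : ∀ u, U u ∈ Λ) (hintg : ∀ i, ∀ z ∈ Λ, ∃ m : ℤ, hh i z = m) (κ : ι → Prop)
    (bx : Finset E) (hbx : ∀ p, p ∈ bx ↔ p ∈ Λ ∧ ∀ b ∈ B, BoxW (κ b) (crd U B b p))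
    (hk : ∀ i, 1 ≤ (B.filter (fun u => typ u = i)).card)
    (l : τ → ℕ) (hl : ∀ p ∈ bx, ∀ i, hh i p < (B.filter (fun u => typ u = i)).card + l i) :
    Set.Finite {z | z ∈ Λ ∧ (∀ b ∈ B, W (κ b) (crd U B b z)) ∧ ∀ i, hh i z = l i} ∧
    (Set.ncard {z | z ∈ Λ ∧ (∀ b ∈ B, W (κ b) (crd U B b z)) ∧ ∀ i, hh i z = l i} : ℝ) =
      ∑ p ∈ bx, ∏ i, (qp (B.filter (fun u => typ u = i)).card (hh i p)).eval (l i : ℝ) := by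
  classical
  have hN : ∀ p, ∃ f : τ → ℕ, p ∈ bx → ∀ i, hh i p = f i := by
    intro p
    by_cases hp : p ∈ bx
    · have : ∀ i, ∃ m : ℕ, hh i p = m := by
        intro i
        obtain ⟨m, hm⟩ := hintg i p ((hbx p).1 hp).1
        have h0 : 0 ≤ hh i p := by
          rw [ht_eq hB hhU]
          exact Finset.sum_nonneg fun u hu =>
            (((hbx p).1 hp).2 u (Finset.mem_filter.1 hu).1).nonneg
        rw [hm] at h0
        have h0 : 0 ≤ m := by exact_mod_cast h0
        refine ⟨m.toNat, ?_⟩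
        rw [hm]
        exact_mod_cast (Int.toNat_of_nonneg h0).symm
      choose f hf using this
      exact ⟨f, fun _ => hf⟩
    · exact ⟨0, fun h => absurd h hp⟩
  choose hN hhN using hN
  choose M hM hMc using fun p => card_mults B typ (hN p) l
  let F : (Σ _ : E, (ι → ℕ)) → E := fun x => x.1 + ∑ b ∈ B, (x.2 b : ℝ) • U b
  have hcrdF : ∀ x, ∀ b ∈ B, crd U B b (F x) = crd U B b x.1 + x.2 b := by
    intro x b hb
    simp only [F, map_add]
    rw [crd_eq hB (c := fun b => (x.2 b : ℝ)) rfl hb]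
  have hset : {z | z ∈ Λ ∧ (∀ b ∈ B, W (κ b) (crd U B b z)) ∧ ∀ i, hh i z = l i} =
      (((bx.sigma M).image F : Finset E) : Set E) := by
    ext z
    rw [Finset.mem_coe, Finset.mem_image]
    constructor
    · rintro ⟨hz, hW, hhz⟩
      have : ∀ b, ∃ m : ℕ, (b ∈ B → BoxW (κ b) (crd U B b z - m)) ∧ (b ∉ B → m = 0) := by
        intro b
        by_cases hb : b ∈ B
        · obtain ⟨m, hm⟩ := exists_int_part (hW b hb)
          exact ⟨m, fun _ => hm, fun h => absurd hb h⟩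
        · exact ⟨0, fun h => absurd h hb, fun _ => rfl⟩
      choose m hm hm0 using this
      have hcp : ∀ b ∈ B, crd U B b (z - ∑ b ∈ B, (m b : ℝ) • U b) = crd U B b z - m b := by
        intro b hb
        rw [map_sub, crd_eq hB (c := fun b => (m b : ℝ)) rfl hb]
      have hp : z - ∑ b ∈ B, (m b : ℝ) • U b ∈ bx := by
        rw [hbx]
        refine ⟨Λ.sub_mem hz (Λ.sum_mem fun b _ => ?_), fun b hb => ?_⟩
        · rw [Nat.cast_smul_eq_nsmul]
          exact Λ.nsmul_mem (hUΛ b) _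
        · rw [hcp b hb]; exact hm b hb
      refine ⟨⟨z - ∑ b ∈ B, (m b : ℝ) • U b, m⟩, ?_, by simp [F]⟩
      rw [Finset.mem_sigma]
      refine ⟨hp, (hM _ _).2 ⟨hm0, fun i => ?_⟩⟩
      have e1 := hhN _ hp i
      have e2 := hhz i
      rw [ht_eq hB hhU] at e1 e2
      rw [Finset.sum_congr rfl (g := fun b => crd U B b z - m b)
        (fun b hb => hcp b (Finset.mem_filter.1 hb).1), Finset.sum_sub_distrib, e2] at e1
      have e3 : ((hN (z - ∑ b ∈ B, (m b : ℝ) • U b) i : ℕ) : ℝ) +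
        ∑ b ∈ B.filter (fun u => typ u = i), (m b : ℝ) = l i := by rw [← e1]; ring
      exact_mod_cast e3
    · rintro ⟨⟨p, m⟩, hx, rfl⟩
      rw [Finset.mem_sigma] at hx
      obtain ⟨hp, hm⟩ := hx
      have hp' := (hbx p).1 hp
      have hm := (hM _ _).1 hm
      refine ⟨Λ.add_mem hp'.1 (Λ.sum_mem fun b _ => ?_), fun b hb => ?_, fun i => ?_⟩
      · rw [Nat.cast_smul_eq_nsmul]
        exact Λ.nsmul_mem (hUΛ b) _
      · rw [hcrdF _ b hb]
        exact (hp'.2 b hb).add _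
      · rw [ht_eq hB hhU, Finset.sum_congr rfl (g := fun b => crd U B b p + m b)
          (fun b hb => hcrdF _ b (Finset.mem_filter.1 hb).1), Finset.sum_add_distrib,
          ← ht_eq hB hhU, hhN p hp i, ← hm.2 i]
        push_cast
        rfl
  rw [hset]
  refine ⟨Finset.finite_toSet _, ?_⟩
  rw [Set.ncard_coe_finset, Finset.card_image_of_injOn, Finset.card_sigma]
  · push_cast
    refine Finset.sum_congr rfl fun p hp => ?_
    rw [hMc p]
    push_cast
    refine Finset.prod_congr rfl fun i _ => ?_
    have hl' := hl p hp i
    rw [hhN p hp i] at hl' ⊢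
    rw [qp_eval_nat (hk i) (by exact_mod_cast hl')]
    push_cast
    rfl
  · rintro ⟨p, m⟩ hx ⟨p', m'⟩ hx' he
    rw [Finset.mem_coe, Finset.mem_sigma] at hx hx'
    have hm : m = m' := by
      funext b
      by_cases hb : b ∈ B
      · have := congrArg (crd U B b) he
        rw [hcrdF _ b hb, hcrdF _ b hb] at this
        exact int_part_unique (((hbx p).1 hx.1).2 b hb) (((hbx p').1 hx'.1).2 b hb) this
      · exact (((hM _ _).1 hx.2).1 b hb).trans (((hM _ _).1 hx'.2).1 b hb).symm
    subst hm
    have : p = p' := add_right_cancel he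
    subst this
    rfl

end cnt
end MVP
namespace MVP
open Filter Topology

section thm
open Polynomial
variable {E ι τ : Type} [AddCommGroup E] [Module ℝ E] [Fintype ι] [DecidableEq ι]
  [Fintype τ] [DecidableEq τ]

lemma ncard_biUnion_aux {α β : Type} (S : Finset α) (Z : α → Set β) (hfin : ∀ a ∈ S, (Z a).Finite)
    (hd : ∀ a ∈ S, ∀ b ∈ S, ∀ z, z ∈ Z a → z ∈ Z b → a = b) :
    {z | ∃ a ∈ S, z ∈ Z a}.ncard = ∑ a ∈ S, (Z a).ncard := by
  classical
  induction S using Finset.induction_on with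
  | empty => simp
  | insert a S ha ih =>
    have hS : {z | ∃ b ∈ insert a S, z ∈ Z b} = Z a ∪ {z | ∃ b ∈ S, z ∈ Z b} := by
      ext z; simp
    have hf : {z | ∃ b ∈ S, z ∈ Z b}.Finite := by
      have : {z | ∃ b ∈ S, z ∈ Z b} = ⋃ b ∈ S, Z b := by ext z; simp
      rw [this]
      exact S.finite_toSet.biUnion fun b hb => hfin b (Finset.mem_insert_of_mem hb)
    rw [hS, Set.ncard_union_eq _ (hfin a (Finset.mem_insert_self _ _)) hf, Finset.sum_insert ha, ih]
    · exact fun b hb => hfin b (Finset.mem_insert_of_mem hb)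
    · exact fun b hb c hc => hd b (Finset.mem_insert_of_mem hb) c (Finset.mem_insert_of_mem hc)
    · rw [Set.disjoint_left]
      rintro z hz ⟨b, hb, hzb⟩
      have := hd a (Finset.mem_insert_self _ _) b (Finset.mem_insert_of_mem hb) z hz hzb
      exact ha (this ▸ hb)

theorem multi_ehrhart {U : ι → E} (hspan : Submodule.span ℝ (Set.range U) = ⊤)
    {typ : ι → τ} {hh : τ → E →ₗ[ℝ] ℝ}
    (hhU : ∀ i u, hh i (U u) = if typ u = i then 1 else 0) (Λ : AddSubgroup E)
    (hUΛ : ∀ u, U u ∈ Λ) (hintg : ∀ i, ∀ z ∈ Λ, ∃ m : ℤ, hh i z = m)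
    (hty : ∀ i, ∃ u, typ u = i)
    (hfin : ∀ B, Bas U B → {p | p ∈ Λ ∧ ∀ b ∈ B, 0 ≤ crd U B b p ∧ crd U B b p ≤ 1}.Finite) :
    ∃ a : ι → ℝ, (∀ u, 0 < a u) ∧
    ∃ (J : Finset (Σ _ : Finset ι, E)) (q : (Σ _ : Finset ι, E) → τ → ℝ[X]),
      (∀ j ∈ J, ∑ i, (q j i).natDegree + Fintype.card τ ≤ Module.finrank ℝ E) ∧
      (∀ l : τ → ℕ, (Set.ncard {z | z ∈ Λ ∧ Cn U z ∧ ∀ i, hh i z = l i} : ℝ) =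
        ∑ j ∈ J, ∏ i, (q j i).eval (l i : ℝ)) ∧
      (∀ l : τ → ℕ, (∀ i, 1 ≤ l i) →
        (Set.ncard {z | z ∈ Λ ∧ (∃ t : ℝ, 0 < t ∧ Cn U (z - t • ∑ u, a u • U u)) ∧
          ∀ i, hh i z = l i} : ℝ) =
        (-1) ^ (Module.finrank ℝ E - Fintype.card τ) *
          ∑ j ∈ J, ∏ i, (q j i).eval (-(l i : ℝ))) := by
  classical
  obtain ⟨w, hw⟩ := exists_GenW U
  obtain ⟨a, ha, hgen⟩ := exists_Gen U
  set s := ∑ u, a u • U u with hs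
  have hsC : Cn U s := ⟨a, fun u => (ha u).le, rfl⟩
  have hht : ∀ u, 0 < (∑ i, hh i) (U u) := by
    intro u
    simp [LinearMap.sum_apply, hhU]
  have hhs : ∀ i, 0 < hh i s := by
    intro i
    rw [hs, map_sum]
    obtain ⟨u, hu⟩ := hty i
    refine Finset.sum_pos' (fun v _ => ?_) ⟨u, Finset.mem_univ _, ?_⟩
    · rw [map_smul, hhU]
      have := ha v
      split_ifs <;> simp [this.le]
    · rw [map_smul, hhU, if_pos hu]
      simpa using ha u
  let k : Finset ι → τ → ℕ := fun B i => (B.filter (fun u => typ u = i)).card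
  have hk : ∀ B, Bas U B → ∀ i, 1 ≤ k B i := by
    intro B hB i
    rw [Nat.one_le_iff_ne_zero]
    intro h0
    have h1 := ht_eq hB hhU i s
    rw [Finset.card_eq_zero.1 h0, Finset.sum_empty] at h1
    exact (hhs i).ne' h1
  have hcard : ∀ B, Bas U B → ∑ i, k B i = Module.finrank ℝ E := by
    intro B hB
    rw [Module.finrank_eq_card_basis (Module.Basis.mk hB.1 hB.2), Fintype.card_coe]
    exact (Finset.card_eq_sum_card_fiberwise (fun _ _ => Finset.mem_coe.2 (Finset.mem_univ _))).symm
  have hcard' : ∀ B, Bas U B → ∑ i, (k B i - 1) + Fintype.card τ = Module.finrank ℝ E := by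
    intro B hB
    rw [← hcard B hB, Fintype.card_eq_sum_ones, ← Finset.sum_add_distrib]
    exact Finset.sum_congr rfl fun i _ => Nat.sub_add_cancel (hk B hB i)
  have hbfin : ∀ (κ : ι → Prop) B, ∃ bx : Finset E, Bas U B →
      ∀ p, p ∈ bx ↔ p ∈ Λ ∧ ∀ b ∈ B, BoxW (κ b) (crd U B b p) := by
    intro κ B
    by_cases hB : Bas U B
    · have : {p | p ∈ Λ ∧ ∀ b ∈ B, BoxW (κ b) (crd U B b p)}.Finite :=
        (hfin B hB).subset fun p hp => ⟨hp.1, fun b hb => ⟨(hp.2 b hb).nonneg, (hp.2 b hb).le_one⟩⟩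
      exact ⟨this.toFinset, fun _ p => by simp⟩
    · exact ⟨∅, fun h => absurd h hB⟩
  choose bx hbx using hbfin
  let κ : Finset ι → ι → Prop := fun B b => 0 < crd U B b s
  let κ' : Finset ι → ι → Prop := fun B b => 0 < crd U B b (-s)
  have hκ : ∀ B, Bas U B → ∀ b ∈ B, (κ' B b ↔ ¬ κ B b) := by
    intro B hB b hb
    have := hgen B hB b hb
    simp only [κ, κ', map_neg, neg_pos, not_lt]
    exact ⟨le_of_lt, fun h => lt_of_le_of_ne h this⟩
  let D : Finset (Finset ι) := Finset.univ.filter (fun B => DF U w B)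
  have hD : ∀ B, B ∈ D ↔ DF U w B := by simp [D]
  have hcle : ∀ (κ : ι → Prop) B, Bas U B → ∀ p ∈ bx κ B, ∀ i, hh i p ≤ k B i := by
    intro κ B hB p hp i
    rw [ht_eq hB hhU i p]
    refine (Finset.sum_le_card_nsmul _ _ 1 fun u hu => ?_).trans (by simp [k])
    exact (((hbx κ B hB p).1 hp).2 u (Finset.mem_filter.1 hu).1).le_one
  have c1 : ∀ B ∈ D, ∀ l : τ → ℕ, _ := fun B hBD l => count_cell ((hD B).1 hBD).1 hhU Λ hUΛ hintg
    (κ B) (bx (κ B) B) (hbx (κ B) B ((hD B).1 hBD).1) (hk B ((hD B).1 hBD).1) l (by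
      have hB := ((hD B).1 hBD).1
      intro p hp i
      suffices h : hh i p < k B i by
        have : (0:ℝ) ≤ l i := Nat.cast_nonneg _
        have h' : hh i p < ((B.filter (fun u => typ u = i)).card : ℝ) := h
        linarith
      rw [ht_eq hB hhU i p]
      have h1 := hhs i
      rw [ht_eq hB hhU i s] at h1
      obtain ⟨b, hb, hpos⟩ := Finset.exists_lt_of_sum_lt (f := fun _ => (0:ℝ)) (by simpa using h1)
      have hbox := ((hbx _ B hB p).1 hp).2
      have : ∑ u ∈ B.filter (fun u => typ u = i), crd U B u p <
          ∑ u ∈ B.filter (fun u => typ u = i), (1:ℝ) := by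
        refine Finset.sum_lt_sum (fun u hu => (hbox u (Finset.mem_filter.1 hu).1).le_one)
          ⟨b, hb, ?_⟩
        rcases hbox b (Finset.mem_filter.1 hb).1 with h | h
        · exact h.2.2
        · exact absurd hpos h.1
      simpa [k] using this)
  have c2 : ∀ B ∈ D, ∀ l : τ → ℕ, (∀ i, 1 ≤ l i) → _ := fun B hBD l hl =>
    count_cell ((hD B).1 hBD).1 hhU Λ hUΛ hintg
    (κ' B) (bx (κ' B) B) (hbx (κ' B) B ((hD B).1 hBD).1) (hk B ((hD B).1 hBD).1) l (by
      intro p hp i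
      have h1 := hcle _ B ((hD B).1 hBD).1 p hp i
      have h2 : (1:ℝ) ≤ l i := by exact_mod_cast hl i
      have h' : hh i p ≤ ((B.filter (fun u => typ u = i)).card : ℝ) := h1
      linarith)
  refine ⟨a, ha, D.sigma (fun B => bx (κ B) B), fun j i => qp (k j.1 i) (hh i j.2), ?_, ?_, ?_⟩
  · intro j hj
    have hB := ((hD j.1).1 (Finset.mem_sigma.1 hj).1).1
    rw [← hcard' j.1 hB]
    gcongr
    exact qp_natDegree _ _
  · intro l
    have hset : {z | z ∈ Λ ∧ Cn U z ∧ ∀ i, hh i z = l i} = {z | ∃ B ∈ D, z ∈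
        {z | z ∈ Λ ∧ (∀ b ∈ B, W (κ B b) (crd U B b z)) ∧ ∀ i, hh i z = l i}} := by
      ext z
      simp only [Set.mem_ofPred_eq]
      rw [cone_iff_cell hspan hht hw hgen hsC]
      constructor
      · rintro ⟨h1, ⟨B, hB, h2⟩, h3⟩
        exact ⟨B, (hD B).2 hB, h1, h2, h3⟩
      · rintro ⟨B, hB, h1, h2, h3⟩
        exact ⟨h1, ⟨B, (hD B).1 hB, h2⟩, h3⟩
    rw [hset, ncard_biUnion_aux D _ (fun B hB => (c1 B hB l).1)
      (fun B hB B' hB' z hz hz' => Cell_unique hgen ((hD B).1 hB) ((hD B').1 hB') hz.2.1 hz'.2.1),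
      Finset.sum_sigma]
    push_cast
    exact Finset.sum_congr rfl fun B hB => (c1 B hB l).2
  · intro l hl
    have hset : {z | z ∈ Λ ∧ (∃ t : ℝ, 0 < t ∧ Cn U (z - t • s)) ∧ ∀ i, hh i z = l i} =
        {z | ∃ B ∈ D, z ∈
        {z | z ∈ Λ ∧ (∀ b ∈ B, W (κ' B b) (crd U B b z)) ∧ ∀ i, hh i z = l i}} := by
      ext z
      simp only [Set.mem_ofPred_eq]
      rw [open_iff_cell hspan hht hw hgen hsC]
      constructor
      · rintro ⟨h1, ⟨B, hB, h2⟩, h3⟩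
        exact ⟨B, (hD B).2 hB, h1, h2, h3⟩
      · rintro ⟨B, hB, h1, h2, h3⟩
        exact ⟨h1, ⟨B, (hD B).1 hB, h2⟩, h3⟩
    rw [hset, ncard_biUnion_aux D _ (fun B hB => (c2 B hB l hl).1)
      (fun B hB B' hB' z hz hz' => Cell_unique hgen.neg ((hD B).1 hB) ((hD B').1 hB')
        hz.2.1 hz'.2.1), Finset.sum_sigma, Finset.mul_sum]
    push_cast
    refine Finset.sum_congr rfl fun B hBD => ?_
    rw [(c2 B hBD l hl).2, Finset.mul_sum]
    have hB := ((hD B).1 hBD).1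
    have hS : ∀ b ∈ B, crd U B b (∑ b ∈ B, U b) = 1 := fun b hb =>
      crd_eq hB (c := fun _ => 1) (by simp) hb
    have hSΛ : ∑ b ∈ B, U b ∈ Λ := Λ.sum_mem fun b _ => hUΛ b
    refine Finset.sum_bij' (fun p _ => ∑ b ∈ B, U b - p) (fun p _ => ∑ b ∈ B, U b - p)
      ?_ ?_ ?_ ?_ ?_
    · intro p hp
      rw [hbx _ B hB] at hp ⊢
      refine ⟨Λ.sub_mem hSΛ hp.1, fun b hb => ?_⟩
      rw [map_sub, hS b hb]
      exact (hp.2 b hb).compl (by have := hκ B hB b hb; tauto)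
    · intro p hp
      rw [hbx _ B hB] at hp ⊢
      refine ⟨Λ.sub_mem hSΛ hp.1, fun b hb => ?_⟩
      rw [map_sub, hS b hb]
      exact (hp.2 b hb).compl (hκ B hB b hb)
    · intro p hp; simp
    · intro p hp; simp
    · intro p hp
      have e : Module.finrank ℝ E - Fintype.card τ = ∑ i, (k B i - 1) := by
        have := hcard' B hB; omega
      rw [e, ← Finset.prod_pow_eq_pow_sum, ← Finset.prod_mul_distrib]
      refine Finset.prod_congr rfl fun i _ => ?_
      rw [qp_neg _ (hk B hB i), ← mul_assoc, ← mul_pow]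
      have : (k B i : ℝ) - hh i (∑ b ∈ B, U b - p) = hh i p := by
        rw [map_sub, ht_eq hB hhU i (∑ b ∈ B, U b), Finset.sum_congr rfl
          (fun b hb => hS b (Finset.mem_filter.1 hb).1)]
        simp [k]
      rw [this]
      simp [k]

end thm
end MVP
namespace MVP
open Filter Topology

section cayley
open Polynomial
variable {τ : Type} [Fintype τ] [DecidableEq τ] {n : ℕ}

/-- Generators of the Cayley cone. -/
noncomputable def UU (V : τ → Finset (Fin n → ℝ)) (u : Σ i, V i) : (τ → ℝ) × (Fin n → ℝ) :=
  (Pi.single u.1 1, (u.2 : Fin n → ℝ))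

/-- The integer lattice. -/
def LL (τ : Type) (n : ℕ) : AddSubgroup ((τ → ℝ) × (Fin n → ℝ)) where
  carrier := {z | (∀ i, ∃ m : ℤ, z.1 i = m) ∧ IsLatticePt z.2}
  zero_mem' := ⟨fun i => ⟨0, by simp⟩, fun i => ⟨0, by simp⟩⟩
  add_mem' := by
    rintro a b ⟨h1, h2⟩ ⟨h3, h4⟩
    refine ⟨fun i => ?_, fun i => ?_⟩
    · obtain ⟨m, hm⟩ := h1 i
      obtain ⟨k, hk⟩ := h3 i
      exact ⟨m + k, by simp [hm, hk]⟩
    · obtain ⟨m, hm⟩ := h2 i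
      obtain ⟨k, hk⟩ := h4 i
      exact ⟨m + k, by simp [hm, hk]⟩
  neg_mem' := by
    rintro a ⟨h1, h2⟩
    refine ⟨fun i => ?_, fun i => ?_⟩
    · obtain ⟨m, hm⟩ := h1 i
      exact ⟨-m, by simp [hm]⟩
    · obtain ⟨m, hm⟩ := h2 i
      exact ⟨-m, by simp [hm]⟩

lemma LL_finite (R : ℝ) : {z | z ∈ LL τ n ∧ ‖z‖ ≤ R}.Finite := by
  let f : (τ → ℤ) × (Fin n → ℤ) → (τ → ℝ) × (Fin n → ℝ) :=
    fun w => (fun i => w.1 i, fun i => w.2 i)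
  let N : (τ → ℤ) × (Fin n → ℤ) := (fun _ => ⌈R⌉, fun _ => ⌈R⌉)
  have hfinN : (Set.Icc (-N) N).Finite := by
    rw [Set.Icc_prod_eq]
    exact (Set.finite_Icc _ _).prod (Set.finite_Icc _ _)
  refine (hfinN.image f).subset ?_
  rintro z ⟨⟨h1, h2⟩, hz⟩
  choose w1 hw1 using h1
  choose w2 hw2 using h2
  have b1 : ∀ i, |(w1 i : ℝ)| ≤ R := fun i => by
    rw [← hw1, ← Real.norm_eq_abs]
    exact (norm_le_pi_norm z.1 i).trans ((norm_fst_le z).trans hz)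
  have b2 : ∀ i, |(w2 i : ℝ)| ≤ R := fun i => by
    rw [← hw2, ← Real.norm_eq_abs]
    exact (norm_le_pi_norm z.2 i).trans ((norm_snd_le z).trans hz)
  have key : ∀ w : ℤ, |(w : ℝ)| ≤ R → -⌈R⌉ ≤ w ∧ w ≤ ⌈R⌉ := fun w hw => by
    rw [abs_le] at hw
    have := Int.le_ceil R
    constructor
    · have : (-(⌈R⌉ : ℤ) : ℝ) ≤ w := by linarith
      exact_mod_cast this
    · have : (w : ℝ) ≤ ⌈R⌉ := by linarith
      exact_mod_cast this
  refine ⟨(w1, w2), ⟨⟨fun i => ?_, fun i => ?_⟩, ⟨fun i => ?_, fun i => ?_⟩⟩, ?_⟩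
  · exact (key _ (b1 i)).1
  · exact (key _ (b2 i)).1
  · exact (key _ (b1 i)).2
  · exact (key _ (b2 i)).2
  · ext i
    · simp [f, hw1]
    · simp [f, hw2]

lemma UU_span (V : τ → Finset (Fin n → ℝ)) (hne : ∀ i, (V i).Nonempty) (i0 : τ)
    (hfull : (interior (convexHull ℝ (V i0 : Set (Fin n → ℝ)))).Nonempty) :
    Submodule.span ℝ (Set.range (UU V)) = ⊤ := by
  have hU : ∀ i (v : V i), UU V ⟨i, v⟩ ∈ Submodule.span ℝ (Set.range (UU V)) := fun i v =>
    Submodule.subset_span ⟨_, rfl⟩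
  have h0 : ∀ x : Fin n → ℝ, ((0, x) : (τ → ℝ) × (Fin n → ℝ)) ∈
      Submodule.span ℝ (Set.range (UU V)) := by
    intro x
    have h1 := AffineSubspace.vectorSpan_eq_top_of_affineSpan_eq_top ℝ _ _
      (interior_convexHull_nonempty_iff_affineSpan_eq_top.1 hfull)
    have hx : x ∈ vectorSpan ℝ (V i0 : Set (Fin n → ℝ)) := by rw [h1]; trivial
    rw [vectorSpan_def] at hx
    have : Submodule.span ℝ ((V i0 : Set (Fin n → ℝ)) -ᵥ (V i0 : Set (Fin n → ℝ))) ≤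
        (Submodule.span ℝ (Set.range (UU V))).comap (LinearMap.inr ℝ (τ → ℝ) (Fin n → ℝ)) := by
      rw [Submodule.span_le]
      rintro _ ⟨v, hv, v', hv', rfl⟩
      have := Submodule.sub_mem _ (hU i0 ⟨v, hv⟩) (hU i0 ⟨v', hv'⟩)
      simpa [UU] using this
    exact this hx
  rw [eq_top_iff]
  rintro z -
  choose v hv using hne
  have h1 : ∑ i, z.1 i • UU V ⟨i, ⟨v i, hv i⟩⟩ ∈ Submodule.span ℝ (Set.range (UU V)) :=
    Submodule.sum_mem _ fun i _ => Submodule.smul_mem _ _ (hU i _)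
  have h2 := Submodule.add_mem _ h1 (h0 (z.2 - ∑ i, z.1 i • v i))
  convert h2 using 1
  ext i
  · simp [UU, Prod.fst_sum, Finset.sum_apply, Pi.single_apply]
  · simp [UU, Prod.snd_sum, Finset.sum_apply]

theorem cayley_ehrhart (V : τ → Finset (Fin n → ℝ)) (hne : ∀ i, (V i).Nonempty)
    (hlat : ∀ i, ∀ v ∈ V i, IsLatticePt v) (i0 : τ)
    (hfull : (interior (convexHull ℝ (V i0 : Set (Fin n → ℝ)))).Nonempty) :
    ∃ a : (Σ i, V i) → ℝ, (∀ u, 0 < a u) ∧ ∃ (κ : Type) (J : Finset κ) (q : κ → τ → ℝ[X]),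
      (∀ j ∈ J, ∑ i, (q j i).natDegree ≤ n) ∧
      (∀ l : τ → ℕ, (Set.ncard {x : Fin n → ℝ | IsLatticePt x ∧
        Cn (UU V) ((fun i => (l i : ℝ)), x)} : ℝ) = ∑ j ∈ J, ∏ i, (q j i).eval (l i : ℝ)) ∧
      (∀ l : τ → ℕ, (∀ i, 1 ≤ l i) → (Set.ncard {x : Fin n → ℝ | IsLatticePt x ∧
        ∃ t : ℝ, 0 < t ∧ Cn (UU V) (((fun i => (l i : ℝ)), x) - t • ∑ u, a u • UU V u)} : ℝ) =
          (-1) ^ n * ∑ j ∈ J, ∏ i, (q j i).eval (-(l i : ℝ))) := by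
  classical
  have hfr : Module.finrank ℝ ((τ → ℝ) × (Fin n → ℝ)) = Fintype.card τ + n := by simp
  obtain ⟨a, ha, J, q, hdeg, hcl, hop⟩ := multi_ehrhart (U := UU V) (UU_span V hne i0 hfull)
    (typ := Sigma.fst) (hh := fun i => (LinearMap.proj i).comp (LinearMap.fst ℝ _ _))
    (fun i u => by simp [UU, Pi.single_apply, eq_comm]) (LL τ n)
    (fun u => ⟨fun i => ⟨if u.1 = i then 1 else 0, by
      by_cases h : u.1 = i <;> simp [UU, h]⟩, hlat _ _ u.2.2⟩)
    (fun i z hz => hz.1 i) (fun i => ⟨⟨i, ⟨_, (hne i).choose_spec⟩⟩, rfl⟩)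
    (fun B hB => by
      refine (LL_finite (∑ u, ‖UU V u‖)).subset ?_
      rintro z ⟨hz, hb⟩
      refine ⟨hz, ?_⟩
      calc ‖z‖ = ‖∑ b ∈ B, crd (UU V) B b z • UU V b‖ := by rw [crd_sum hB z]
        _ ≤ ∑ b ∈ B, ‖crd (UU V) B b z • UU V b‖ := norm_sum_le _ _
        _ ≤ ∑ b ∈ B, ‖UU V b‖ := by
          refine Finset.sum_le_sum fun b hbB => ?_
          rw [norm_smul, Real.norm_eq_abs, abs_of_nonneg (hb b hbB).1]
          exact mul_le_of_le_one_left (norm_nonneg _) (hb b hbB).2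
        _ ≤ ∑ u, ‖UU V u‖ := Finset.sum_le_sum_of_subset_of_nonneg (Finset.subset_univ _)
          fun _ _ _ => norm_nonneg _)
  have himg : ∀ (l : τ → ℕ) (Q : (τ → ℝ) × (Fin n → ℝ) → Prop),
      Set.ncard {x : Fin n → ℝ | IsLatticePt x ∧ Q ((fun i => (l i : ℝ)), x)} =
      Set.ncard {z | z ∈ LL τ n ∧ Q z ∧
        ∀ i, ((LinearMap.proj i).comp (LinearMap.fst ℝ (τ → ℝ) (Fin n → ℝ)) : _ →ₗ[ℝ] ℝ) z
          = l i} := by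
    intro l Q
    rw [← Set.ncard_image_of_injective _ (Prod.mk_right_injective (fun i => (l i : ℝ)))]
    congr 1
    ext ⟨y, x⟩
    constructor
    · rintro ⟨x', ⟨h1, h2⟩, h⟩
      obtain ⟨rfl, rfl⟩ := Prod.mk.inj h
      exact ⟨⟨fun i => ⟨l i, by simp⟩, h1⟩, h2, fun i => rfl⟩
    · rintro ⟨h1, h2, h3⟩
      have : y = fun i => (l i : ℝ) := funext h3
      subst this
      exact ⟨x, ⟨h1.2, h2⟩, rfl⟩
  refine ⟨a, ha, _, J, q, fun j hj => ?_, fun l => ?_, fun l hl => ?_⟩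
  · have := hdeg j hj; omega
  · rw [himg l (fun z => Cn (UU V) z), hcl l]
  · rw [himg l (fun z => ∃ t : ℝ, 0 < t ∧ Cn (UU V) (z - t • ∑ u, a u • UU V u)), hop l hl, hfr,
      Nat.add_sub_cancel_left]

end cayley
end MVP
namespace MVP
open Filter Topology

section geom
variable {τ : Type} [Fintype τ] [DecidableEq τ] {n : ℕ}

lemma Cn_single (V : τ → Finset (Fin n → ℝ)) (i : τ) {x : Fin n → ℝ}
    (hx : x ∈ convexHull ℝ (V i : Set (Fin n → ℝ))) : Cn (UU V) (Pi.single i 1, x) := by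
  have hc : Convex ℝ {y : Fin n → ℝ | Cn (UU V) (Pi.single i 1, y)} := by
    intro y hy y' hy' s s' hs hs' hss
    have := (Cn.smul hy hs).add (Cn.smul hy' hs')
    have e : s • ((Pi.single i 1, y) : (τ → ℝ) × (Fin n → ℝ)) + s' • (Pi.single i 1, y') =
        (Pi.single i 1, s • y + s' • y') := by
      rw [Prod.smul_mk, Prod.smul_mk, Prod.mk_add_mk, ← add_smul, hss, one_smul]
    rw [e] at this
    exact this
  refine convexHull_min (fun v hv => ?_) hc hx
  classical
  refine ⟨Pi.single ⟨i, ⟨v, hv⟩⟩ 1, fun u => ?_, ?_⟩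
  · by_cases h : u = ⟨i, ⟨v, hv⟩⟩
    · subst h; simp
    · simp [h]
  · rw [Finset.sum_eq_single ⟨i, ⟨v, hv⟩⟩]
    · simp [UU]
    · intro b _ hb; simp [hb]
    · simp

lemma Cn_sum {ι E σ : Type} [AddCommGroup E] [Module ℝ E] [Fintype ι] [DecidableEq ι] {U : ι → E} (I : Finset σ)
    (f : σ → E) (h : ∀ i ∈ I, Cn U (f i)) : Cn U (∑ i ∈ I, f i) :=
  Finset.sum_induction f (Cn U) (fun _ _ h h' => h.add h') ⟨0, by simp, by simp⟩ h

lemma cn_iff (V : τ → Finset (Fin n → ℝ)) (hne : ∀ i, (V i).Nonempty) (I : Finset τ) (t : ℕ)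
    (x : Fin n → ℝ) : Cn (UU V) ((fun i => ((if i ∈ I then t else 0 : ℕ) : ℝ)), x) ↔
      x ∈ (t : ℝ) • ∑ i ∈ I, convexHull ℝ (V i : Set (Fin n → ℝ)) := by
  constructor
  · rintro ⟨c, hc, h⟩
    have h1 : ∀ i, ∑ v : V i, c ⟨i, v⟩ = ((if i ∈ I then t else 0 : ℕ) : ℝ) := by
      intro i
      refine Eq.trans ?_ (congrFun (congrArg Prod.fst h) i)
      rw [Fintype.sum_sigma]
      simp [UU, Prod.fst_sum, Finset.sum_apply, Pi.single_apply]
    have h2 : x = ∑ i, ∑ v : V i, c ⟨i, v⟩ • (v : Fin n → ℝ) := by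
      have := congrArg Prod.snd h
      rw [Prod.snd_sum, Fintype.sum_sigma] at this
      exact this.symm
    have hz : ∀ i, ((if i ∈ I then t else 0 : ℕ) : ℝ) = 0 →
        ∑ v : V i, c ⟨i, v⟩ • (v : Fin n → ℝ) = 0 := by
      intro i hi
      have h3 := h1 i
      rw [hi, Finset.sum_eq_zero_iff_of_nonneg (fun v _ => hc _)] at h3
      exact Finset.sum_eq_zero fun v hv => by rw [h3 v hv, zero_smul]
    rcases Nat.eq_zero_or_pos t with rfl | ht
    · have hx : x = 0 := by
        rw [h2]; exact Finset.sum_eq_zero fun i _ => hz i (by simp)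
      have hS : (∑ i ∈ I, convexHull ℝ (V i : Set (Fin n → ℝ))).Nonempty := by
        choose v hv using hne
        exact ⟨∑ i ∈ I, v i, Set.finsetSum_mem_finsetSum _ _ _ fun i _ => subset_convexHull ℝ _ (hv i)⟩
      rw [Nat.cast_zero, Set.zero_smul_set hS, hx]; simp
    · have ht' : (0 : ℝ) < t := by exact_mod_cast ht
      refine ⟨∑ i ∈ I, ∑ v : V i, (c ⟨i, v⟩ / t) • (v : Fin n → ℝ),
        Set.finsetSum_mem_finsetSum _ _ _ fun i hi => ?_, ?_⟩
      · refine (convex_convexHull ℝ _).sum_mem (fun v _ => div_nonneg (hc _) ht'.le) ?_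
          (fun (v : V i) _ => subset_convexHull ℝ _ v.2)
        rw [← Finset.sum_div, h1 i, if_pos hi, div_self ht'.ne']
      · dsimp only
        rw [h2, ← Finset.sum_subset (Finset.subset_univ I) (fun i _ hi => hz i (by simp [hi])),
          Finset.smul_sum]
        refine Finset.sum_congr rfl fun i _ => ?_
        rw [Finset.smul_sum]
        refine Finset.sum_congr rfl fun v _ => ?_
        rw [smul_smul, mul_div_cancel₀ _ ht'.ne']
  · rintro ⟨y, hy, rfl⟩
    obtain ⟨g, hg, rfl⟩ := (Set.mem_finsetSum _ _ _).1 hy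
    have := (Cn_sum (U := UU V) I (fun i => (Pi.single i 1, g i))
      (fun i hi => Cn_single V i (hg hi))).smul (Nat.cast_nonneg (α := ℝ) t)
    convert this using 1
    ext i
    · simp [Prod.fst_sum, Finset.sum_apply, Pi.single_apply]
    · simp [Prod.snd_sum]

lemma cn_one_iff (V : Unit → Finset (Fin n → ℝ)) (hne : ∀ i, (V i).Nonempty) (x : Fin n → ℝ) :
    Cn (UU V) ((fun _ => (1 : ℝ)), x) ↔ x ∈ convexHull ℝ (V () : Set (Fin n → ℝ)) := by
  have := cn_iff V hne Finset.univ 1 x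
  simpa using this

lemma int_iff (V : Unit → Finset (Fin n → ℝ)) (hne : ∀ i, (V i).Nonempty)
    (hfull : (interior (convexHull ℝ (V () : Set (Fin n → ℝ)))).Nonempty)
    (a : (Σ i, V i) → ℝ) (ha : ∀ u, 0 < a u) (x : Fin n → ℝ) :
    (∃ t : ℝ, 0 < t ∧ Cn (UU V) (((fun _ => (1 : ℝ)), x) - t • ∑ u, a u • UU V u)) ↔
      x ∈ interior (convexHull ℝ (V () : Set (Fin n → ℝ))) := by
  have hfst : ∀ c : (Σ i, V i) → ℝ, (∑ u, c u • UU V u).1 = fun _ => ∑ u, c u := by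
    intro c
    ext i
    simp [UU, Prod.fst_sum, Finset.sum_apply]
  constructor
  · rintro ⟨t, ht, c, hc, h⟩
    obtain ⟨p, hp⟩ := hfull
    obtain ⟨d, hd, hdp⟩ := (cn_one_iff V hne p).2 (interior_subset hp)
    have hx : ∑ u, (c u + t * a u) • UU V u = ((fun _ => (1 : ℝ)), x) := by
      simp only [add_smul, mul_smul, Finset.sum_add_distrib, ← Finset.smul_sum]
      rw [h]; simp
    have hev : ∀ᶠ ε : ℝ in 𝓝[>] 0, (∀ u, 0 < c u + t * a u - ε * d u) ∧ ε < 1 := by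
      refine Filter.Eventually.and ?_ ?_
      · rw [eventually_all]
        intro u
        have hcont : Continuous fun ε : ℝ => c u + t * a u - ε * d u := by fun_prop
        have h0 : 0 < c u + t * a u - 0 * d u := by
          have := mul_pos ht (ha u); have := hc u; linarith
        exact nhdsWithin_le_nhds (hcont.continuousAt.eventually (lt_mem_nhds h0))
      · exact nhdsWithin_le_nhds (gt_mem_nhds one_pos)
    obtain ⟨ε, ⟨h1, h2⟩, h3⟩ := (hev.and self_mem_nhdsWithin).exists
    have h3 : 0 < ε := h3
    have h4 : Cn (UU V) (((fun _ => (1 : ℝ)), x) - ε • ((fun _ => (1 : ℝ)), p)) := by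
      refine ⟨fun u => c u + t * a u - ε * d u, fun u => (h1 u).le, ?_⟩
      rw [← hx, ← hdp, Finset.smul_sum, ← Finset.sum_sub_distrib]
      simp [sub_smul, mul_smul]
    have h5 : (1 - ε)⁻¹ • (x - ε • p) ∈ convexHull ℝ (V () : Set (Fin n → ℝ)) := by
      rw [← cn_one_iff V hne]
      have hne1 : 1 - ε ≠ 0 := by linarith
      convert h4.smul (t := (1 - ε)⁻¹) (by rw [inv_nonneg]; linarith) using 1
      ext i
      · simp [hne1]
      · simp
    have h6 := (convex_convexHull ℝ (V () : Set (Fin n → ℝ))).combo_interior_self_mem_interior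
      hp h5 h3 (by linarith : (0 : ℝ) ≤ 1 - ε) (by ring)
    rw [smul_inv_smul₀ (by linarith)] at h6
    simpa using h6
  · intro hx
    set A := ∑ u, a u
    set Y := ∑ u, a u • UU V u with hY
    have hcont : ContinuousAt (fun t : ℝ => (1 - t * A)⁻¹ • (x - t • Y.2)) 0 := by
      have c1 : ContinuousAt (fun t : ℝ => 1 - t * A) 0 := by fun_prop
      have c2 : ContinuousAt (fun t : ℝ => x - t • Y.2) 0 := by fun_prop
      exact (c1.inv₀ (by simp)).smul c2
    have hev : ∀ᶠ t : ℝ in 𝓝[>] 0, (1 - t * A)⁻¹ • (x - t • Y.2) ∈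
        convexHull ℝ (V () : Set (Fin n → ℝ)) ∧ 0 < 1 - t * A := by
      refine Filter.Eventually.and ?_ ?_
      · refine nhdsWithin_le_nhds (hcont.eventually ?_)
        simpa using mem_interior_iff_mem_nhds.1 hx
      · have hc2 : Continuous fun t : ℝ => 1 - t * A := by fun_prop
        exact nhdsWithin_le_nhds (hc2.continuousAt.eventually (lt_mem_nhds (by simp)))
    obtain ⟨t, ⟨h1, h2⟩, h3⟩ := (hev.and self_mem_nhdsWithin).exists
    refine ⟨t, h3, ?_⟩
    rw [← cn_one_iff V hne] at h1
    convert h1.smul h2.le using 1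
    ext i
    · simp [hY, hfst, A]
    · simp [h2.ne']

lemma interior_nonempty_of_adim {V : Finset (Fin n → ℝ)} (hne : V.Nonempty)
    (h : adim (convexHull ℝ (V : Set (Fin n → ℝ))) = n) :
    (interior (convexHull ℝ (V : Set (Fin n → ℝ)))).Nonempty := by
  rw [interior_convexHull_nonempty_iff_affineSpan_eq_top]
  rw [adim, affineSpan_convexHull] at h
  have h1 : (affineSpan ℝ (V : Set (Fin n → ℝ))).direction = ⊤ :=
    Submodule.eq_top_of_finrank_eq (by rw [h]; simp)
  rwa [AffineSubspace.direction_eq_top_iff_of_nonempty] at h1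
  exact (affineSpan_nonempty ℝ).2 hne

/-- Minkowski sums of lattice polytopes are lattice polytopes. -/
lemma sum_polytope {m : Type} (V : m → Finset (Fin n → ℝ)) (hne : ∀ i, (V i).Nonempty)
    (hlat : ∀ i, ∀ v ∈ V i, IsLatticePt v) (I : Finset m) :
    ∃ W : Finset (Fin n → ℝ), W.Nonempty ∧ (∀ v ∈ W, IsLatticePt v) ∧
      ∑ i ∈ I, convexHull ℝ (V i : Set (Fin n → ℝ)) = convexHull ℝ (W : Set (Fin n → ℝ)) := by
  classical
  induction I using Finset.induction_on with
  | empty =>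
    refine ⟨{0}, by simp, ?_, ?_⟩
    · intro v hv i
      rw [Finset.mem_singleton] at hv
      exact ⟨0, by simp [hv]⟩
    · simp [Set.singleton_zero]
  | insert i I hi ih =>
    obtain ⟨W, h1, h2, h3⟩ := ih
    refine ⟨V i + W, (hne i).add h1, ?_, ?_⟩
    · intro v hv
      obtain ⟨y, hy, w, hw, rfl⟩ := Finset.mem_add.1 hv
      intro j
      obtain ⟨m1, hm1⟩ := hlat i y hy j
      obtain ⟨m2, hm2⟩ := h2 w hw j
      exact ⟨m1 + m2, by simp [hm1, hm2]⟩
    · rw [Finset.sum_insert hi, h3, Finset.coe_add, convexHull_add]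

lemma sum_interior {m : Type} (V : m → Finset (Fin n → ℝ)) (hne : ∀ i, (V i).Nonempty)
    (hfull : ∀ i, (interior (convexHull ℝ (V i : Set (Fin n → ℝ)))).Nonempty)
    (I : Finset m) (hI : I.Nonempty) :
    (interior (∑ i ∈ I, convexHull ℝ (V i : Set (Fin n → ℝ)))).Nonempty := by
  classical
  obtain ⟨i, hi⟩ := hI
  rw [← Finset.add_sum_erase _ _ hi]
  refine Set.Nonempty.mono subset_interior_add_left ((hfull i).add ?_)
  choose v hv using hne
  exact ⟨∑ i ∈ I.erase i, v i, Set.finsetSum_mem_finsetSum _ _ _ fun i _ => subset_convexHull ℝ _ (hv i)⟩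

end geom
end MVP
namespace MVP
open Filter Topology

section final
open Polynomial
variable {n : ℕ}

lemma mem_span_iff_lattice (x : Fin n → ℝ) :
    x ∈ Submodule.span ℤ (Set.range (Pi.basisFun ℝ (Fin n))) ↔ IsLatticePt x := by
  rw [Module.Basis.mem_span_iff_repr_mem]
  simp [IsLatticePt, eq_comm]

lemma vol_lim (W : Finset (Fin n → ℝ)) :
    Tendsto (fun k : ℕ => (Set.ncard {x : Fin n → ℝ | IsLatticePt x ∧
      x ∈ (k : ℝ) • convexHull ℝ (W : Set (Fin n → ℝ))} : ℝ) / (k : ℝ) ^ n) atTop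
      (𝓝 (volume (convexHull ℝ (W : Set (Fin n → ℝ)))).toReal) := by
  have hc := Set.Finite.isCompact_convexHull ℝ W.finite_toSet
  have h := tendsto_card_div_pow_atTop_volume _ hc.isBounded hc.measurableSet
    ((convex_convexHull ℝ (W : Set (Fin n → ℝ))).addHaar_frontier volume)
  refine Tendsto.congr' ?_ h
  filter_upwards [eventually_gt_atTop 0] with k hk
  have hk' : (k : ℝ) ≠ 0 := by positivity
  rw [Fintype.card_fin, Nat.card_coe_set_eq,
    ← Set.ncard_image_of_injective _ (smul_right_injective (Fin n → ℝ) hk')]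
  congr 3
  ext x
  constructor
  · rintro ⟨y, ⟨hy, z, hz, rfl⟩, rfl⟩
    refine ⟨?_, _, hy, rfl⟩
    rw [← mem_span_iff_lattice]
    simpa [hk'] using hz
  · rintro ⟨hx, y, hy, rfl⟩
    refine ⟨y, ⟨hy, (k : ℝ) • y, ?_, by simp [hk']⟩, rfl⟩
    exact (mem_span_iff_lattice _).2 hx

lemma incl_excl (f g : Fin n → ℝ) :
    ∑ I : Finset (Fin n), (-1 : ℝ) ^ (n - I.card) * ∏ i, (if i ∈ I then f i else g i) =
      ∏ i, (f i - g i) := by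
  simp only [sub_eq_add_neg]
  rw [Fintype.prod_add]
  refine Finset.sum_congr rfl fun I _ => ?_
  rw [Finset.prod_neg, Finset.card_compl, Fintype.card_fin, ← Finset.prod_mul_prod_compl I,
    Finset.prod_congr rfl (fun i hi => if_pos hi),
    Finset.prod_congr (s₁ := Iᶜ) rfl (fun i hi => if_neg (Finset.mem_compl.1 hi))]
  ring

lemma prod_slopes (p : Fin n → ℝ[X]) (h : ∑ i, (p i).natDegree ≤ n) (s : ℝ) :
    ∏ i, ((p i).eval s - (p i).eval 0) = s ^ n * ∏ i, (p i).coeff 1 := by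
  by_cases h0 : ∃ i, (p i).natDegree = 0
  · obtain ⟨i, hi⟩ := h0
    rw [Finset.prod_eq_zero (Finset.mem_univ i), Finset.prod_eq_zero (Finset.mem_univ i), mul_zero]
    · exact Polynomial.coeff_eq_zero_of_natDegree_lt (by omega)
    · rw [Polynomial.eq_C_of_natDegree_eq_zero hi]; simp
  · push Not at h0
    have h1 : ∀ i, 1 ≤ (p i).natDegree := fun i => Nat.one_le_iff_ne_zero.2 (h0 i)
    have h2 : ∀ i, (p i).natDegree ≤ 1 := by
      intro i
      by_contra hi
      have := Finset.sum_lt_sum (s := Finset.univ) (f := fun _ : Fin n => 1)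
        (g := fun i => (p i).natDegree) (fun i _ => h1 i) ⟨i, Finset.mem_univ i, by omega⟩
      simp at this
      omega
    have h3 : ∀ i, (p i).eval s - (p i).eval 0 = s * (p i).coeff 1 := by
      intro i
      have e : ∀ r : ℝ, (p i).eval r = (p i).coeff 1 * r + (p i).coeff 0 := by
        intro r
        conv_lhs => rw [Polynomial.eq_X_add_C_of_natDegree_le_one (h2 i)]
        simp
      rw [e, e]
      ring
    simp only [h3, Finset.prod_mul_distrib]
    simp

lemma incl_excl_poly {κ : Type} (J : Finset κ) (q : κ → Fin n → ℝ[X])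
    (hdeg : ∀ j ∈ J, ∑ i, (q j i).natDegree ≤ n) (s : ℝ) :
    ∑ I : Finset (Fin n), (-1 : ℝ) ^ (n - I.card) *
      ∑ j ∈ J, ∏ i, (if i ∈ I then (q j i).eval s else (q j i).eval 0) =
      s ^ n * ∑ j ∈ J, ∏ i, (q j i).coeff 1 := by
  simp only [Finset.mul_sum]
  rw [Finset.sum_comm]
  refine Finset.sum_congr rfl fun j hj => ?_
  rw [incl_excl, prod_slopes _ (hdeg j hj)]

lemma recip (V : Fin n → Finset (Fin n → ℝ)) (hne : ∀ i, (V i).Nonempty)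
    (hlat : ∀ i, ∀ v ∈ V i, IsLatticePt v)
    (hfull : ∀ i, (interior (convexHull ℝ (V i : Set (Fin n → ℝ)))).Nonempty)
    {κ : Type} (J : Finset κ) (q : κ → Fin n → ℝ[X])
    (hcnt : ∀ (I : Finset (Fin n)) (t : ℕ), (Set.ncard {x : Fin n → ℝ | IsLatticePt x ∧
      x ∈ (t : ℝ) • ∑ i ∈ I, convexHull ℝ (V i : Set (Fin n → ℝ))} : ℝ) =
      ∑ j ∈ J, ∏ i, (if i ∈ I then (q j i).eval (t : ℝ) else (q j i).eval 0))
    (I : Finset (Fin n)) (hI : I.Nonempty) :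
    ((intLat (∑ i ∈ I, convexHull ℝ (V i : Set (Fin n → ℝ)))).ncard : ℝ) =
      (-1) ^ n * ∑ j ∈ J, ∏ i, (if i ∈ I then (q j i).eval (-1) else (q j i).eval 0) := by
  obtain ⟨W, hW1, hW2, hW3⟩ := sum_polytope V hne hlat I
  have hWint := sum_interior V hne hfull I hI
  rw [hW3] at hWint
  obtain ⟨a, ha, κ', J', q', -, hcl, hop⟩ := cayley_ehrhart (fun _ : Unit => W) (fun _ => hW1)
    (fun _ => hW2) () hWint
  let F : ℝ[X] := ∑ j ∈ J, ∏ i, (if i ∈ I then q j i else C ((q j i).eval 0))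
  let F' : ℝ[X] := ∑ j ∈ J', q' j ()
  have evF : ∀ s : ℝ, F.eval s =
      ∑ j ∈ J, ∏ i, (if i ∈ I then (q j i).eval s else (q j i).eval 0) := by
    intro s
    simp only [F, Polynomial.eval_finsetSum, Polynomial.eval_prod]
    refine Finset.sum_congr rfl fun j _ => Finset.prod_congr rfl fun i _ => ?_
    split_ifs <;> simp
  have evF' : ∀ s : ℝ, F'.eval s = ∑ j ∈ J', ∏ i : Unit, (q' j i).eval s := by
    intro s
    simp [F', Polynomial.eval_finsetSum]
  have hFF : F' = F := by
    refine Polynomial.eq_of_infinite_eval_eq _ _ ?_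
    refine (Set.infinite_range_of_injective (Nat.cast_injective (R := ℝ))).mono ?_
    rintro _ ⟨t, rfl⟩
    change F'.eval (t : ℝ) = F.eval (t : ℝ)
    rw [evF, evF', ← hcnt I t, ← hcl (fun _ => t)]
    congr 2
    ext x
    have := cn_iff (fun _ : Unit => W) (fun _ => hW1) Finset.univ t x
    simp only [Finset.univ_unique, Finset.sum_singleton] at this
    rw [hW3]
    exact and_congr Iff.rfl this
  have h1 := hop (fun _ => 1) (fun _ => le_rfl)
  rw [← evF, ← hFF, evF', hW3]
  simp only [Nat.cast_one] at h1
  rw [← h1]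
  congr 2
  ext x
  have := int_iff (fun _ : Unit => W) (fun _ => hW1) hWint a ha x
  exact and_comm.trans (and_congr Iff.rfl this.symm)

theorem main_pos (hn : 0 < n) (V : Fin n → Finset (Fin n → ℝ)) (hne : ∀ i, (V i).Nonempty)
    (hlat : ∀ i, ∀ v ∈ V i, IsLatticePt v)
    (hfull : ∀ i, (interior (convexHull ℝ (V i : Set (Fin n → ℝ)))).Nonempty) :
    mixedVol (fun i => convexHull ℝ (V i : Set (Fin n → ℝ))) =
      1 + ∑ I ∈ (Finset.univ : Finset (Fin n)).powerset.filter (·.Nonempty),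
        (-1 : ℝ) ^ (n - I.card) *
          (intLat (∑ i ∈ I, convexHull ℝ (V i : Set (Fin n → ℝ)))).ncard := by
  obtain ⟨-, -, κ, J, q, hdeg, hcl, -⟩ := cayley_ehrhart V hne hlat ⟨0, hn⟩ (hfull _)
  have hcnt : ∀ (I : Finset (Fin n)) (t : ℕ), (Set.ncard {x : Fin n → ℝ | IsLatticePt x ∧
      x ∈ (t : ℝ) • ∑ i ∈ I, convexHull ℝ (V i : Set (Fin n → ℝ))} : ℝ) =
      ∑ j ∈ J, ∏ i, (if i ∈ I then (q j i).eval (t : ℝ) else (q j i).eval 0) := by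
    intro I t
    have h := hcl (fun i => if i ∈ I then t else 0)
    simp only [cn_iff V hne] at h
    rw [h]
    refine Finset.sum_congr rfl fun j _ => Finset.prod_congr rfl fun i _ => ?_
    split_ifs <;> simp
  have hrec := recip V hne hlat hfull J q hcnt
  have h0 : ∑ j ∈ J, ∏ i, (q j i).eval 0 = 1 := by
    have h := hcnt ∅ 1
    have hs : {x : Fin n → ℝ | IsLatticePt x ∧
      x ∈ ((1 : ℕ) : ℝ) • ∑ i ∈ (∅ : Finset (Fin n)), convexHull ℝ (V i : Set (Fin n → ℝ))} =
        {0} := by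
      ext x
      simp only [Nat.cast_one, one_smul, Finset.sum_empty, Set.mem_zero, Set.mem_singleton_iff]
      constructor
      · exact fun h => h.2
      · rintro rfl
        exact ⟨fun i => ⟨0, by simp⟩, rfl⟩
    rw [hs] at h
    simpa using h.symm
  have hL : mixedVol (fun i => convexHull ℝ (V i : Set (Fin n → ℝ))) =
      ∑ j ∈ J, ∏ i, (q j i).coeff 1 := by
    have hlim : Tendsto (fun k : ℕ => ∑ I : Finset (Fin n), (-1 : ℝ) ^ (n - I.card) *
        ((Set.ncard {x : Fin n → ℝ | IsLatticePt x ∧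
          x ∈ (k : ℝ) • ∑ i ∈ I, convexHull ℝ (V i : Set (Fin n → ℝ))} : ℝ) / (k : ℝ) ^ n)) atTop
        (𝓝 (mixedVol (fun i => convexHull ℝ (V i : Set (Fin n → ℝ))))) := by
      refine tendsto_finsetSum _ fun I _ => Tendsto.const_mul _ ?_
      obtain ⟨W, -, -, hW3⟩ := sum_polytope V hne hlat I
      simp only [hW3]
      exact vol_lim W
    refine tendsto_nhds_unique hlim (Tendsto.congr' ?_ tendsto_const_nhds)
    filter_upwards [eventually_gt_atTop 0] with k hk
    have hk' : (k : ℝ) ^ n ≠ 0 := by positivity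
    simp only [hcnt, ← mul_div_assoc]
    rw [← Finset.sum_div, incl_excl_poly J q hdeg, mul_div_cancel_left₀ _ hk']
  have hR := incl_excl_poly J q hdeg (-1)
  have hsq : ((-1 : ℝ) ^ n) * (-1) ^ n = 1 := by rw [← mul_pow]; simp
  have hfil : (Finset.univ : Finset (Fin n)).powerset.filter (·.Nonempty) =
      (Finset.univ : Finset (Finset (Fin n))).erase ∅ := by
    ext I
    simp [Finset.nonempty_iff_ne_empty]
  rw [← Finset.add_sum_erase _ _ (Finset.mem_univ ∅)] at hR
  simp only [Finset.card_empty, Nat.sub_zero, Finset.notMem_empty, if_false, h0, mul_one] at hR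
  rw [hL, hfil, Finset.sum_congr (s₁ := (Finset.univ : Finset (Finset (Fin n))).erase ∅) rfl
    (g := fun I => (-1 : ℝ) ^ n * ((-1 : ℝ) ^ (n - I.card) *
      ∑ j ∈ J, ∏ i, (if i ∈ I then (q j i).eval (-1) else (q j i).eval 0)))
    (fun I hI => by
      rw [hrec I (Finset.nonempty_iff_ne_empty.2 (Finset.ne_of_mem_erase hI))]; ring),
    ← Finset.mul_sum]
  linear_combination (-(-1 : ℝ) ^ n) * hR + (1 - ∑ j ∈ J, ∏ i, (q j i).coeff 1) * hsq

end final
end MVP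

/-- interior lattice point formula for full-dimensional families. -/
theorem mixedVol_eq_one_add_alternating_sum_int_lattice_points {n : ℕ}
    (P : Fin n → Set (Fin n → ℝ)) (hP : ∀ i, IsLatticePolytope (P i))
    (hdim : ∀ i, adim (P i) = n) :
    mixedVol P =
      1 + ∑ I ∈ (Finset.univ : Finset (Fin n)).powerset.filter (·.Nonempty),
        (-1 : ℝ) ^ (n - I.card) * (intLat (∑ i ∈ I, P i)).ncard := by
  rcases Nat.eq_zero_or_pos n with rfl | hn
  · have h1 : ∀ I : Finset (Fin 0), I = ∅ := fun I => Subsingleton.elim _ _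
    have h2 : (Finset.univ : Finset (Fin 0)).powerset.filter (·.Nonempty) = ∅ := by
      ext I
      simp [h1 I]
    have h3 : volume ({0} : Set (Fin 0 → ℝ)) = 1 := by
      rw [volume_pi, Measure.pi_of_empty _ 0]
      simp
    rw [h2, mixedVol, Fintype.sum_unique, h1 default]
    simp only [← Set.singleton_zero, Finset.sum_empty, Finset.card_empty, Nat.sub_zero, pow_zero,
      one_mul, add_zero]
    exact (congrArg ENNReal.toReal h3).trans ENNReal.toReal_one
  · choose V hne hlat hPV using hP
    obtain rfl : P = fun i => convexHull ℝ (V i : Set (Fin n → ℝ)) := funext hPV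
    exact MVP.main_pos hn V hne hlat
      (fun i => MVP.interior_nonempty_of_adim (hne i) (hdim i))
end

section
/- Let P_1, ..., P_{n+1} be lattice polytopes in R^n with each dim(P_i) ≥ 1 and dim(P_1 + ... + P_{n+1}) = n. Then there exists a nonempty subset I of {1,...,n+1} such that the Minkowski sum P_I contains a lattice point in its relative interior. (Equivalently, the mixed degree of a proper family is nonnegative.) -/
open scoped Pointwise
open MeasureTheory Finset

open scoped NNReal

section helpers
variable {E : Type*} [AddCommGroup E] [Module ℝ E]

lemma rado_aux [FiniteDimensional ℝ E] {ι : Type*} [DecidableEq ι] (J : Finset ι) (N : ℕ) :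
    ∀ (A : ι → Set E), (∀ i, (A i).Finite) → (∑ i ∈ J, (A i).ncard = N) →
    (∀ K ⊆ J, K.card ≤ Module.finrank ℝ (Submodule.span ℝ (⋃ i ∈ K, A i))) →
    ∃ d : ι → E, (∀ i ∈ J, d i ∈ A i) ∧
      J.card ≤ Module.finrank ℝ (Submodule.span ℝ (d '' (J : Set ι))) := by
  induction N using Nat.strong_induction_on with
  | _ N ih =>
  intro A hfin hN hA
  by_cases h : ∀ i ∈ J, (A i).Subsingleton
  · have hne : ∀ i ∈ J, ∃ x, x ∈ A i := by
      intro i hi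
      by_contra hcon
      have he : A i = ∅ := by
        ext x; simp; exact fun hx => hcon ⟨x, hx⟩
      have := hA {i} (by simpa using hi)
      simp [he] at this
    choose! d hd using hne
    refine ⟨d, hd, (hA J subset_rfl).trans ?_⟩
    apply Submodule.finrank_mono
    apply Submodule.span_mono
    intro x hx
    simp only [Set.mem_iUnion] at hx
    obtain ⟨i, hi, hx⟩ := hx
    exact ⟨i, hi, h i hi (hd i hi) hx⟩
  · push Not at h
    obtain ⟨i, hi, hns⟩ := h
    obtain ⟨x, hx, y, hy, hxy⟩ := hns
    let B : E → ι → Set E := fun z => Function.update A i (A i \ {z})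
    have hBi : ∀ z, B z i = A i \ {z} := fun z => by simp [B]
    have hBj : ∀ z j, j ≠ i → B z j = A j := fun z j hj => by simp [B, hj]
    have hBsub : ∀ z j, B z j ⊆ A j := by
      intro z j
      by_cases hj : j = i
      · subst hj; rw [hBi]; exact Set.sdiff_subset
      · rw [hBj z j hj]
    have key : ∀ z ∈ A i, (∃ d : ι → E, (∀ i ∈ J, d i ∈ A i) ∧
      J.card ≤ Module.finrank ℝ (Submodule.span ℝ (d '' (J : Set ι)))) ∨
      ∃ K ⊆ J, i ∉ K ∧ Module.finrank ℝ (Submodule.span ℝ ((A i \ {z}) ∪ ⋃ j ∈ K, A j)) ≤ K.card := by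
      intro z hz
      by_cases hB : ∀ K ⊆ J, K.card ≤ Module.finrank ℝ (Submodule.span ℝ (⋃ j ∈ K, B z j))
      · left
        have hlt : ∑ j ∈ J, (B z j).ncard < N := by
          rw [← hN]
          apply Finset.sum_lt_sum
          · intro j _; exact Set.ncard_le_ncard (hBsub z j) (hfin j)
          · refine ⟨i, hi, ?_⟩
            rw [hBi]
            exact Set.ncard_sdiff_singleton_lt_of_mem hz (hfin i)
        obtain ⟨d, hd, hd2⟩ := ih _ hlt (B z) (fun j => (hfin j).subset (hBsub z j)) rfl hB
        exact ⟨d, fun j hj => hBsub z j (hd j hj), hd2⟩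
      · right
        push Not at hB
        obtain ⟨K, hK, hlt⟩ := hB
        have hiK : i ∈ K := by
          by_contra hiK
          have : (⋃ j ∈ K, B z j) = ⋃ j ∈ K, A j := by
            refine Set.iUnion₂_congr fun j hj => hBj z j ?_
            rintro rfl; exact hiK hj
          rw [this] at hlt
          exact absurd (hA K hK) (by omega)
        refine ⟨K.erase i, (Finset.erase_subset _ _).trans hK, by simp, ?_⟩
        have : ((A i \ {z}) ∪ ⋃ j ∈ K.erase i, A j) ⊆ ⋃ j ∈ K, B z j := by
          apply Set.union_subset
          · rw [← hBi z]; exact Set.subset_biUnion_of_mem (u := fun j => B z j) hiK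
          · refine Set.iUnion₂_subset fun j hj => ?_
            rw [← hBj z j (Finset.ne_of_mem_erase hj)]
            exact Set.subset_biUnion_of_mem (u := fun j => B z j) (Finset.mem_of_mem_erase hj)
        have h1 := Submodule.finrank_mono (R := ℝ) (Submodule.span_mono (R := ℝ) this)
        rw [Finset.card_erase_of_mem hiK]
        omega
    rcases key x hx with h | ⟨K, hK, hiK, hKr⟩
    · exact h
    rcases key y hy with h | ⟨K', hK', hiK', hKr'⟩
    · exact h
    exfalso
    set S := Submodule.span ℝ ((A i \ {x}) ∪ ⋃ j ∈ K, A j)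
    set S' := Submodule.span ℝ ((A i \ {y}) ∪ ⋃ j ∈ K', A j)
    have h1 := Submodule.finrank_sup_add_finrank_inf_eq S S'
    have h2 := hA (insert i (K ∪ K')) (by
      intro j hj; simp at hj
      rcases hj with rfl | hj | hj
      exacts [hi, hK hj, hK' hj])
    have h3 := hA (K ∩ K') (fun j hj => hK (Finset.mem_inter.1 hj).1)
    rw [Finset.card_insert_of_notMem (by simp [hiK, hiK'])] at h2
    have h4 : Submodule.span ℝ (⋃ j ∈ insert i (K ∪ K'), A j) ≤ S ⊔ S' := by
      rw [← Submodule.span_union]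
      apply Submodule.span_mono
      intro w hw
      simp only [Set.mem_iUnion, Finset.mem_insert, Finset.mem_union] at hw
      simp only [Set.mem_union, Set.mem_iUnion, Set.mem_sdiff, Set.mem_singleton_iff]
      obtain ⟨j, hj, hw⟩ := hw
      rcases hj with rfl | hj | hj
      · by_cases hwx : w = x
        · right; left; exact ⟨hw, hwx ▸ hxy⟩
        · left; left; exact ⟨hw, hwx⟩
      · left; right; exact ⟨j, hj, hw⟩
      · right; right; exact ⟨j, hj, hw⟩
    have h5 : Submodule.span ℝ (⋃ j ∈ K ∩ K', A j) ≤ S ⊓ S' := by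
      apply le_inf <;> apply Submodule.span_mono <;> intro w hw <;>
      simp only [Set.mem_iUnion, Finset.mem_inter] at hw <;>
      simp only [Set.mem_union, Set.mem_iUnion] <;> obtain ⟨j, hj, hw⟩ := hw
      · right; exact ⟨j, hj.1, hw⟩
      · right; exact ⟨j, hj.2, hw⟩
    have h6 := Submodule.finrank_mono h4
    have h7 := Submodule.finrank_mono h5
    have h8 := Finset.card_union_add_card_inter K K'
    omega

/-- lineality space of a cone -/
def linealS (C : Submodule ℝ≥0 E) : Submodule ℝ E where
  carrier := {x | x ∈ C ∧ -x ∈ C}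
  zero_mem' := by simp
  add_mem' := by
    rintro a b ⟨h1, h2⟩ ⟨h3, h4⟩
    refine ⟨C.add_mem h1 h3, ?_⟩
    rw [neg_add]; exact C.add_mem h2 h4
  smul_mem' := by
    rintro r x ⟨h1, h2⟩
    rcases le_total 0 r with h | h
    · lift r to ℝ≥0 using h
      exact ⟨C.smul_mem r h1, by rw [← smul_neg]; exact C.smul_mem r h2⟩
    · obtain ⟨s, hs⟩ : ∃ s : ℝ≥0, r = -(s : ℝ) := ⟨(-r).toNNReal, by rw [Real.coe_toNNReal _ (by linarith)]; ring⟩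
      subst hs
      refine ⟨?_, ?_⟩
      · rw [neg_smul, ← smul_neg]; exact C.smul_mem s h2
      · rw [neg_smul, neg_neg]; exact C.smul_mem s h1

lemma mem_linealS {C : Submodule ℝ≥0 E} {x : E} : x ∈ linealS C ↔ x ∈ C ∧ -x ∈ C := Iff.rfl

lemma smul_mem_cone {C : Submodule ℝ≥0 E} {x : E} {r : ℝ} (hr : 0 ≤ r) (hx : x ∈ C) :
    r • x ∈ C := by
  lift r to ℝ≥0 using hr
  exact C.smul_mem r hx

/-- if minus the sum of a finite family in a cone is in the cone then each is in lineality -/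
lemma mem_lineal_of_sum {C : Submodule ℝ≥0 E} {κ : Type*} (s : Finset κ) (f : κ → E)
    (hf : ∀ k ∈ s, f k ∈ C) (hs : -∑ k ∈ s, f k ∈ C) : ∀ k ∈ s, f k ∈ linealS C := by
  classical
  intro k hk
  refine ⟨hf k hk, ?_⟩
  rw [← Finset.add_sum_erase s f hk] at hs
  have : -f k = -(f k + ∑ x ∈ s.erase k, f x) + ∑ x ∈ s.erase k, f x := by abel
  rw [this]
  exact C.add_mem hs (C.sum_mem fun j hj => hf j (Finset.mem_of_mem_erase hj))

def gens {ι : Type*} (V : ι → Set E) (v : ι → E) (I : Finset ι) : Set E :=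
  ⋃ i ∈ I, (fun x => x - v i) '' V i

def tcone {ι : Type*} (V : ι → Set E) (v : ι → E) (I : Finset ι) : Submodule ℝ≥0 E :=
  Submodule.span ℝ≥0 (gens V v I)

lemma main_comb {ι : Type*} [DecidableEq ι] (V : ι → Set E) (hV : ∀ i, (V i).Finite)
    (J : Finset ι) (j0 : ι) (hj0 : j0 ∈ J) (hne : ∃ z, z ∈ V j0)
    (x y : ι → E) (hx : ∀ i ∈ J.erase j0, x i ∈ V i) (hy : ∀ i ∈ J.erase j0, y i ∈ V i)
    (hspan : ∀ i ∈ J, ∀ a ∈ V i, ∀ b ∈ V i,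
      a - b ∈ Submodule.span ℝ ((fun i => x i - y i) '' (J.erase j0 : Set ι))) :
    ∃ (I : Finset ι) (v : ι → E), I.Nonempty ∧ (∀ i ∈ I, v i ∈ V i) ∧
      ∀ c ∈ tcone V v I, -c ∈ tcone V v I := by
  classical
  obtain ⟨z, hz⟩ := hne
  set d : ι → E := fun i => x i - y i with hd
  set W := Submodule.span ℝ (d '' (J.erase j0 : Set ι)) with hW
  let Inv : Finset ι → Prop := fun I => j0 ∈ I ∧ ∃ v : ι → E, (∀ i ∈ I, v i ∈ V i) ∧
    W ≤ linealS (tcone V v I) ⊔ Submodule.span ℝ (d '' ((J \ I : Finset ι) : Set ι))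
  have hinit : Inv {j0} := by
    refine ⟨by simp, fun _ => z, by simpa using hz, ?_⟩
    rw [Finset.sdiff_singleton_eq_erase]
    exact le_sup_right
  obtain ⟨I, hI, hmax⟩ := Finset.exists_max_image (J.powerset.filter Inv) Finset.card
    ⟨{j0}, by simp [hinit, hj0]⟩
  simp only [Finset.mem_filter, Finset.mem_powerset] at hI hmax
  obtain ⟨hIJ, hj0I, v, hv, hWle⟩ := hI
  refine ⟨I, v, ⟨j0, hj0I⟩, hv, ?_⟩
  set C := tcone V v I with hC
  have hgfin : (gens V v I).Finite := by
    unfold gens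
    exact Set.Finite.biUnion I.finite_toSet fun i _ => (hV i).image _
  set G := hgfin.toFinset with hG
  have hGC : ∀ g ∈ G, g ∈ C := fun g hg => Submodule.subset_span (by simpa [hG] using hg)
  have hGW : ∀ g ∈ G, g ∈ W := by
    intro g hg
    simp only [hG, Set.Finite.mem_toFinset, gens, Set.mem_iUnion] at hg
    obtain ⟨i, hi, a, ha, rfl⟩ := hg
    exact hspan i (hIJ hi) a ha _ (hv i hi)
  set c := ∑ g ∈ G, g with hc
  have hcW : -c ∈ W := W.neg_mem (W.sum_mem hGW)
  obtain ⟨l, hl, r, hr, hlr⟩ := Submodule.mem_sup.1 (hWle hcW)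
  rw [Submodule.mem_span_image_finset_iff_exists_fun] at hr
  obtain ⟨a0, har0⟩ := hr
  obtain ⟨a, har⟩ : ∃ a : ι → ℝ, ∑ j ∈ J \ I, a j • d j = r := by
    refine ⟨fun j => if h : j ∈ J \ I then a0 ⟨j, h⟩ else 0, ?_⟩
    rw [← har0, ← Finset.sum_coe_sort]
    refine Finset.sum_congr rfl fun j _ => ?_
    simp only [dif_pos j.2]
  -- new data
  set T := (J \ I).filter (fun j => a j ≠ 0) with hT
  have hTI : ∀ j ∈ T, j ∉ I := fun j hj => (Finset.mem_sdiff.1 (Finset.mem_filter.1 hj).1).2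
  have hTJ : ∀ j ∈ T, j ∈ J := fun j hj => (Finset.mem_sdiff.1 (Finset.mem_filter.1 hj).1).1
  have hTE : ∀ j ∈ T, j ∈ J.erase j0 := fun j hj => Finset.mem_erase.2
    ⟨by rintro rfl; exact hTI _ hj hj0I, hTJ j hj⟩
  have hrT : r = ∑ j ∈ T, a j • d j := by
    rw [← har, hT, Finset.sum_filter_of_ne]
    intro j _ h h0
    exact h (by simp [h0])
  set v' : ι → E := fun i => if i ∈ I then v i else if 0 < a i then y i else x i with hv'
  have hv'I : ∀ i ∈ I, v' i = v i := fun i hi => by simp [hv', hi]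
  set C' := tcone V v' (I ∪ T) with hC'
  have hgg : gens V v I ⊆ gens V v' (I ∪ T) := by
    intro g hg
    simp only [gens, Set.mem_iUnion] at hg ⊢
    obtain ⟨i, hi, h⟩ := hg
    exact ⟨i, Finset.mem_union_left _ hi, by rw [hv'I i hi]; exact h⟩
  have hCC' : C ≤ C' := Submodule.span_mono hgg
  have hTC : ∀ j ∈ T, a j • d j ∈ C' := by
    intro j hj
    have hjI := hTI j hj
    have ha0 : a j ≠ 0 := (Finset.mem_filter.1 hj).2
    rcases lt_or_gt_of_ne ha0 with h | h
    · have : a j • d j = (-a j) • (y j - v' j) := by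
        simp only [hv', hjI, if_false, not_lt.2 h.le, hd]
        module
      rw [this]
      refine smul_mem_cone (by linarith) (Submodule.subset_span ?_)
      simp only [gens, Set.mem_iUnion]
      exact ⟨j, Finset.mem_union_right _ hj, y j, hy j (hTE j hj), rfl⟩
    · have : a j • d j = (a j) • (x j - v' j) := by
        simp only [hv', hjI, if_false, h, if_true, hd]
      rw [this]
      refine smul_mem_cone h.le (Submodule.subset_span ?_)
      simp only [gens, Set.mem_iUnion]
      exact ⟨j, Finset.mem_union_right _ hj, x j, hx j (hTE j hj), rfl⟩
  have hrC' : r ∈ C' := hrT ▸ C'.sum_mem hTC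
  have hncC' : -c ∈ C' := by
    rw [← hlr]; exact C'.add_mem (hCC' hl.1) hrC'
  have hGL : ∀ g ∈ G, g ∈ linealS C' :=
    mem_lineal_of_sum G (fun g => g) (fun g hg => hCC' (hGC g hg)) hncC'
  have hTL : ∀ j ∈ T, a j • d j ∈ linealS C' := by
    refine mem_lineal_of_sum T (fun j => a j • d j) hTC ?_
    rw [← hrT]
    have : -r = c + l := by
      have : r = -c - l := by rw [← hlr]; abel
      rw [this]; abel
    rw [this]
    exact C'.add_mem (C'.sum_mem fun g hg => hCC' (hGC g hg)) (hCC' hl.1)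
  have hdL : ∀ j ∈ T, d j ∈ linealS C' := by
    intro j hj
    have ha0 : a j ≠ 0 := (Finset.mem_filter.1 hj).2
    exact (Submodule.smul_mem_iff _ ha0).1 (hTL j hj)
  have hinv' : Inv (I ∪ T) := by
    refine ⟨Finset.mem_union_left _ hj0I, v', ?_, ?_⟩
    · intro i hi
      rcases Finset.mem_union.1 hi with hi | hi
      · rw [hv'I i hi]; exact hv i hi
      · simp only [hv', hTI i hi, if_false]
        split_ifs
        · exact hy i (hTE i hi)
        · exact hx i (hTE i hi)
    · refine hWle.trans (sup_le ?_ ?_)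
      · refine le_trans ?_ le_sup_left
        intro u hu
        exact ⟨hCC' hu.1, hCC' hu.2⟩
      · rw [Submodule.span_le]
        rintro _ ⟨j, hj, rfl⟩
        by_cases hjT : j ∈ T
        · exact Submodule.mem_sup_left (hdL j hjT)
        · apply Submodule.mem_sup_right
          apply Submodule.subset_span
          refine ⟨j, ?_, rfl⟩
          have := Finset.mem_sdiff.1 (Finset.mem_coe.1 hj)
          simp [this.1, this.2, hjT]
  have hTemp : T = ∅ := by
    have h := hmax (I ∪ T) ⟨Finset.union_subset hIJ hTJ, hinv'⟩
    rw [Finset.card_union_of_disjoint (Finset.disjoint_right.2 hTI)] at h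
    exact Finset.card_eq_zero.1 (by omega)
  have hnc : -c ∈ C := by
    rw [← hlr, hrT, hTemp]; simpa using hl.1
  have hGL' : ∀ g ∈ G, g ∈ linealS C := mem_lineal_of_sum G (fun g => g) hGC hnc
  intro u hu
  have hle : C ≤ (linealS C).restrictScalars ℝ≥0 := by
    rw [hC]
    refine Submodule.span_le.2 fun g hg => ?_
    exact hGL' g (by simpa [hG] using hg)
  exact (hle hu).2

lemma mem_intrinsicInterior_of_back {E : Type*} [NormedAddCommGroup E] [NormedSpace ℝ E]
    [FiniteDimensional ℝ E] {Q : Set E} (hQ : Convex ℝ Q) {p : E} (hp : p ∈ Q)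
    (h : ∀ x ∈ Q, ∃ δ : ℝ, 0 < δ ∧ p - δ • (x - p) ∈ Q) : p ∈ intrinsicInterior ℝ Q := by
  obtain ⟨y, hy⟩ := Set.Nonempty.intrinsicInterior hQ ⟨p, hp⟩
  have hyQ := intrinsicInterior_subset hy
  obtain ⟨δ, hδ, hz⟩ := h y hyQ
  rw [mem_intrinsicInterior] at hy ⊢
  obtain ⟨y', hy', rfl⟩ := hy
  have hpA : p ∈ affineSpan ℝ Q := subset_affineSpan ℝ Q hp
  refine ⟨⟨p, hpA⟩, ?_, rfl⟩
  rw [mem_interior_iff_mem_nhds, Metric.mem_nhds_iff] at hy' ⊢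
  obtain ⟨ε, hε, hb⟩ := hy'
  have ht : 0 < 1 + δ := by linarith
  refine ⟨ε * (δ / (1 + δ)), by positivity, ?_⟩
  rintro ⟨w, hw⟩ hwb
  rw [Metric.mem_ball, Subtype.dist_eq, dist_eq_norm] at hwb
  simp only at hwb
  have hu : (y' : E) + ((1 + δ) / δ) • (w - p) ∈ affineSpan ℝ Q := by
    have := AffineSubspace.smul_vsub_vadd_mem (affineSpan ℝ Q) ((1 + δ) / δ) hw hpA y'.2
    simpa [add_comm] using this
  have huQ : (y' : E) + ((1 + δ) / δ) • (w - p) ∈ Q := by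
    have : (⟨_, hu⟩ : affineSpan ℝ Q) ∈ Metric.ball y' ε := by
      rw [Metric.mem_ball, Subtype.dist_eq, dist_eq_norm]
      simp only [add_sub_cancel_left]
      rw [norm_smul, Real.norm_of_nonneg (by positivity)]
      calc (1 + δ) / δ * ‖w - p‖ < (1 + δ) / δ * (ε * (δ / (1 + δ))) := by gcongr
        _ = ε := by field_simp
    exact hb this
  have := hQ huQ hz (a := δ / (1 + δ)) (b := 1 / (1 + δ)) (by positivity) (by positivity)
    (by field_simp; ring)
  show w ∈ Q
  convert this using 1
  have e1 : δ / (1 + δ) * ((1 + δ) / δ) = 1 := by field_simp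
  have e2 : δ / (1 + δ) = 1 / (1 + δ) * δ := by ring
  have e3 : 1 / (1 + δ) + 1 / (1 + δ) * δ = 1 := by field_simp
  rw [smul_add, smul_smul, e1, e2]
  have : (1 / (1 + δ)) • (p - δ • ((y' : E) - p)) =
    (1 / (1 + δ) + 1 / (1 + δ) * δ) • p - (1 / (1 + δ) * δ) • (y' : E) := by module
  rw [this, e3]
  module

/-- points of the tangent cone can be reached -/
lemma tcone_reach {ι : Type*} (V : ι → Set E) (v : ι → E) (I : Finset ι)
    (hv : ∀ i ∈ I, v i ∈ V i) {c : E} (hc : c ∈ tcone V v I) :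
    ∃ δ : ℝ, 0 < δ ∧ ∑ i ∈ I, v i + δ • c ∈ ∑ i ∈ I, convexHull ℝ (V i) := by
  classical
  have hQ : Convex ℝ (∑ i ∈ I, convexHull ℝ (V i)) := by
    rw [← convexHull_sum]; exact convex_convexHull ℝ _
  have hp : ∑ i ∈ I, v i ∈ ∑ i ∈ I, convexHull ℝ (V i) :=
    Set.finsetSum_mem_finsetSum _ _ _ fun i hi => subset_convexHull ℝ _ (hv i hi)
  unfold tcone at hc
  induction hc using Submodule.span_induction with
  | mem g hg =>
    simp only [gens, Set.mem_iUnion] at hg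
    obtain ⟨i, hi, a, ha, rfl⟩ := hg
    refine ⟨1, one_pos, ?_⟩
    have : ∑ k ∈ I, v k + (1 : ℝ) • (a - v i) = ∑ k ∈ I, Function.update v i a k := by
      rw [Finset.sum_update_of_mem hi, ← Finset.add_sum_erase I v hi,
        Finset.sdiff_singleton_eq_erase]
      module
    show ∑ k ∈ I, v k + (1 : ℝ) • (a - v i) ∈ _
    rw [this]
    refine Set.finsetSum_mem_finsetSum _ _ _ fun k hk => subset_convexHull ℝ _ ?_
    by_cases hki : k = i
    · subst hki; simpa using ha
    · simpa [hki] using hv k hk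
  | zero => exact ⟨1, one_pos, by simpa using hp⟩
  | add c1 c2 _ _ h1 h2 =>
    obtain ⟨s, hs, h1⟩ := h1
    obtain ⟨t, ht, h2⟩ := h2
    refine ⟨s * t / (s + t), by positivity, ?_⟩
    have := hQ h1 h2 (a := t / (s + t)) (b := s / (s + t)) (by positivity) (by positivity)
      (by field_simp; ring)
    convert this using 1
    have e : t / (s + t) + s / (s + t) = 1 := by field_simp; ring
    have : (t / (s + t)) • (∑ i ∈ I, v i + s • c1) + (s / (s + t)) • (∑ i ∈ I, v i + t • c2)
      = (t / (s + t) + s / (s + t)) • (∑ i ∈ I, v i) + (s * t / (s + t)) • (c1 + c2) := by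
      module
    rw [this, e, one_smul]
  | smul r c1 _ h1 =>
    obtain ⟨s, hs, h1⟩ := h1
    by_cases hr : r = 0
    · subst hr; exact ⟨1, one_pos, by simpa using hp⟩
    · have hr' : (0 : ℝ) < r := lt_of_le_of_ne r.2 (fun h => hr (NNReal.coe_eq_zero.1 h.symm))
      refine ⟨s / r, by positivity, ?_⟩
      convert h1 using 2
      rw [NNReal.smul_def, smul_smul]
      congr 1
      field_simp

lemma sub_mem_tcone {ι : Type*} (V : ι → Set E) (v : ι → E) (I : Finset ι)
    {x : E} (hx : x ∈ ∑ i ∈ I, convexHull ℝ (V i)) :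
    x - ∑ i ∈ I, v i ∈ tcone V v I := by
  rw [Set.mem_finsetSum] at hx
  obtain ⟨g, hg, rfl⟩ := hx
  rw [← Finset.sum_sub_distrib]
  refine Submodule.sum_mem _ fun i hi => ?_
  have hconv : Convex ℝ {y : E | y - v i ∈ tcone V v I} := by
    intro a ha b hb s t hs ht hst
    show s • a + t • b - v i ∈ tcone V v I
    have : s • a + t • b - v i = s • (a - v i) + t • (b - v i) := by
      have : v i = (s + t) • v i := by rw [hst, one_smul]
      nth_rewrite 1 [this]
      module
    rw [this]
    exact Submodule.add_mem _ (smul_mem_cone hs ha) (smul_mem_cone ht hb)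
  refine convexHull_min (fun a ha => ?_) hconv (hg hi)
  refine Submodule.subset_span ?_
  simp only [gens, Set.mem_iUnion]
  exact ⟨i, hi, a, ha, rfl⟩

end helpers

/-- nonnegativity of the mixed degree of a proper family of n+1
lattice polytopes in ℝ^n: some Minkowski subsum has a relative interior lattice point. -/
theorem exists_relint_lattice_point_of_proper {n : ℕ}
    (P : Fin (n + 1) → Set (Fin n → ℝ)) (hP : ∀ i, IsLatticePolytope (P i))
    (hdim : ∀ i, 1 ≤ adim (P i)) (hsum : adim (∑ i, P i) = n) :
    ∃ I : Finset (Fin (n + 1)), I.Nonempty ∧ (relintLat (∑ i ∈ I, P i)).Nonempty := by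
  classical
  choose F hFne hFlat hFP using hP
  let V : Fin (n + 1) → Set (Fin n → ℝ) := fun i => (F i : Set (Fin n → ℝ))
  have hVfin : ∀ i, (V i).Finite := fun i => (F i).finite_toSet
  let A : Fin (n + 1) → Set (Fin n → ℝ) := fun i => V i - V i
  have hAfin : ∀ i, (A i).Finite := fun i => (hVfin i).sub (hVfin i)
  let f : Finset (Fin (n + 1)) → ℕ := fun K =>
    Module.finrank ℝ (Submodule.span ℝ (⋃ i ∈ K, A i))
  have hex : (Finset.univ.filter fun K : Finset (Fin (n + 1)) => f K < K.card).Nonempty := by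
    refine ⟨Finset.univ, ?_⟩
    simp only [Finset.mem_filter, Finset.mem_univ, true_and]
    have := Submodule.finrank_le (Submodule.span ℝ (⋃ i ∈ (Finset.univ : Finset (Fin (n + 1))), A i))
    rw [Module.finrank_fin_fun] at this
    rw [Finset.card_univ, Fintype.card_fin]
    exact Nat.lt_succ_of_le this
  obtain ⟨J, hJ, hmin⟩ := Finset.exists_min_image _ Finset.card hex
  simp only [Finset.mem_filter, Finset.mem_univ, true_and] at hJ hmin
  obtain ⟨j0, hj0⟩ : J.Nonempty := Finset.card_pos.1 (by omega)
  have hcard : (J.erase j0).card = J.card - 1 := Finset.card_erase_of_mem hj0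
  have hpos : 0 < J.card := Finset.card_pos.2 ⟨j0, hj0⟩
  obtain ⟨d, hd, hdr⟩ := rado_aux (J.erase j0) _ A hAfin rfl (by
    intro K hK
    by_contra hlt
    have h1 := hmin K (not_le.1 hlt)
    have h2 := Finset.card_le_card hK
    omega)
  have hle : Submodule.span ℝ (d '' (J.erase j0 : Set (Fin (n + 1)))) ≤
      Submodule.span ℝ (⋃ i ∈ J, A i) := by
    apply Submodule.span_mono
    rintro _ ⟨i, hi, rfl⟩
    have hi' : i ∈ J.erase j0 := Finset.mem_coe.1 hi
    exact Set.mem_biUnion (Finset.mem_of_mem_erase hi') (hd i hi')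
  have heq := Submodule.eq_of_le_of_finrank_le hle (by
    have : f J < J.card := hJ
    change f J ≤ _
    omega)
  have hd' : ∀ i ∈ J.erase j0, ∃ x y, x ∈ V i ∧ y ∈ V i ∧ x - y = d i := by
    intro i hi
    obtain ⟨x, hx, y, hy, h⟩ := Set.mem_sub.1 (hd i hi)
    exact ⟨x, y, hx, hy, h⟩
  choose! x y hx hy hxy using hd'
  obtain ⟨I, v, hI, hv, hC⟩ := main_comb V hVfin J j0 hj0 (hFne j0) x y hx hy (by
    intro i hi a ha b hb
    have : (fun i => x i - y i) '' (J.erase j0 : Set (Fin (n + 1))) =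
        d '' (J.erase j0 : Set (Fin (n + 1))) :=
      Set.image_congr fun i hi => hxy i (Finset.mem_coe.1 hi)
    rw [this, heq]
    exact Submodule.subset_span (Set.mem_biUnion hi (Set.sub_mem_sub ha hb)))
  have hPV : ∑ i ∈ I, P i = ∑ i ∈ I, convexHull ℝ (V i) :=
    Finset.sum_congr rfl fun i _ => hFP i
  refine ⟨I, hI, ∑ i ∈ I, v i, ?_, ?_⟩
  · rw [hPV]
    apply mem_intrinsicInterior_of_back
    · rw [← convexHull_sum]; exact convex_convexHull ℝ _
    · exact Set.finsetSum_mem_finsetSum _ _ _ fun i hi => subset_convexHull ℝ _ (hv i hi)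
    · intro z hz
      obtain ⟨δ, hδ, h⟩ := tcone_reach V v I hv (hC _ (sub_mem_tcone V v I hz))
      refine ⟨δ, hδ, ?_⟩
      rwa [smul_neg, ← sub_eq_add_neg] at h
  · intro k
    have : ∀ i ∈ I, ∃ z : ℤ, v i k = (z : ℝ) := fun i hi => hFlat i (v i) (hv i hi) k
    choose! z hz using this
    refine ⟨∑ i ∈ I, z i, ?_⟩
    rw [Finset.sum_apply]
    push_cast
    exact Finset.sum_congr rfl hz
end

section
/- For lattice polytopes P_1, ..., P_m in R^n with m > n, there exists a nonempty subset I of [m] with |I| ≤ n+1 such that the Minkowski sum P_I contains a lattice point in its relative interior. (Mixed version of Carathéodory's theorem.) -/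
open scoped Pointwise
open MeasureTheory Finset

def IsPolyh {E : Type} [AddCommGroup E] [Module ℝ E] (Q C : Set E) : Prop :=
  ∃ (ι : Type) (_ : Fintype ι) (l : ι → E →ₗ[ℝ] ℝ) (b : ι → ℝ),
    Q = {x | ∀ i, b i ≤ l i x} ∧ C = {x | ∀ i, 0 ≤ l i x}

def NoConst (E : Type) [AddCommGroup E] [Module ℝ E] : Prop :=
  ∀ (K : Type) (S : Finset K) (a : K → ℝ) (Q C : K → Set E) (c : ℝ),
    (∀ k ∈ S, IsPolyh (Q k) (C k) ∧ ∃ v ∈ C k, -v ∉ C k) →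
    (∀ x, ∑ k ∈ S, a k * (Q k).indicator 1 x = c) → c = 0

theorem NoConst.of_subsingleton (E : Type) [AddCommGroup E] [Module ℝ E] [Subsingleton E] :
    NoConst E := by
  intro K S a Q C c h1 h2
  have hS : S = ∅ := by
    by_contra hne
    obtain ⟨k, hk⟩ := Finset.nonempty_iff_ne_empty.mpr hne
    obtain ⟨-, v, hv, hv'⟩ := h1 k hk
    exact hv' (by rwa [Subsingleton.elim (-v) v])
  subst hS
  simpa using (h2 0).symm

theorem IsPolyh.preimage {E F : Type} [AddCommGroup E] [Module ℝ E] [AddCommGroup F] [Module ℝ F]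
    (e : E →ₗ[ℝ] F) {Q C : Set F} (h : IsPolyh Q C) : IsPolyh (e ⁻¹' Q) (e ⁻¹' C) := by
  obtain ⟨ι, hι, l, b, rfl, rfl⟩ := h
  exact ⟨ι, hι, fun i => (l i).comp e, b, rfl, rfl⟩

theorem NoConst.of_equiv {E F : Type} [AddCommGroup E] [Module ℝ E] [AddCommGroup F] [Module ℝ F]
    (e : E ≃ₗ[ℝ] F) (h : NoConst E) : NoConst F := by
  intro K S a Q C c h1 h2
  refine h K S a (fun k => e ⁻¹' Q k) (fun k => e ⁻¹' C k) c ?_ ?_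
  · intro k hk
    obtain ⟨h3, v, hv, hv'⟩ := h1 k hk
    exact ⟨h3.preimage e.toLinearMap, e.symm v, by simpa using hv, by simpa using hv'⟩
  · intro x
    rw [← h2 (e x)]
    rfl

/-- Fourier-Motzkin elimination of one variable: the elementary existence statement. -/
theorem exists_real_iff {ι : Type} [Fintype ι] (α β : ι → ℝ) :
    (∃ t : ℝ, ∀ i, β i ≤ α i * t) ↔
      (∀ i, α i = 0 → β i ≤ 0) ∧
      (∀ i j, 0 < α i → α j < 0 → 0 ≤ α i * (- β j) + (- α j) * (- β i)) := by
  constructor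
  · rintro ⟨t, ht⟩
    refine ⟨fun i hi => by simpa [hi] using ht i, fun i j hi hj => ?_⟩
    have h1 := ht i
    have h2 := ht j
    nlinarith
  · rintro ⟨h0, h1⟩
    have key : ∃ t : ℝ, (∀ i, 0 < α i → β i / α i ≤ t) ∧ (∀ j, α j < 0 → t ≤ β j / α j) := by
      have hL : ∀ i j, 0 < α i → α j < 0 → β i / α i ≤ β j / α j := by
        intro i j hi hj
        have := h1 i j hi hj
        rw [div_le_iff₀ hi, div_mul_eq_mul_div, le_div_iff_of_neg hj]
        linarith
      classical
      by_cases hne : ∃ i, 0 < α i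
      · obtain ⟨i0, hi0⟩ := hne
        obtain ⟨i, hi, hmax⟩ := Finset.exists_max_image (univ.filter fun i => 0 < α i)
          (fun i => β i / α i) ⟨i0, by simpa using hi0⟩
        refine ⟨β i / α i, fun k hk => hmax k (by simpa using hk), fun j hj => hL i j (by simpa using hi) hj⟩
      · by_cases hne' : ∃ i, α i < 0
        · obtain ⟨i0, hi0⟩ := hne'
          obtain ⟨i, hi, hmax⟩ := Finset.exists_min_image (univ.filter fun i => α i < 0)
            (fun i => β i / α i) ⟨i0, by simpa using hi0⟩
          exact ⟨β i / α i, fun k hk => (hne ⟨k, hk⟩).elim, fun j hj => hmax j (by simpa using hj)⟩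
        · exact ⟨0, fun k hk => (hne ⟨k, hk⟩).elim, fun k hk => (hne' ⟨k, hk⟩).elim⟩
    obtain ⟨t, ht1, ht2⟩ := key
    refine ⟨t, fun i => ?_⟩
    rcases lt_trichotomy (α i) 0 with hi | hi | hi
    · have := ht2 i hi
      rw [le_div_iff_of_neg hi] at this
      linarith
    · simpa [hi] using h0 i hi
    · have := ht1 i hi
      rw [div_le_iff₀ hi] at this
      linarith

theorem IsPolyh.proj {E : Type} [AddCommGroup E] [Module ℝ E] {Q C : Set (E × ℝ)}
    (h : IsPolyh Q C) : IsPolyh {y | ∃ t, (y, t) ∈ Q} {y | ∃ t, (y, t) ∈ C} := by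
  classical
  obtain ⟨ι, hι, l, b, rfl, rfl⟩ := h
  let m : ι → E →ₗ[ℝ] ℝ := fun i => (l i).comp (LinearMap.inl ℝ E ℝ)
  let α : ι → ℝ := fun i => l i (0, 1)
  have hl : ∀ i y t, l i (y, t) = m i y + α i * t := by
    intro i y t
    have : ((y, t) : E × ℝ) = (y, 0) + t • (0, 1) := by ext <;> simp
    rw [this, map_add, map_smul]
    simp [m, α, mul_comm]
  have key : ∀ (b : ι → ℝ) (y : E), (∃ t, ∀ i, b i ≤ l i (y, t)) ↔
      ∀ p : ι ⊕ ι × ι, (Sum.elim (fun i => if α i = 0 then b i else 0)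
        (fun p => if 0 < α p.1 ∧ α p.2 < 0 then α p.1 * b p.2 + (- α p.2) * b p.1 else 0) p : ℝ) ≤
        (Sum.elim (fun i => if α i = 0 then m i else 0)
        (fun p => if 0 < α p.1 ∧ α p.2 < 0 then α p.1 • m p.2 + (- α p.2) • m p.1 else 0) p :
          E →ₗ[ℝ] ℝ) y := by
    intro b y
    have := exists_real_iff α (fun i => b i - m i y)
    simp only [hl]
    simp only [sub_le_iff_le_add'] at this
    rw [this]
    rw [Sum.forall]
    apply and_congr
    · apply forall_congr'
      intro i
      by_cases hi : α i = 0 <;> simp [hi]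
    · rw [Prod.forall]
      apply forall_congr'
      intro i
      apply forall_congr'
      intro j
      by_cases hi : 0 < α i ∧ α j < 0
      · simp only [hi, Sum.elim_inr, and_self, if_true, forall_true_left]
        simp only [LinearMap.add_apply, LinearMap.smul_apply, smul_eq_mul]
        constructor <;> intro h <;> linarith
      · simp only [Sum.elim_inr, hi, if_false]
        simp only [LinearMap.zero_apply, le_refl, iff_true]
        intro h1 h2
        exact (hi ⟨h1, h2⟩).elim
  refine ⟨ι ⊕ ι × ι, inferInstance, _, _, Set.ext fun y => key b y, Set.ext fun y => ?_⟩
  have := key (fun _ => 0) y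
  simp only [Set.mem_ofPred_eq]
  rw [this]
  apply forall_congr'
  rintro (i | ⟨i, j⟩) <;> simp

/-- one-dimensional Euler relation -/
theorem euler_line {K : Type} (S : Finset K) (a : K → ℝ) (I : K → Set ℝ) (c : ℝ)
    (hcl : ∀ k ∈ S, IsClosed (I k)) (hoc : ∀ k ∈ S, (I k).OrdConnected)
    (h : ∀ t, ∑ k ∈ S, a k * (I k).indicator 1 t = c) :
    ∑ k ∈ S, a k * ({k | ∃ s, IsGreatest (I k) s}.indicator 1 k
      - {k | ¬ BddBelow (I k)}.indicator 1 k) = -c := by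
  classical
  have h1 : ∑ k ∈ S, a k * ({k | ¬ BddBelow (I k)}.indicator 1 k) = c := by
    have : ∀ᶠ t in Filter.atBot, ∀ k ∈ S, (t ∈ I k ↔ ¬ BddBelow (I k)) := by
      rw [Filter.eventually_all_finset]
      intro k hk
      by_cases hb : BddBelow (I k)
      · obtain ⟨x, hx⟩ := hb
        filter_upwards [Filter.eventually_lt_atBot x] with t ht
        exact ⟨fun h => absurd (hx h) (not_le.mpr ht), fun h => absurd ⟨x, hx⟩ h⟩
      · rw [not_bddBelow_iff] at hb
        obtain ⟨x, hx, -⟩ := hb 0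
        filter_upwards [Filter.eventually_le_atBot x] with t ht
        obtain ⟨z, hz, hzt⟩ := hb t
        refine ⟨fun _ => ?_, fun _ => (hoc k hk).out hz hx ⟨hzt.le, ht⟩⟩
        rw [not_bddBelow_iff]; exact hb
    obtain ⟨t, ht⟩ := this.exists
    rw [← h t]
    refine Finset.sum_congr rfl fun k hk => ?_
    simp only [Set.indicator, Set.mem_ofPred_eq, ht k hk, Pi.one_apply]
  have h2 : ∀ s, ∑ k ∈ S, a k * (if IsGreatest (I k) s then 1 else 0) = 0 := by
    intro s
    have : ∀ᶠ t in nhdsWithin s (Set.Ioi s), ∀ k ∈ S,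
        (I k).indicator (1 : ℝ → ℝ) s - (I k).indicator 1 t
          = if IsGreatest (I k) s then 1 else 0 := by
      rw [Filter.eventually_all_finset]
      intro k hk
      by_cases hs : s ∈ I k
      · by_cases hg : IsGreatest (I k) s
        · filter_upwards [self_mem_nhdsWithin] with t ht
          have : t ∉ I k := fun h => absurd (hg.2 h) (not_le.mpr ht)
          simp [hs, this, hg]
        · have : ∃ x ∈ I k, s < x := by
            by_contra hcon
            push Not at hcon
            exact hg ⟨hs, fun x hx => hcon x hx⟩
          obtain ⟨x, hx, hsx⟩ := this
          filter_upwards [Ioo_mem_nhdsGT hsx] with t ht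
          have : t ∈ I k := (hoc k hk).out hs hx ⟨ht.1.le, ht.2.le⟩
          simp [hs, this, hg]
      · have hg : ¬ IsGreatest (I k) s := fun h => hs h.1
        have : ∀ᶠ t in nhdsWithin s (Set.Ioi s), t ∉ I k :=
          nhdsWithin_le_nhds ((hcl k hk).isOpen_compl.mem_nhds hs)
        filter_upwards [this] with t ht
        simp [hs, ht, hg]
    obtain ⟨t, ht⟩ := this.exists
    have h5 := (h s).trans (h t).symm
    rw [← sub_eq_zero, ← Finset.sum_sub_distrib] at h5
    refine Eq.trans (Finset.sum_congr rfl fun k hk => ?_) h5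
    rw [← ht k hk]; ring
  have h3 : ∑ k ∈ S, a k * ({k | ∃ s, IsGreatest (I k) s}.indicator 1 k) = 0 := by
    let g : K → ℝ := fun k => if hk : ∃ s, IsGreatest (I k) s then hk.choose else 0
    have h4 : ∑ s ∈ S.image g, ∑ k ∈ S, a k * (if IsGreatest (I k) s then (1 : ℝ) else 0) = 0 :=
      Finset.sum_eq_zero fun s _ => h2 s
    rw [Finset.sum_comm] at h4
    rw [← h4]
    refine Finset.sum_congr rfl fun k hk => ?_
    rw [← Finset.mul_sum]
    congr 1
    by_cases hg : ∃ s, IsGreatest (I k) s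
    · have hgk : IsGreatest (I k) (g k) := by
        simp only [g, hg, dif_pos]; exact hg.choose_spec
      rw [Finset.sum_eq_single (g k)]
      · simp [hgk, Set.indicator, hg]
      · intro s _ hs
        rw [if_neg]
        intro h; exact hs (h.unique hgk)
      · intro hn
        exact (hn (Finset.mem_image_of_mem g hk)).elim
    · rw [Finset.sum_eq_zero]
      · simp [Set.indicator, hg]
      · intro s _
        rw [if_neg]; exact fun h => hg ⟨s, h⟩
  simp only [mul_sub, Finset.sum_sub_distrib, h1, h3, zero_sub]

theorem IsPolyh.fiber {E : Type} [AddCommGroup E] [Module ℝ E] {Q C : Set (E × ℝ)}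
    (h : IsPolyh Q C) (y : E) :
    IsClosed {t : ℝ | (y, t) ∈ Q} ∧ {t : ℝ | (y, t) ∈ Q}.OrdConnected ∧
    ((∃ s, IsGreatest {t : ℝ | (y, t) ∈ Q} s) ↔
      (∃ t, (y, t) ∈ Q) ∧ ((0, 1) : E × ℝ) ∉ C) ∧
    (¬ BddBelow {t : ℝ | (y, t) ∈ Q} ↔
      (∃ t, (y, t) ∈ Q) ∧ ((0, -1) : E × ℝ) ∈ C) := by
  obtain ⟨ι, hι, l, b, rfl, rfl⟩ := h
  let m : ι → E →ₗ[ℝ] ℝ := fun i => (l i).comp (LinearMap.inl ℝ E ℝ)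
  let α : ι → ℝ := fun i => l i (0, 1)
  have hl : ∀ i y t, l i (y, t) = m i y + α i * t := by
    intro i y t
    have : ((y, t) : E × ℝ) = (y, 0) + t • (0, 1) := by ext <;> simp
    rw [this, map_add, map_smul]
    simp [m, α, mul_comm]
  simp only [Set.mem_ofPred_eq, hl, map_zero, zero_add, mul_one, mul_neg]
  have hcl : IsClosed {t : ℝ | ∀ i, b i ≤ m i y + α i * t} := by
    have : {t : ℝ | ∀ i, b i ≤ m i y + α i * t} = ⋂ i, {t | b i ≤ m i y + α i * t} := by
      ext t; simp
    rw [this]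
    exact isClosed_iInter fun i => isClosed_le (by fun_prop) (by fun_prop)
  refine ⟨hcl, ?_, ?_, ?_⟩
  · constructor
    intro s hs t ht r hr i
    have h1 := hs i
    have h2 := ht i
    rcases le_total 0 (α i) with h | h
    · nlinarith [hr.1, hr.2]
    · nlinarith [hr.1, hr.2]
  · constructor
    · rintro ⟨s, hs, hs'⟩
      refine ⟨⟨s, hs⟩, fun hα => ?_⟩
      have : s + 1 ≤ s := hs' (fun i => by have := hs i; have := hα i; nlinarith)
      linarith
    · rintro ⟨⟨t, ht⟩, hα⟩
      push Not at hα
      obtain ⟨i, hi⟩ := hα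
      have hb : BddAbove {t : ℝ | ∀ i, b i ≤ m i y + α i * t} := by
        refine ⟨(b i - m i y) / α i, fun s hs => ?_⟩
        rw [le_div_iff_of_neg hi]
        have := hs i
        linarith
      exact ⟨_, hcl.isGreatest_csSup ⟨t, ht⟩ hb⟩
  · constructor
    · intro hb
      have hne : ({t : ℝ | ∀ i, b i ≤ m i y + α i * t}).Nonempty := by
        by_contra hne
        rw [Set.not_nonempty_iff_eq_empty] at hne
        rw [hne] at hb
        exact hb bddBelow_empty
      refine ⟨hne, fun i => ?_⟩
      by_contra hi
      apply hb
      refine ⟨(b i - m i y) / α i, fun s hs => ?_⟩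
      rw [div_le_iff₀ (by linarith)]
      have := hs i
      linarith
    · rintro ⟨⟨t, ht⟩, hα⟩ ⟨x, hx⟩
      have : x ≤ min t x - 1 := hx (fun i => by
        have h1 := ht i
        have h2 := hα i
        have h3 := min_le_left t x
        nlinarith)
      have := min_le_right t x
      linarith

theorem IsPolyh.add_mem {E : Type} [AddCommGroup E] [Module ℝ E] {Q C : Set E}
    (h : IsPolyh Q C) {v w : E} (hv : v ∈ C) (hw : w ∈ C) : v + w ∈ C := by
  obtain ⟨ι, hι, l, b, rfl, rfl⟩ := h
  intro i
  rw [map_add]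
  exact add_nonneg (hv i) (hw i)

theorem IsPolyh.smul_mem {E : Type} [AddCommGroup E] [Module ℝ E] {Q C : Set E}
    (h : IsPolyh Q C) {v : E} (hv : v ∈ C) {r : ℝ} (hr : 0 ≤ r) : r • v ∈ C := by
  obtain ⟨ι, hι, l, b, rfl, rfl⟩ := h
  intro i
  rw [map_smul]
  exact mul_nonneg hr (hv i)

theorem IsPolyh.vert {E : Type} [AddCommGroup E] [Module ℝ E] {Q C : Set (E × ℝ)}
    (h : IsPolyh Q C) (hv : ∃ v ∈ C, -v ∉ C)
    (hiff : ((0, 1) : E × ℝ) ∈ C ↔ ((0, -1) : E × ℝ) ∈ C) :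
    ∃ v ∈ {y | ∃ t, (y, t) ∈ C}, -v ∉ {y | ∃ t, (y, t) ∈ C} := by
  obtain ⟨⟨y, t⟩, hv, hv'⟩ := hv
  refine ⟨y, ⟨t, hv⟩, ?_⟩
  rintro ⟨s, hs⟩
  have hsum : ((0, t + s) : E × ℝ) ∈ C := by
    have := h.add_mem hv hs
    simpa using this
  have h1 : ((0, 1) : E × ℝ) ∈ C → False := by
    intro h1
    have h2 := hiff.mp h1
    apply hv'
    rcases le_total 0 (-t - s) with h3 | h3
    · have := h.add_mem hs (h.smul_mem h1 h3)
      simpa using this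
    · have := h.add_mem hs (h.smul_mem h2 (neg_nonneg.mpr h3))
      simpa using this
  rcases lt_trichotomy (t + s) 0 with h3 | h3 | h3
  · apply h1
    apply hiff.mpr
    have := h.smul_mem hsum (r := (-(t + s))⁻¹) (inv_nonneg.mpr (by linarith))
    have e : (-(t + s))⁻¹ * (t + s) = -1 := by
      rw [inv_neg, neg_mul, inv_mul_cancel₀ h3.ne]
    rw [Prod.smul_mk, smul_zero, smul_eq_mul, e] at this
    exact this
  · have : s = -t := by linarith
    subst this
    exact hv' (by simpa using hs)
  · apply h1
    have := h.smul_mem hsum (r := (t + s)⁻¹) (inv_nonneg.mpr h3.le)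
    simpa [inv_mul_cancel₀ h3.ne'] using this

theorem NoConst.prod_real {E : Type} [AddCommGroup E] [Module ℝ E] (h : NoConst E) :
    NoConst (E × ℝ) := by
  classical
  intro K S a Q C c h1 h2
  let ε : K → ℝ := fun k => (if ((0, 1) : E × ℝ) ∉ C k then 1 else 0)
    - (if ((0, -1) : E × ℝ) ∈ C k then 1 else 0)
  have h3 : ∀ y : E, ∑ k ∈ S, (a k * ε k) * ({y | ∃ t, (y, t) ∈ Q k}).indicator 1 y = -c := by
    intro y
    rw [← euler_line S a (fun k => {t | (y, t) ∈ Q k}) c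
      (fun k hk => ((h1 k hk).1.fiber y).1) (fun k hk => ((h1 k hk).1.fiber y).2.1)
      (fun t => by rw [← h2 (y, t)]; rfl)]
    refine Finset.sum_congr rfl fun k hk => ?_
    obtain ⟨-, -, h4, h5⟩ := (h1 k hk).1.fiber y
    rw [mul_assoc]
    congr 1
    simp only [Set.indicator, Set.mem_ofPred_eq, ε, Pi.one_apply] at h4 h5 ⊢
    rw [if_congr h4 rfl rfl, if_congr h5 rfl rfl]
    by_cases hne : ∃ t, (y, t) ∈ Q k <;> simp [hne]
  have h4 : -c = 0 := by
    refine h K (S.filter fun k => ε k ≠ 0) (fun k => a k * ε k)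
      (fun k => {y | ∃ t, (y, t) ∈ Q k}) (fun k => {y | ∃ t, (y, t) ∈ C k}) (-c) ?_ ?_
    · intro k hk
      rw [Finset.mem_filter] at hk
      obtain ⟨hk, hε⟩ := hk
      refine ⟨(h1 k hk).1.proj, (h1 k hk).1.vert (h1 k hk).2 ?_⟩
      by_contra hcon
      apply hε
      by_cases ha : ((0, 1) : E × ℝ) ∈ C k <;> by_cases hb : ((0, -1) : E × ℝ) ∈ C k <;>
        simp [ε, ha, hb] at hcon ⊢
    · intro y
      rw [← h3 y]
      refine Finset.sum_filter_of_ne ?_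
      intro k _ hne h0
      simp [h0] at hne
  linarith

theorem NoConst.pi (n : ℕ) : NoConst (Fin n → ℝ) := by
  induction n with
  | zero => exact NoConst.of_subsingleton _
  | succ n ih =>
    exact NoConst.of_equiv ((LinearEquiv.prodComm ℝ (Fin n → ℝ) ℝ).trans
      (Fin.consLinearEquiv ℝ (fun _ : Fin n.succ => ℝ))) ih.prod_real

theorem NoConst.finite (E : Type) [AddCommGroup E] [Module ℝ E] [FiniteDimensional ℝ E] :
    NoConst E :=
  NoConst.of_equiv (Module.finBasis ℝ E).equivFun.symm (NoConst.pi _)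

/-- A point of a convex set all of whose supporting functionals are constant on the set lies in
the relative interior. -/
theorem mem_intrinsicInterior_of {n : ℕ} {A : Set (Fin n → ℝ)} (hA : Convex ℝ A)
    {x : Fin n → ℝ} (hx : x ∈ A)
    (h : ∀ f : Module.Dual ℝ (Fin n → ℝ), (∀ y ∈ A, f y ≤ f x) → ∀ y ∈ A, f y = f x) :
    x ∈ intrinsicInterior ℝ A := by
  have hxs : x ∈ affineSpan ℝ A := subset_affineSpan ℝ A hx
  let p : affineSpan ℝ A := ⟨x, hxs⟩
  have : Nonempty (affineSpan ℝ A) := ⟨p⟩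
  let e := AffineIsometryEquiv.vaddConst ℝ p
  let B : Set (affineSpan ℝ A) := ((↑) : affineSpan ℝ A → (Fin n → ℝ)) ⁻¹' A
  let A' : Set (affineSpan ℝ A).direction := e ⁻¹' B
  have hmem : ∀ w, w ∈ A' ↔ (w : Fin n → ℝ) + x ∈ A := fun w => Iff.rfl
  have hA' : Convex ℝ A' := by
    intro u hu v hv a b ha hb hab
    rw [hmem] at *
    have := hA hu hv ha hb hab
    convert this using 1
    have : x = (a + b) • x := by rw [hab, one_smul]
    nth_rw 1 [this]
    push_cast
    module
  have hspan : (interior A').Nonempty := by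
    obtain ⟨y, hy⟩ := Set.Nonempty.intrinsicInterior hA ⟨x, hx⟩
    obtain ⟨q, hq, rfl⟩ := hy
    refine ⟨e.symm q, ?_⟩
    have := e.toHomeomorph.preimage_interior B
    change e ⁻¹' interior B = interior A' at this
    rw [← this]
    simpa using hq
  have h0 : (0 : (affineSpan ℝ A).direction) ∈ interior A' := by
    by_contra h0
    obtain ⟨f, hf⟩ := geometric_hahn_banach_open_point hA'.interior isOpen_interior h0
    have hle : ∀ w ∈ A', f w ≤ 0 := by
      intro w hw
      have hw' : w ∈ closure (interior A') := by
        rw [hA'.closure_interior_eq_closure_of_nonempty_interior hspan]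
        exact subset_closure hw
      have : closure (interior A') ⊆ {w | f w ≤ 0} :=
        closure_minimal (fun w hw => by simpa using (hf w hw).le)
          (isClosed_le f.continuous continuous_const)
      exact this hw'
    obtain ⟨g, hg⟩ := LinearMap.exists_extend (f : (affineSpan ℝ A).direction →ₗ[ℝ] ℝ)
    have hgf : ∀ w : (affineSpan ℝ A).direction, g (w : Fin n → ℝ) = f w := fun w =>
      LinearMap.congr_fun hg w
    have key := h g ?_
    · obtain ⟨w, hw⟩ := hspan
      have h1 := hf w hw
      have h2 := key _ ((hmem w).mp (interior_subset hw))
      rw [map_add, hgf] at h2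
      simp at h1
      linarith
    · intro y hy
      have hd : y - x ∈ (affineSpan ℝ A).direction :=
        AffineSubspace.vsub_mem_direction (subset_affineSpan ℝ A hy) hxs
      have h1 := hle ⟨y - x, hd⟩ ((hmem _).mpr (by simpa using hy))
      rw [← hgf] at h1
      simp only [map_sub] at h1
      linarith
  refine ⟨p, ?_, rfl⟩
  have := e.toHomeomorph.preimage_interior B
  change e ⁻¹' interior B = interior A' at this
  rw [← this] at h0
  simpa [e] using h0

/-- Generic heights: at each point some polytope has a unique maximizer. -/
theorem exists_generic {n : ℕ} (V : Fin (n + 1) → Finset (Fin n → ℝ)) :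
    ∃ c : Fin (n + 1) → (Fin n → ℝ) → ℝ, ∀ u : Module.Dual ℝ (Fin n → ℝ),
      ∃ i, ∀ w ∈ V i, ∀ w' ∈ V i, u w + c i w = u w' + c i w' → w = w' := by
  classical
  let T := {p : ∀ i, V i × V i // ∀ i, (p i).1 ≠ (p i).2}
  have hdep : ∀ p : T, ∃ g : Fin (n + 1) → ℝ,
      ∑ i, g i • (((p.1 i).1 : Fin n → ℝ) - (p.1 i).2) = 0 ∧ ∃ i, g i ≠ 0 := by
    intro p
    have : ¬ LinearIndependent ℝ (fun i => (((p.1 i).1 : Fin n → ℝ) - (p.1 i).2)) := by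
      intro hli
      have := hli.fintype_card_le_finrank
      simp at this
    exact Fintype.not_linearIndependent_iff.mp this
  choose g hg hg' using hdep
  let φ : T → (Fin (n + 1) → (Fin n → ℝ) → ℝ) →ₗ[ℝ] ℝ := fun p =>
    ∑ i, g p i • (((LinearMap.proj (φ := fun _ : Fin n → ℝ => ℝ) (R := ℝ) ((p.1 i).1 : Fin n → ℝ))
      - LinearMap.proj (φ := fun _ : Fin n → ℝ => ℝ) (R := ℝ) ((p.1 i).2 : Fin n → ℝ)).comp
      (LinearMap.proj (φ := fun _ : Fin (n + 1) => (Fin n → ℝ) → ℝ) (R := ℝ) i))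
  have hφ : ∀ p c, φ p c = ∑ i, g p i * (c i (p.1 i).1 - c i (p.1 i).2) := by
    intro p c
    simp [φ]
  have hex : ∃ c, ∀ p, φ p c ≠ 0 := by
    by_contra hcon
    push Not at hcon
    have hcov : ⋃ p, ((LinearMap.ker (φ p) : Submodule ℝ _) : Set (Fin (n + 1) → (Fin n → ℝ) → ℝ))
        = Set.univ := by
      rw [Set.eq_univ_iff_forall]
      intro c
      obtain ⟨p, hp⟩ := hcon c
      exact Set.mem_iUnion.mpr ⟨p, hp⟩
    obtain ⟨p, hp⟩ := Subspace.exists_eq_top_of_iUnion_eq_univ hcov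
    obtain ⟨i, hi⟩ := hg' p
    have h1 : φ p (Pi.single i (Pi.single ((p.1 i).1 : Fin n → ℝ) 1)) = 0 := by
      have : (Pi.single i (Pi.single ((p.1 i).1 : Fin n → ℝ) 1)) ∈ LinearMap.ker (φ p) := by
        rw [hp]; trivial
      exact this
    rw [hφ, Finset.sum_eq_single i] at h1
    · have hne : ((p.1 i).2 : Fin n → ℝ) ≠ (p.1 i).1 := fun h => p.2 i (Subtype.ext h.symm)
      simp [hne, hi] at h1
    · intro j _ hj
      simp [hj]
    · simp
  obtain ⟨c, hc⟩ := hex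
  refine ⟨c, fun u => ?_⟩
  by_contra hcon
  push Not at hcon
  choose w hw w' hw' he hne using hcon
  let p : T := ⟨fun i => (⟨w i, hw i⟩, ⟨w' i, hw' i⟩), fun i h => hne i (congrArg Subtype.val h)⟩
  apply hc p
  rw [hφ]
  have h1 := congrArg u (hg p)
  simp only [map_sum, map_smul, map_sub, map_zero, smul_eq_mul] at h1
  rw [← neg_eq_zero, ← Finset.sum_neg_distrib]
  rw [← h1]
  refine Finset.sum_congr rfl fun i _ => ?_
  have := he i
  change -(g p i * (c i (w i) - c i (w' i))) = g p i * (u (w i) - u (w' i))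
  rw [← mul_neg]
  congr 1
  linarith

/-- The vertex selection: some partial choice of points has a normal cone that is a subspace. -/
theorem exists_selection {n : ℕ} (V : Fin (n + 1) → Finset (Fin n → ℝ))
    (hV : ∀ i, (V i).Nonempty) :
    ∃ s : ∀ i, Option (V i), (∃ i, s i ≠ none) ∧
      ∀ u : Module.Dual ℝ (Fin n → ℝ),
        (∀ i, ∀ w, s i = some w → ∀ w' ∈ V i, u w' ≤ u w) →
        (∀ i, ∀ w, s i = some w → ∀ w' ∈ V i, u w ≤ u w') := by
  classical
  obtain ⟨c, hc⟩ := exists_generic V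
  by_contra hcon
  push Not at hcon
  let K := ∀ i, Option (V i)
  let R : ∀ i, V i → Set (Module.Dual ℝ (Fin n → ℝ)) := fun i w =>
    {u | ∀ w' ∈ V i, u w' + c i w' ≤ u w + c i w}
  let Q : K → Set (Module.Dual ℝ (Fin n → ℝ)) := fun s =>
    {u | ∀ i, ∀ w, s i = some w → u ∈ R i w}
  let C : K → Set (Module.Dual ℝ (Fin n → ℝ)) := fun s =>
    {u | ∀ i, ∀ w, s i = some w → ∀ w' ∈ V i, u w' ≤ u w}
  let a : K → ℝ := fun s => ∏ i, (s i).elim 1 (fun _ => -1)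
  let s0 : K := fun _ => none
  have hsum : ∀ u, ∑ s : K, a s * (Q s).indicator 1 u = 0 := by
    intro u
    have hterm : ∀ s : K, a s * (Q s).indicator 1 u =
        ∏ i, (s i).elim (1 : ℝ) (fun w => - (R i w).indicator 1 u) := by
      intro s
      by_cases hu : u ∈ Q s
      · rw [Set.indicator_of_mem hu, Pi.one_apply, mul_one]
        refine Finset.prod_congr rfl fun i _ => ?_
        cases hsi : s i with
        | none => simp
        | some w => simp [Set.indicator_of_mem (hu i w hsi)]
      · rw [Set.indicator_of_notMem hu, mul_zero]
        have : ∃ i w, s i = some w ∧ u ∉ R i w := by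
          by_contra h
          push Not at h
          exact hu h
        obtain ⟨i, w, hsi, hw⟩ := this
        refine (Finset.prod_eq_zero (Finset.mem_univ i) ?_).symm
        simp [hsi, Set.indicator_of_notMem hw]
    rw [Finset.sum_congr rfl fun s _ => hterm s]
    rw [← Fintype.prod_sum (fun i (o : Option (V i)) =>
      o.elim (1 : ℝ) (fun w => - (R i w).indicator 1 u))]
    obtain ⟨i, hi⟩ := hc u
    refine Finset.prod_eq_zero (Finset.mem_univ i) ?_
    rw [Fintype.sum_option]
    obtain ⟨w0, hw0, hmax⟩ := Finset.exists_max_image (V i) (fun w => u w + c i w) (hV i)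
    rw [Finset.sum_eq_single (⟨w0, hw0⟩ : V i)]
    · have : u ∈ R i ⟨w0, hw0⟩ := hmax
      simp [Set.indicator_of_mem this]
    · intro w _ hw
      have : u ∉ R i w := by
        intro h
        apply hw
        apply Subtype.ext
        exact hi _ w.2 _ hw0 (le_antisymm (hmax _ w.2) (h _ hw0))
      simp [Set.indicator_of_notMem this]
    · simp
  have h1 : (-1 : ℝ) = 0 := by
    refine NoConst.finite (Module.Dual ℝ (Fin n → ℝ)) K (univ.erase s0) a Q C (-1) ?_ ?_
    · intro s hs
      have hs' : ∃ i, s i ≠ none := by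
        by_contra h
        push Not at h
        exact (Finset.ne_of_mem_erase hs) (funext h)
      obtain ⟨u, hu, i, w, hsi, w', hw', hlt⟩ := hcon s hs'
      refine ⟨?_, u, hu, fun h => ?_⟩
      · refine ⟨(Σ i, {w : V i // s i = some w} × V i), inferInstance,
          fun q => Module.Dual.eval ℝ _ ((q.2.1.1 : Fin n → ℝ) - q.2.2),
          fun q => c q.1 q.2.2 - c q.1 q.2.1.1, ?_, ?_⟩
        · ext u
          constructor
          · rintro h ⟨i, ⟨w, hw⟩, w'⟩
            have := h i w hw w' w'.2
            simp only [Module.Dual.eval_apply, u.map_sub]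
            linarith
          · intro h i w hw w' hw'
            have := h ⟨i, ⟨w, hw⟩, ⟨w', hw'⟩⟩
            simp only [Module.Dual.eval_apply, u.map_sub] at this
            linarith
        · ext u
          constructor
          · rintro h ⟨i, ⟨w, hw⟩, w'⟩
            have := h i w hw w' w'.2
            simp only [Module.Dual.eval_apply, u.map_sub]
            linarith
          · intro h i w hw w' hw'
            have := h ⟨i, ⟨w, hw⟩, ⟨w', hw'⟩⟩
            simp only [Module.Dual.eval_apply, u.map_sub] at this
            linarith
      · have := h i w hsi w' hw'
        simp only [LinearMap.neg_apply] at this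
        linarith
    · intro u
      have h2 := hsum u
      rw [← Finset.add_sum_erase _ _ (Finset.mem_univ s0)] at h2
      have h3 : a s0 * (Q s0).indicator 1 u = 1 := by
        have : u ∈ Q s0 := by
          intro i w h
          simp [s0] at h
        simp [a, s0, Set.indicator_of_mem this]
      linarith
  norm_num at h1

/-- mixed version of Carathéodory's theorem. -/
theorem exists_small_subfamily_with_relint_lattice_point {n m : ℕ}
    (P : Fin m → Set (Fin n → ℝ)) (hP : ∀ i, IsLatticePolytope (P i)) (hm : n < m) :
    ∃ I : Finset (Fin m), I.Nonempty ∧ I.card ≤ n + 1 ∧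
      (relintLat (∑ i ∈ I, P i)).Nonempty := by
  classical
  choose V hVne hVlat hVP using hP
  let e : Fin (n + 1) ↪ Fin m := (Fin.castLEEmb hm)
  obtain ⟨s, ⟨i0, hi0⟩, hs⟩ := exists_selection (fun i => V (e i)) (fun i => hVne (e i))
  let J : Finset (Fin (n + 1)) := univ.filter fun i => s i ≠ none
  have hw : ∀ i, ∃ w ∈ V (e i), i ∈ J → ∃ h : w ∈ V (e i), s i = some ⟨w, h⟩ := by
    intro i
    cases hsi : s i with
    | none =>
      obtain ⟨w, hw⟩ := hVne (e i)
      exact ⟨w, hw, fun h => by simp [J, hsi] at h⟩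
    | some w => exact ⟨w, w.2, fun _ => ⟨w.2, rfl⟩⟩
  choose w hwV hws using hw
  refine ⟨J.map e, ⟨e i0, by simpa [J] using hi0⟩, ?_, ∑ i ∈ J, w i, ?_, ?_⟩
  · rw [Finset.card_map]
    simpa using Finset.card_le_univ J
  · rw [Finset.sum_map]
    have hVsub : ∀ i, ∀ v ∈ V (e i), v ∈ P (e i) := by
      intro i v hv
      rw [hVP]
      exact subset_convexHull ℝ _ hv
    refine mem_intrinsicInterior_of ?_ ?_ ?_
    · refine convex_sum _ fun i _ => ?_
      rw [hVP]; exact convex_convexHull ℝ _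
    · exact Set.finsetSum_mem_finsetSum _ _ _ fun i _ => hVsub i _ (hwV i)
    · intro f hf
      have h1 : ∀ i ∈ J, ∀ w' ∈ V (e i), f w' ≤ f (w i) := by
        intro i hi w' hw'
        have h2 := hf (∑ j ∈ J, Function.update w i w' j)
          (Set.finsetSum_mem_finsetSum _ _ _ fun j _ => by
            by_cases hj : j = i
            · subst hj
              simpa using hVsub j _ hw'
            · simpa [hj] using hVsub j _ (hwV j))
        rw [Finset.sum_update_of_mem hi, ← Finset.add_sum_erase J w hi, map_add, map_add,
          Finset.sdiff_singleton_eq_erase] at h2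
        linarith
      have h2 := hs f (by
        intro i v hv w' hw'
        have hi : i ∈ J := by simp [J, hv]
        obtain ⟨h, h3⟩ := hws i hi
        rw [h3] at hv
        obtain rfl := Option.some.inj hv
        exact h1 i hi w' hw')
      have h3 : ∀ i ∈ J, ∀ y ∈ P (e i), f y = f (w i) := by
        intro i hi y hy
        rw [hVP] at hy
        have hsub : convexHull ℝ (V (e i) : Set (Fin n → ℝ)) ⊆ {y | f y = f (w i)} := by
          refine convexHull_min ?_ (convex_hyperplane f.isLinear _)
          intro v hv
          obtain ⟨h, h3⟩ := hws i hi
          exact le_antisymm (h1 i hi v hv) (h2 i _ h3 v hv)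
        exact hsub hy
      intro y hy
      obtain ⟨z, hz, rfl⟩ := Set.mem_finsetSum _ _ _ |>.mp hy
      rw [map_sum, map_sum]
      exact Finset.sum_congr rfl fun i hi => h3 i hi _ (hz hi)
  · intro k
    have hl : ∀ i, ∃ z : ℤ, w i k = z := fun i => hVlat _ _ (hwV i) k
    choose z hz using hl
    refine ⟨∑ i ∈ J, z i, ?_⟩
    rw [Finset.sum_apply]
    push_cast
    exact Finset.sum_congr rfl fun i _ => hz i
end

section
/- Let P_1, ..., P_n be lattice polytopes in R^n with each P_i full-dimensional. If the Minkowski sum P_1 + ... + P_n has no interior lattice point, then MV(P_1,...,P_n) = 1. -/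
open scoped Pointwise
open MeasureTheory Finset

namespace HollowMV

open Filter Topology

open scoped Classical in
/-- one-dimensional local step -/
lemma euler_local (C : Set ℝ) (hc : IsCompact C) (hv : Convex ℝ C) (t : ℝ) :
    ∀ᶠ s in 𝓝[>] t, (C.indicator (fun _ => (1:ℝ)) t - C.indicator (fun _ => (1:ℝ)) s
      = if C.Nonempty ∧ sSup C = t then 1 else 0) := by
  by_cases htC : t ∈ C
  · have hne : C.Nonempty := ⟨t, htC⟩
    have hS := hc.sSup_mem hne
    have hle : t ≤ sSup C := le_csSup hc.bddAbove htC
    rcases hle.eq_or_lt with h | h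
    · filter_upwards [self_mem_nhdsWithin] with s hs
      have hsC : s ∉ C := fun hh => by
        have := le_csSup hc.bddAbove hh
        have hs' : t < s := hs
        linarith
      simp [htC, hsC, hne, h.symm]
    · have : Set.Ioc t (sSup C) ∈ 𝓝[>] t := Ioc_mem_nhdsGT h
      filter_upwards [this] with s hs
      have hsC : s ∈ C := hv.ordConnected.out htC hS ⟨hs.1.le, hs.2⟩
      simp [htC, hsC, h.ne']
  · have : Cᶜ ∈ 𝓝 t := hc.isClosed.isOpen_compl.mem_nhds htC
    filter_upwards [mem_nhdsWithin_of_mem_nhds this] with s hs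
    have hs' : s ∉ C := hs
    have : ¬ (C.Nonempty ∧ sSup C = t) := fun h => htC (h.2 ▸ hc.sSup_mem h.1)
    simp [htC, hs', this]

open scoped Classical in
lemma euler_one {ι : Type*} (s : Finset ι) (a : ι → ℝ) (C : ι → Set ℝ)
    (hc : ∀ i, IsCompact (C i)) (hv : ∀ i, Convex ℝ (C i))
    (h : ∀ t, ∑ i ∈ s, a i * (C i).indicator (fun _ => (1:ℝ)) t = 0) :
    ∑ i ∈ s, (if (C i).Nonempty then a i else 0) = 0 := by
  classical
  have key : ∀ t, ∑ i ∈ s, a i * (if (C i).Nonempty ∧ sSup (C i) = t then (1:ℝ) else 0) = 0 := by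
    intro t
    have : ∀ᶠ r in 𝓝[>] t, ∀ i ∈ s, ((C i).indicator (fun _ => (1:ℝ)) t
        - (C i).indicator (fun _ => (1:ℝ)) r
        = if (C i).Nonempty ∧ sSup (C i) = t then 1 else 0) := by
      rw [Filter.eventually_all_finset]
      intro i _
      exact euler_local _ (hc i) (hv i) t
    obtain ⟨r, hr⟩ := this.exists
    calc _ = ∑ i ∈ s, (a i * (C i).indicator (fun _ => (1:ℝ)) t
          - a i * (C i).indicator (fun _ => (1:ℝ)) r) := by
            refine Finset.sum_congr rfl fun i hi => ?_
            rw [← hr i hi]; ring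
      _ = 0 := by rw [Finset.sum_sub_distrib, h, h, sub_zero]
  have : ∑ t ∈ s.image (fun i => sSup (C i)), ∑ i ∈ s,
      a i * (if (C i).Nonempty ∧ sSup (C i) = t then (1:ℝ) else 0) = 0 :=
    Finset.sum_eq_zero fun t _ => key t
  rw [Finset.sum_comm] at this
  refine Eq.trans (Finset.sum_congr rfl fun i hi => ?_) this

  by_cases hne : (C i).Nonempty
  · simp only [hne, true_and, if_true, mul_ite, mul_one, mul_zero]
    rw [Finset.sum_ite_eq, if_pos (Finset.mem_image_of_mem _ hi)]
  · simp [hne]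

open scoped Classical in
/-- Euler characteristic of compact convex sets is well defined. -/
lemma euler {ι : Type*} (s : Finset ι) (a : ι → ℝ) (d : ℕ) : ∀ (C : ι → Set (Fin d → ℝ))
    (_ : ∀ i, IsCompact (C i)) (_ : ∀ i, Convex ℝ (C i))
    (_ : ∀ t, ∑ i ∈ s, a i * (C i).indicator (fun _ => (1:ℝ)) t = 0),
    ∑ i ∈ s, (if (C i).Nonempty then a i else 0) = 0 := by
  classical
  induction d with
  | zero =>
    intro C _ _ h
    refine Eq.trans (Finset.sum_congr rfl fun i _ => ?_) (h 0)
    by_cases h0 : (0 : Fin 0 → ℝ) ∈ C i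
    · have : (C i).Nonempty := ⟨_, h0⟩
      rw [if_pos this, Set.indicator_of_mem h0, mul_one]
    · have : ¬ (C i).Nonempty := fun ⟨y, hy⟩ => h0 (by rwa [Subsingleton.elim 0 y])
      rw [if_neg this, Set.indicator_of_notMem h0, mul_zero]
  | succ d ih =>
    intro C hc hv h
    let π : (Fin (d+1) → ℝ) →ₗ[ℝ] (Fin d → ℝ) := LinearMap.funLeft ℝ ℝ Fin.succ
    have hπ : ∀ z, π z = Fin.tail z := fun z => rfl
    have hπc : Continuous π := π.continuous_of_finiteDimensional
    have := ih (fun i => π '' C i) (fun i => (hc i).image hπc) (fun i => (hv i).linear_image π) ?_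
    · simpa using this
    · intro y
      let S : ι → Set ℝ := fun i => {t | (Fin.cons t y : Fin (d+1) → ℝ) ∈ C i}
      have hcons : Continuous (fun t : ℝ => (Fin.cons t y : Fin (d+1) → ℝ)) := by
        refine continuous_pi fun j => ?_
        refine Fin.cases ?_ (fun j => ?_) j
        · simpa using continuous_id'
        · simpa using continuous_const
      have hSc : ∀ i, IsCompact (S i) := by
        intro i
        have hcl : IsClosed (S i) := (hc i).isClosed.preimage hcons
        have himg : IsCompact ((fun z : Fin (d+1) → ℝ => z 0) '' C i) :=
          (hc i).image (continuous_apply 0)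
        refine himg.of_isClosed_subset hcl fun t ht => ⟨_, ht, by simp⟩
      have hSv : ∀ i, Convex ℝ (S i) := by
        intro i t ht r hr p q hp hq hpq
        have := hv i ht hr hp hq hpq
        change _ ∈ C i
        convert this using 1
        ext j
        refine Fin.cases ?_ (fun j => ?_) j
        · simp
        · simp only [Fin.cons_succ, Pi.add_apply, Pi.smul_apply, smul_eq_mul]
          rw [← add_mul, hpq, one_mul]
      have := euler_one s a S hSc hSv (fun t => h (Fin.cons t y))
      refine Eq.trans (Finset.sum_congr rfl fun i _ => ?_) this
      have : y ∈ π '' C i ↔ (S i).Nonempty := by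
        constructor
        · rintro ⟨z, hz, rfl⟩
          refine ⟨z 0, ?_⟩
          change Fin.cons (z 0) (Fin.tail z) ∈ C i
          rwa [Fin.cons_self_tail]
        · rintro ⟨t, ht⟩
          exact ⟨_, ht, by rw [hπ, Fin.tail_cons]⟩
      by_cases hS : (S i).Nonempty
      · simp [hS, this.2 hS]
      · rw [Set.indicator_of_notMem (fun hh => hS (this.1 hh))]; simp [hS]

end HollowMV

namespace HollowMV

def CJ {n K : ℕ} (v : Fin K → Fin n → ℝ) (R : Set (Fin n → ℝ)) (T : ℝ) (x : Fin n → ℝ)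
    (J : Finset (Fin K)) : Set (Fin K → ℝ) :=
  {l | (∀ j, 0 ≤ l j) ∧ (∀ j ∈ J, 1 ≤ l j) ∧ ∑ j, l j = T ∧ x - ∑ j, l j • v j ∈ R}

lemma CJ_convex {n K : ℕ} (v : Fin K → Fin n → ℝ) (R : Set (Fin n → ℝ)) (hR : Convex ℝ R)
    (T : ℝ) (x : Fin n → ℝ) (J : Finset (Fin K)) : Convex ℝ (CJ v R T x J) := by
  rintro l ⟨h1, h2, h3, h4⟩ m ⟨k1, k2, k3, k4⟩ a b ha hb hab
  refine ⟨fun j => ?_, fun j hj => ?_, ?_, ?_⟩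
  · have := h1 j; have := k1 j
    simp only [Pi.add_apply, Pi.smul_apply, smul_eq_mul]; positivity
  · have h := h2 j hj; have k := k2 j hj
    simp only [Pi.add_apply, Pi.smul_apply, smul_eq_mul]
    nlinarith
  · simp only [Pi.add_apply, Pi.smul_apply, smul_eq_mul, Finset.sum_add_distrib,
      ← Finset.mul_sum, h3, k3]
    rw [← add_mul, hab, one_mul]
  · convert hR h4 k4 ha hb hab using 1
    simp only [Pi.add_apply, Pi.smul_apply, smul_eq_mul, add_smul, Finset.sum_add_distrib,
      mul_smul, ← Finset.smul_sum, smul_sub]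
    have : x = a • x + b • x := by rw [← add_smul, hab, one_smul]
    nth_rewrite 1 [this]
    abel

lemma CJ_compact {n K : ℕ} (v : Fin K → Fin n → ℝ) (R : Set (Fin n → ℝ)) (hR : IsClosed R)
    (T : ℝ) (x : Fin n → ℝ) (J : Finset (Fin K)) : IsCompact (CJ v R T x J) := by
  have hsub : CJ v R T x J ⊆ Set.Icc 0 (fun _ => T) := by
    rintro l ⟨h1, h2, h3, h4⟩
    refine ⟨h1, fun j => ?_⟩
    rw [← h3]
    exact Finset.single_le_sum (fun i _ => h1 i) (Finset.mem_univ j)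
  refine isCompact_Icc.of_isClosed_subset ?_ hsub
  unfold CJ
  simp only [Set.ofPred_and, Set.ofPred_forall]
  refine IsClosed.inter ?_ (IsClosed.inter ?_ (IsClosed.inter ?_ ?_))
  · exact isClosed_iInter fun j => isClosed_le continuous_const (continuous_apply j)
  · exact isClosed_iInter fun j => isClosed_iInter fun _ =>
      isClosed_le continuous_const (continuous_apply j)
  · exact isClosed_eq (by fun_prop) continuous_const
  · exact hR.preimage (f := fun l : Fin K → ℝ => x - ∑ j, l j • v j) (by fun_prop)

open scoped Classical in
lemma cover {n K : ℕ} (v : Fin K → Fin n → ℝ) (R : Set (Fin n → ℝ)) (hR : IsClosed R)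
    (hR' : Convex ℝ R) (T : ℝ) (x : Fin n → ℝ)
    (hno : ∀ l ∈ CJ v R T x ∅, ∃ j, 1 ≤ l j) :
    ∑ J : Finset (Fin K), (if (CJ v R T x J).Nonempty then (-1:ℝ) ^ J.card else 0) = 0 := by
  refine euler Finset.univ (fun J : Finset (Fin K) => (-1:ℝ) ^ J.card) K (CJ v R T x)
    (fun J => CJ_compact v R hR T x J) (fun J => CJ_convex v R hR' T x J) fun l => ?_
  by_cases hl : l ∈ CJ v R T x ∅
  · obtain ⟨j, hj⟩ := hno l hl
    have h1 : ∀ J : Finset (Fin K), (-1:ℝ) ^ J.card * (CJ v R T x J).indicator (fun _ => (1:ℝ)) l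
        = ∏ i ∈ J, (if 1 ≤ l i then (-1:ℝ) else 0) := by
      intro J
      by_cases hJ : ∀ i ∈ J, 1 ≤ l i
      · have : l ∈ CJ v R T x J := ⟨hl.1, hJ, hl.2.2⟩
        rw [Set.indicator_of_mem this, Finset.prod_congr rfl (fun i hi => if_pos (hJ i hi))]
        simp
      · have : l ∉ CJ v R T x J := fun h => hJ h.2.1
        rw [Set.indicator_of_notMem this, mul_zero]
        push Not at hJ
        obtain ⟨i, hi, hi'⟩ := hJ
        exact (Finset.prod_eq_zero hi (if_neg (not_le.2 hi'))).symm
    rw [Finset.sum_congr rfl (fun J _ => h1 J), ← Finset.powerset_univ, ← Finset.prod_one_add]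
    exact Finset.prod_eq_zero (Finset.mem_univ j) (by simp [hj])
  · refine Finset.sum_eq_zero fun J _ => ?_
    rw [Set.indicator_of_notMem, mul_zero]
    exact fun h => hl ⟨h.1, by simp, h.2.2⟩

lemma mem_smul_hull {n K : ℕ} (hK : 0 < K) (v : Fin K → Fin n → ℝ) (c : ℝ) (hc : 0 ≤ c)
    (y : Fin n → ℝ) :
    y ∈ c • convexHull ℝ (Set.range v) ↔
      ∃ m : Fin K → ℝ, (∀ j, 0 ≤ m j) ∧ ∑ j, m j = c ∧ ∑ j, m j • v j = y := by
  rw [convexHull_range_eq_exists_affineCombination]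
  constructor
  · rintro ⟨z, ⟨s, w, hw, hw1, rfl⟩, rfl⟩
    rw [Finset.affineCombination_eq_linear_combination _ _ _ hw1]
    classical
    refine ⟨fun j => if j ∈ s then c * w j else 0, fun j => ?_, ?_, ?_⟩
    · dsimp only; split_ifs with h
      · exact mul_nonneg hc (hw j h)
      · rfl
    · rw [Finset.sum_ite_mem, Finset.univ_inter, ← Finset.mul_sum, hw1, mul_one]
    · simp only [ite_smul, zero_smul]
      rw [Finset.sum_ite_mem, Finset.univ_inter]
      simp only [Finset.smul_sum, mul_smul]
  · rintro ⟨m, hm, hm1, rfl⟩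
    rcases hc.eq_or_lt with h | h
    · have h0 : ∀ j, m j = 0 := by
        intro j
        rw [← h] at hm1
        exact (Finset.sum_eq_zero_iff_of_nonneg (fun i _ => hm i)).1 hm1 j (Finset.mem_univ j)
      refine ⟨v ⟨0, hK⟩, ⟨{⟨0, hK⟩}, fun _ => 1, by simp, by simp, ?_⟩, ?_⟩
      · rw [Finset.affineCombination_eq_linear_combination _ _ _ (by simp)]; simp
      · simp [h0, ← h]
    · have hs : ∑ j, c⁻¹ * m j = 1 := by rw [← Finset.mul_sum, hm1, inv_mul_cancel₀ h.ne']
      refine ⟨∑ j, (c⁻¹ * m j) • v j, ⟨Finset.univ, fun j => c⁻¹ * m j, fun i _ => ?_, hs, ?_⟩, ?_⟩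
      · have := hm i; positivity
      · rw [Finset.affineCombination_eq_linear_combination _ _ _ hs]
      · simp only [Finset.smul_sum, smul_smul]
        refine Finset.sum_congr rfl fun j _ => ?_
        rw [mul_inv_cancel_left₀ h.ne']

lemma CJ_nonempty {n K : ℕ} (hK : 0 < K) (v : Fin K → Fin n → ℝ) (R : Set (Fin n → ℝ)) (T : ℝ)
    (x : Fin n → ℝ) (J : Finset (Fin K)) (c : ℝ) (hc : 0 ≤ c) (hcT : T = c + J.card) :
    (CJ v R T x J).Nonempty ↔
      x - ∑ j ∈ J, v j ∈ R + c • convexHull ℝ (Set.range v) := by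
  classical
  have e1 : ∑ j, (if j ∈ J then (1:ℝ) else 0) = J.card := by simp
  have e2 : ∑ j, (if j ∈ J then (1:ℝ) else 0) • v j = ∑ j ∈ J, v j := by
    simp only [ite_smul, one_smul, zero_smul]
    rw [Finset.sum_ite_mem, Finset.univ_inter]
  rw [Set.mem_add]
  constructor
  · rintro ⟨l, h1, h2, h3, h4⟩
    refine ⟨_, h4, ∑ j, (l j - if j ∈ J then (1:ℝ) else 0) • v j, ?_, ?_⟩
    · rw [mem_smul_hull hK v c hc]
      refine ⟨_, fun j => ?_, ?_, rfl⟩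
      · split_ifs with h
        · linarith [h2 j h]
        · linarith [h1 j]
      · rw [Finset.sum_sub_distrib, h3, e1, hcT]; ring
    · simp only [sub_smul]
      rw [Finset.sum_sub_distrib, e2]; abel
  · rintro ⟨r, hr, y, hy, hry⟩
    rw [mem_smul_hull hK v c hc] at hy
    obtain ⟨m, hm, hm1, rfl⟩ := hy
    refine ⟨fun j => m j + if j ∈ J then 1 else 0, fun j => ?_, fun j hj => ?_, ?_, ?_⟩
    · have := hm j
      dsimp only; split_ifs <;> linarith
    · have := hm j
      simp only [hj, if_true]; linarith
    · rw [Finset.sum_add_distrib, e1, hm1, hcT]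
    · simp only [add_smul]
      rw [Finset.sum_add_distrib, e2]
      convert hr using 1
      rw [eq_sub_of_add_eq hry]; abel

/-- number of lattice points -/
noncomputable def cnt {n : ℕ} (A : Set (Fin n → ℝ)) : ℝ :=
  (Set.ncard {z : Fin n → ℤ | (fun i => (z i : ℝ)) ∈ A} : ℝ)

lemma lat_finite {n : ℕ} (A : Set (Fin n → ℝ)) (hA : Bornology.IsBounded A) :
    {z : Fin n → ℤ | (fun i => (z i : ℝ)) ∈ A}.Finite := by
  obtain ⟨r, hr⟩ := hA.subset_closedBall 0
  refine (Set.finite_Icc (fun _ => -⌈r⌉ : Fin n → ℤ) (fun _ => ⌈r⌉)).subset fun z hz => ?_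
  have h1 := hr hz
  rw [mem_closedBall_zero_iff] at h1
  have h2 : ∀ i, |(z i : ℝ)| ≤ r := fun i => (norm_le_pi_norm (fun i => (z i : ℝ)) i).trans h1
  constructor
  · intro i
    have := (abs_le.1 (h2 i)).1
    have h3 := Int.le_ceil r
    have : (-⌈r⌉ : ℝ) ≤ z i := by linarith
    exact_mod_cast this
  · intro i
    have := (abs_le.1 (h2 i)).2
    have h3 := Int.le_ceil r
    have : (z i : ℝ) ≤ ⌈r⌉ := by linarith
    exact_mod_cast this

open scoped Classical in
lemma cnt_sum {n : ℕ} {ι : Type*} (s : Finset ι) (a : ι → ℝ) (A : ι → Set (Fin n → ℝ))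
    (hA : ∀ i, Bornology.IsBounded (A i))
    (h : ∀ z : Fin n → ℤ, ∑ i ∈ s, (if (fun i => (z i : ℝ)) ∈ A i then a i else 0) = 0) :
    ∑ i ∈ s, a i * cnt (A i) = 0 := by
  let F : ι → Finset (Fin n → ℤ) := fun i => (lat_finite (A i) (hA i)).toFinset
  have h1 : ∀ i ∈ s, a i * cnt (A i)
      = ∑ z ∈ s.biUnion F, (if (fun i => (z i : ℝ)) ∈ A i then a i else 0) := by
    intro i hi
    rw [← Finset.sum_filter, Finset.sum_const, nsmul_eq_mul, mul_comm]
    congr 2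
    unfold cnt
    rw [Set.ncard_eq_toFinset_card _ (lat_finite (A i) (hA i))]
    congr 2
    ext z
    simp only [Set.Finite.mem_toFinset, Set.mem_ofPred_eq, Finset.mem_filter, Finset.mem_biUnion]
    refine ⟨fun hz => ⟨⟨i, hi, by simpa [F] using hz⟩, hz⟩, fun hz => hz.2⟩
  rw [Finset.sum_congr rfl h1, Finset.sum_comm]
  exact Finset.sum_eq_zero fun z _ => h z

lemma cnt_translate {n : ℕ} (A : Set (Fin n → ℝ)) (w : Fin n → ℝ) (hw : IsLatticePt w) :
    cnt {x | x - w ∈ A} = cnt A := by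
  choose u hu using hw
  unfold cnt
  congr 1
  refine Set.ncard_congr (fun z _ => z - u) ?_ ?_ ?_
  · intro z hz
    change (fun i => ((z - u) i : ℝ)) ∈ A
    have : (fun i => (z i : ℝ)) - w ∈ A := hz
    convert this using 1
    ext i; simp [hu]
  · intro a b _ _ h
    simpa using h
  · intro b hb
    refine ⟨b + u, ?_, by simp⟩
    change (fun i => ((b + u) i : ℝ)) - w ∈ A
    have : (fun i => (b i : ℝ)) ∈ A := hb
    convert this using 1
    ext i; simp [hu]

lemma isLatticePt_sum {n : ℕ} {ι : Type*} (s : Finset ι) (f : ι → Fin n → ℝ)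
    (hf : ∀ i ∈ s, IsLatticePt (f i)) : IsLatticePt (∑ i ∈ s, f i) := by
  intro j
  have : ∀ i ∈ s, ∃ z : ℤ, f i j = z := fun i hi => hf i hi j
  choose! z hz using this
  refine ⟨∑ i ∈ s, z i, ?_⟩
  rw [Finset.sum_apply, Int.cast_sum]
  exact Finset.sum_congr rfl hz

lemma bdd_shift {n : ℕ} (A : Set (Fin n → ℝ)) (w : Fin n → ℝ) (hA : IsCompact A) :
    Bornology.IsBounded {x | x - w ∈ A} := by
  have : {x | x - w ∈ A} = (fun x => x + w) '' A := by
    ext x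
    constructor
    · intro h; exact ⟨x - w, h, by simp⟩
    · rintro ⟨y, hy, rfl⟩; simpa using hy
  rw [this]
  exact (hA.image (by fun_prop)).isBounded

lemma hull_compact {n K : ℕ} (v : Fin K → Fin n → ℝ) :
    IsCompact (convexHull ℝ (Set.range v)) :=
  (Set.finite_range v).isCompact_convexHull ℝ

lemma closed_rel {n K : ℕ} (hK : 0 < K) (v : Fin K → Fin n → ℝ) (hv : ∀ j, IsLatticePt (v j))
    (R : Set (Fin n → ℝ)) (hR : IsCompact R) (hR' : Convex ℝ R) :
    ∑ J : Finset (Fin K), (-1:ℝ) ^ J.card *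
      cnt (R + ((K - J.card : ℕ) : ℝ) • convexHull ℝ (Set.range v)) = 0 := by
  classical
  have hcard : ∀ J : Finset (Fin K), J.card ≤ K := fun J => by
    simpa using Finset.card_le_univ J
  rw [Finset.sum_congr rfl (fun J _ => by
    rw [← cnt_translate _ (∑ j ∈ J, v j) (isLatticePt_sum J v fun j _ => hv j)])]
  refine cnt_sum _ _ _ (fun J => bdd_shift _ _ (hR.add ((hull_compact v).smul _))) fun z => ?_
  have := cover v R hR.isClosed hR' (K:ℝ) (fun i => (z i : ℝ)) ?_
  · refine Eq.trans (Finset.sum_congr rfl fun J _ => ?_) this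
    refine if_congr ?_ rfl rfl
    rw [CJ_nonempty hK v R K _ J ((K - J.card : ℕ) : ℝ) (Nat.cast_nonneg _)]
    · rfl
    · rw [Nat.cast_sub (hcard J)]; ring
  · rintro l ⟨h1, _, h3, _⟩
    by_contra hcon
    push Not at hcon
    have : ∑ j, l j < ∑ j : Fin K, (1:ℝ) :=
      Finset.sum_lt_sum_of_nonempty ⟨⟨0, hK⟩, Finset.mem_univ _⟩ fun j _ => hcon j
    rw [h3] at this
    simp at this

lemma mem_interior_hull {n K : ℕ} (hK : 0 < K) (v : Fin K → Fin n → ℝ)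
    (hinter : (interior (convexHull ℝ (Set.range v))).Nonempty) (m : Fin K → ℝ)
    (hm : ∀ j, 0 < m j) (hm1 : ∑ j, m j = 1) :
    ∑ j, m j • v j ∈ interior (convexHull ℝ (Set.range v)) := by
  obtain ⟨z, hz⟩ := hinter
  have hz' := interior_subset hz
  have hone := mem_smul_hull hK v 1 zero_le_one
  simp only [one_smul] at hone
  obtain ⟨w, hw, hw1, hwz⟩ := (hone z).1 hz'
  have hw2 : ∀ j, w j ≤ 1 := fun j => by
    rw [← hw1]; exact Finset.single_le_sum (fun i _ => hw i) (Finset.mem_univ j)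
  have hne : (Finset.univ : Finset (Fin K)).Nonempty := ⟨⟨0, hK⟩, Finset.mem_univ _⟩
  obtain ⟨j0, _, hj0⟩ := Finset.exists_min_image Finset.univ m hne
  have hmle : m j0 ≤ 1 := by
    rw [← hm1]; exact Finset.single_le_sum (fun i _ => (hm i).le) (Finset.mem_univ j0)
  set e := m j0 / 2 with he
  have he0 : 0 < e := by have := hm j0; positivity
  have he1 : e < 1 := by linarith
  have he2 : ∀ j, e * w j ≤ m j := fun j => by
    have a := hj0 j (Finset.mem_univ j)
    have := hw2 j; have := hw j
    nlinarith
  have h1e : 0 < 1 - e := by linarith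
  have hy : ∑ j, ((m j - e * w j) / (1 - e)) • v j ∈ convexHull ℝ (Set.range v) := by
    refine (hone _).2 ⟨_, fun j => div_nonneg (by linarith [he2 j]) h1e.le, ?_, rfl⟩
    rw [← Finset.sum_div, Finset.sum_sub_distrib, ← Finset.mul_sum, hm1, hw1, mul_one,
      div_self h1e.ne']
  convert (convex_convexHull ℝ (Set.range v)).combo_interior_self_mem_interior hz hy he0 h1e.le
    (by ring) using 1
  rw [← hwz, Finset.smul_sum, Finset.smul_sum, ← Finset.sum_add_distrib]
  refine Finset.sum_congr rfl fun j _ => ?_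
  rw [smul_smul, smul_smul, ← add_smul]
  congr 1
  field_simp
  ring

lemma hollow_rel {n K : ℕ} (hK : 0 < K) (v : Fin K → Fin n → ℝ) (hv : ∀ j, IsLatticePt (v j))
    (hinter : (interior (convexHull ℝ (Set.range v))).Nonempty)
    (hh : intLat (convexHull ℝ (Set.range v)) = ∅) :
    ∑ J ∈ (Finset.univ : Finset (Finset (Fin K))).erase Finset.univ, (-1:ℝ) ^ J.card *
      cnt (((K - 1 - J.card : ℕ) : ℝ) • convexHull ℝ (Set.range v)) = 0 := by
  classical
  rw [Finset.sum_congr rfl (fun J _ => by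
    rw [← cnt_translate _ (∑ j ∈ J, v j) (isLatticePt_sum J v fun j _ => hv j)])]
  refine cnt_sum _ _ _ (fun J => bdd_shift _ _ ((hull_compact v).smul _)) fun z => ?_
  have := cover v {0} isClosed_singleton (convex_singleton 0) ((K:ℝ) - 1) (fun i => (z i : ℝ)) ?_
  · rw [← Finset.add_sum_erase _ _ (Finset.mem_univ (Finset.univ : Finset (Fin K)))] at this
    rw [if_neg, zero_add] at this
    · refine Eq.trans (Finset.sum_congr rfl fun J hJ => ?_) this
      have hlt : J.card < K := by
        have h1 : J ⊂ Finset.univ := Finset.ssubset_univ_iff.2 (Finset.ne_of_mem_erase hJ)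
        simpa using Finset.card_lt_card h1
      refine if_congr ?_ rfl rfl
      rw [CJ_nonempty hK v {0} _ _ J ((K - 1 - J.card : ℕ) : ℝ) (Nat.cast_nonneg _)]
      · rw [Set.singleton_zero, zero_add]; rfl
      · rw [Nat.cast_sub (by omega), Nat.cast_sub (by omega)]; push_cast; ring
    · rintro ⟨l, _, h2, h3, _⟩
      have : ∑ j : Fin K, (1:ℝ) ≤ ∑ j, l j := Finset.sum_le_sum fun j hj => h2 j hj
      rw [h3] at this
      simp at this
      linarith
  · rintro l ⟨h1, _, h3, h4⟩
    by_contra hcon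
    push Not at hcon
    have h5 : ∑ j, (1 - l j) • v j ∈ interior (convexHull ℝ (Set.range v)) := by
      refine mem_interior_hull hK v hinter _ (fun j => by linarith [hcon j]) ?_
      rw [Finset.sum_sub_distrib, h3]; simp
    have h6 : ∑ j, (1 - l j) • v j = ∑ j, v j - fun i => (z i : ℝ) := by
      simp only [sub_smul, one_smul, Finset.sum_sub_distrib]
      rw [sub_eq_zero.1 h4]
    have h7 : IsLatticePt (∑ j, (1 - l j) • v j) := by
      rw [h6]
      intro i
      obtain ⟨y, hy⟩ := isLatticePt_sum Finset.univ v (fun j _ => hv j) i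
      exact ⟨y - z i, by rw [Pi.sub_apply, hy]; push_cast; rfl⟩
    have : ∑ j, (1 - l j) • v j ∈ intLat (convexHull ℝ (Set.range v)) := ⟨h5, h7⟩
    rw [hh] at this
    exact this

end HollowMV

namespace HollowMV

open Filter Topology

lemma fwdDiff_iter_zero_fun {M : Type*} [AddCommMonoid M] (h : M) (a : ℕ) :
    (fwdDiff h)^[a] (0 : M → ℝ) = 0 := by
  induction a with
  | zero => rfl
  | succ a ih =>
    rw [Function.iterate_succ_apply', ih]
    ext y; simp [fwdDiff]

lemma fwdDiff_commute {M : Type*} [AddCommMonoid M] (g h : M) :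
    Function.Commute (fwdDiff g : (M → ℝ) → (M → ℝ)) (fwdDiff h) := by
  intro f
  ext y
  simp only [fwdDiff]
  rw [add_right_comm y g h]
  ring

lemma newton_aux {m : ℕ} (K : Fin m → ℕ) (S : Finset (Fin m)) :
    ∀ (F : (Fin m → ℕ) → ℝ), (∀ i, (fwdDiff (Pi.single i 1 : Fin m → ℕ))^[K i] F = 0) →
    ∃ p : MvPolynomial (Fin m) ℝ, ∀ k : Fin m → ℕ,
      F (fun i => if i ∈ S then k i else 0) = MvPolynomial.eval (fun i => (k i : ℝ)) p := by
  induction S using Finset.induction_on with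
  | empty =>
    intro F _
    exact ⟨MvPolynomial.C (F 0), fun k => by simp; rfl⟩
  | insert i S hi ih =>
    intro F hF
    set e : Fin m → ℕ := Pi.single i 1 with he
    have h1 : ∀ a : ℕ, ∃ p : MvPolynomial (Fin m) ℝ, ∀ k : Fin m → ℕ,
        (fwdDiff e)^[a] F (fun i => if i ∈ S then k i else 0)
          = MvPolynomial.eval (fun i => (k i : ℝ)) p := by
      intro a
      refine ih _ fun j => ?_
      have := ((fwdDiff_commute (Pi.single j 1 : Fin m → ℕ) e).iterate_iterate (K j) a) F
      rw [this, hF j, fwdDiff_iter_zero_fun]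
    choose p hp using h1
    refine ⟨∑ a ∈ Finset.range (K i), MvPolynomial.C ((a.factorial : ℝ)⁻¹) *
      Polynomial.aeval (MvPolynomial.X i) (descPochhammer ℝ a) * p a, fun k => ?_⟩
    have h2 : (fun j => if j ∈ insert i S then k j else 0)
        = (fun j => if j ∈ S then k j else 0) + k i • e := by
      ext j
      by_cases hj : j = i
      · subst hj; simp [hi, he]
      · simp [hj, he]
    have h3 : ∀ a, K i ≤ a → (fwdDiff e)^[a] F = 0 := by
      intro a ha
      obtain ⟨b, rfl⟩ := Nat.exists_eq_add_of_le' ha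
      rw [Function.iterate_add_apply, hF i, fwdDiff_iter_zero_fun]
    rw [h2, shift_eq_sum_fwdDiff_iter e F]
    have h4 : ∀ N, N = k i + 1 ∨ N = K i →
        ∑ a ∈ Finset.range N, (k i).choose a • (fwdDiff e)^[a] F
          (fun j => if j ∈ S then k j else 0) =
        ∑ a ∈ Finset.range (k i + 1 + K i), (k i).choose a • (fwdDiff e)^[a] F
          (fun j => if j ∈ S then k j else 0) := by
      intro N hN
      refine Finset.sum_subset (Finset.range_subset_range.2 (by omega)) fun a _ ha => ?_
      rw [Finset.mem_range, not_lt] at ha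
      rcases hN with rfl | rfl
      · rw [Nat.choose_eq_zero_of_lt (by omega), zero_smul]
      · rw [h3 a ha]; simp
    rw [h4 _ (Or.inl rfl), ← h4 _ (Or.inr rfl), map_sum]
    refine Finset.sum_congr rfl fun a _ => ?_
    rw [hp a k, map_mul, map_mul, MvPolynomial.eval_C, nsmul_eq_mul]
    congr 1
    have h5 : MvPolynomial.eval (fun i => (k i : ℝ))
        (Polynomial.aeval (MvPolynomial.X i) (descPochhammer ℝ a))
        = (descPochhammer ℝ a).eval (k i : ℝ) := by
      rw [Polynomial.aeval_def, Polynomial.hom_eval₂]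
      simp only [MvPolynomial.eval_X]
      rw [Polynomial.eval, Polynomial.eval₂_eq_sum, Polynomial.eval₂_eq_sum]
      simp [MvPolynomial.algebraMap_eq]
    rw [h5, descPochhammer_eval_eq_descFactorial, Nat.descFactorial_eq_factorial_mul_choose]
    push_cast
    rw [inv_mul_cancel_left₀]
    exact_mod_cast a.factorial_ne_zero

lemma newton {m : ℕ} (K : Fin m → ℕ) (F : (Fin m → ℕ) → ℝ)
    (hF : ∀ i, (fwdDiff (Pi.single i 1 : Fin m → ℕ))^[K i] F = 0) :
    ∃ p : MvPolynomial (Fin m) ℝ, ∀ k : Fin m → ℕ,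
      F k = MvPolynomial.eval (fun i => (k i : ℝ)) p := by
  obtain ⟨p, hp⟩ := newton_aux K Finset.univ F hF
  exact ⟨p, fun k => by simpa using hp k⟩

lemma incl_excl {n : ℕ} (p : MvPolynomial (Fin n) ℝ) :
    ∃ r : Polynomial ℝ, ∀ t : ℝ, ∑ I : Finset (Fin n), (-1:ℝ) ^ (n - I.card) *
      MvPolynomial.eval (fun i => if i ∈ I then t else 0) p = t ^ n * r.eval t := by
  induction p using MvPolynomial.induction_on' with
  | monomial u c =>
    refine ⟨Polynomial.C c * ∏ i, (if u i = 0 then 0 else Polynomial.X ^ (u i - 1)), fun t => ?_⟩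
    have h1 : ∏ i : Fin n, (t ^ u i + -(0 : ℝ) ^ u i) = ∏ i : Fin n, (t * (if u i = 0 then 0 else t ^ (u i - 1))) := by
      refine Finset.prod_congr rfl fun i _ => ?_
      by_cases h : u i = 0
      · simp [h]
      · rw [if_neg h, mul_pow_sub_one h, zero_pow h, neg_zero, add_zero]
    have h2 : ∀ I : Finset (Fin n), (-1:ℝ) ^ (n - I.card) *
        MvPolynomial.eval (fun i => if i ∈ I then t else 0) (MvPolynomial.monomial u c)
        = c * ((∏ i ∈ I, t ^ u i) * ∏ i ∈ Iᶜ, (-(0:ℝ) ^ u i)) := by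
      intro I
      rw [MvPolynomial.eval_monomial, Finsupp.prod_fintype _ _ (by simp),
        ← Finset.prod_mul_prod_compl I, Finset.prod_neg, Finset.card_compl, Fintype.card_fin]
      rw [Finset.prod_congr (g := fun i => t ^ u i) rfl (fun i hi => by simp [hi]),
        Finset.prod_congr (s₁ := Iᶜ) (g := fun i => (0:ℝ) ^ u i) rfl
          (fun i hi => by simp [Finset.mem_compl.1 hi])]
      ring
    rw [Finset.sum_congr rfl (fun I _ => h2 I), ← Finset.mul_sum, ← Fintype.prod_add, h1,
      Finset.prod_mul_distrib, Finset.prod_const, Polynomial.eval_mul, Polynomial.eval_prod]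
    simp only [Finset.card_univ, Fintype.card_fin, Polynomial.eval_C, apply_ite (Polynomial.eval t),
      Polynomial.eval_zero, Polynomial.eval_pow, Polynomial.eval_X]
    ring
  | add p q hp hq =>
    obtain ⟨r, hr⟩ := hp
    obtain ⟨s, hs⟩ := hq
    refine ⟨r + s, fun t => ?_⟩
    simp only [map_add, mul_add, Finset.sum_add_distrib, hr, hs, Polynomial.eval_add]

lemma asymp {n : ℕ} (P : Set (Fin n → ℝ)) (hc : IsCompact P) (hv : Convex ℝ P) :
    Tendsto (fun N : ℕ => cnt ((N : ℝ) • P) / (N : ℝ) ^ n) atTop (𝓝 (volume P).toReal) := by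
  have h := tendsto_card_div_pow_atTop_volume P hc.isBounded hc.measurableSet
    (hv.addHaar_frontier volume)
  rw [Fintype.card_fin] at h
  refine h.congr' ?_
  filter_upwards [eventually_gt_atTop 0] with N hN
  congr 1
  unfold cnt
  congr 1
  have : NeZero N := ⟨hN.ne'⟩
  have hN' : (N : ℝ) ≠ 0 := by exact_mod_cast hN.ne'
  rw [← Nat.card_coe_set_eq]
  symm
  refine Nat.card_congr (Equiv.ofBijective (fun z => ⟨fun i => (N:ℝ)⁻¹ * (z.1 i : ℝ), ?_, ?_⟩) ⟨?_, ?_⟩)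
  · have := z.2
    obtain ⟨y, hy, hyz⟩ := this
    convert hy using 1
    ext i
    have := congrFun hyz i
    simp only [Pi.smul_apply, smul_eq_mul] at this
    rw [← this, inv_mul_cancel_left₀ hN']
  · rw [← Submodule.coe_pointwise_smul, SetLike.mem_coe, BoxIntegral.unitPartition.mem_smul_span_iff]
    intro i
    exact ⟨z.1 i, by simp [hN']⟩
  · intro a b hab
    ext i
    have := congrFun (congrArg Subtype.val hab) i
    simpa [hN'] using this
  · rintro ⟨y, hy, hyL⟩
    rw [← Submodule.coe_pointwise_smul, SetLike.mem_coe, BoxIntegral.unitPartition.mem_smul_span_iff] at hyL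
    choose z hz using hyL
    have hz' : ∀ i, (z i : ℝ) = N * y i := hz
    refine ⟨⟨z, y, hy, ?_⟩, ?_⟩
    · ext i; simp [hz']
    · ext i; simp [hz', hN']

lemma neg_one {n K : ℕ} (hK : 0 < K) (v : Fin K → Fin n → ℝ) (hv : ∀ j, IsLatticePt (v j))
    (hinter : (interior (convexHull ℝ (Set.range v))).Nonempty)
    (hh : intLat (convexHull ℝ (Set.range v)) = ∅) (q : Polynomial ℝ)
    (hq : ∀ N : ℕ, q.eval (N : ℝ) = cnt ((N : ℝ) • convexHull ℝ (Set.range v))) :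
    q.eval (-1) = 0 := by
  classical
  have hcard : ∀ J : Finset (Fin K), J.card ≤ K := fun J => by
    simpa using Finset.card_le_univ J
  set Q : Polynomial ℝ := ∑ J : Finset (Fin K), Polynomial.C ((-1:ℝ) ^ J.card) *
    q.comp (Polynomial.X + Polynomial.C ((K:ℝ) - J.card)) with hQ
  have hQe : ∀ s : ℝ, Q.eval s = ∑ J : Finset (Fin K), (-1:ℝ) ^ J.card *
      q.eval (s + ((K:ℝ) - J.card)) := by
    intro s
    simp [hQ, Polynomial.eval_finsetSum, Polynomial.eval_comp]
  have hQ0 : Q = 0 := by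
    refine Polynomial.eq_zero_of_infinite_isRoot Q ?_
    refine Set.Infinite.mono ?_ (Set.infinite_range_of_injective (Nat.cast_injective (R := ℝ)))
    rintro _ ⟨N, rfl⟩
    change Q.eval (N:ℝ) = 0
    rw [hQe, ← closed_rel hK v hv ((N:ℝ) • convexHull ℝ (Set.range v))
      ((hull_compact v).smul _) ((convex_convexHull ℝ _).smul _)]
    refine Finset.sum_congr rfl fun J _ => ?_
    rw [← Nat.cast_sub (hcard J), ← Nat.cast_add, hq, Nat.cast_add,
      (convex_convexHull ℝ (Set.range v)).add_smul (Nat.cast_nonneg _) (Nat.cast_nonneg _)]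
  have h1 := hQe (-1)
  rw [hQ0, Polynomial.eval_zero,
    ← Finset.add_sum_erase _ _ (Finset.mem_univ (Finset.univ : Finset (Fin K)))] at h1
  have h2 := hollow_rel hK v hv hinter hh
  rw [Finset.sum_congr rfl (g := fun J : Finset (Fin K) => (-1:ℝ) ^ J.card *
      q.eval (-1 + ((K:ℝ) - J.card)))] at h2
  · rw [h2] at h1
    simpa using h1
  · intro J hJ
    have hlt : J.card < K := by
      have h1 : J ⊂ Finset.univ := Finset.ssubset_univ_iff.2 (Finset.ne_of_mem_erase hJ)
      simpa using Finset.card_lt_card h1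
    rw [← hq, Nat.cast_sub (by omega), Nat.cast_sub (by omega)]
    congr 2
    push_cast; ring

end HollowMV

namespace HollowMV

open Filter Topology

lemma param {n : ℕ} (P : Set (Fin n → ℝ)) (hP : IsLatticePolytope P) :
    ∃ (K : ℕ) (v : Fin K → Fin n → ℝ), 0 < K ∧ (∀ j, IsLatticePt (v j)) ∧
      P = convexHull ℝ (Set.range v) := by
  obtain ⟨V, hne, hV, rfl⟩ := hP
  refine ⟨V.card, fun j => (V.equivFin.symm j : Fin n → ℝ), Finset.card_pos.2 hne,
    fun j => hV _ (V.equivFin.symm j).2, ?_⟩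
  congr 1
  ext x
  constructor
  · intro hx
    exact ⟨V.equivFin ⟨x, hx⟩, by simp⟩
  · rintro ⟨j, rfl⟩
    exact (V.equivFin.symm j).2

lemma isLatticePolytope_sum {n : ℕ} {ι : Type*} (I : Finset ι) (P : ι → Set (Fin n → ℝ))
    (hP : ∀ i, IsLatticePolytope (P i)) : IsLatticePolytope (∑ i ∈ I, P i) := by
  classical
  induction I using Finset.induction_on with
  | empty =>
    refine ⟨{0}, by simp, ?_, by simp; rfl⟩
    intro v hv j
    rw [Finset.mem_singleton.1 hv]
    exact ⟨0, by simp⟩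
  | insert i I hi ih =>
    rw [Finset.sum_insert hi]
    obtain ⟨V, hne, hV, h⟩ := hP i
    obtain ⟨W, hne', hW, h'⟩ := ih
    refine ⟨V + W, hne.add hne', ?_, ?_⟩
    · intro x hx
      obtain ⟨a, ha, b, hb, rfl⟩ := Finset.mem_add.1 hx
      intro j
      obtain ⟨y, hy⟩ := hV a ha j
      obtain ⟨z, hz⟩ := hW b hb j
      exact ⟨y + z, by rw [Pi.add_apply, hy, hz]; push_cast; rfl⟩
    · rw [h, h', Finset.coe_add, convexHull_add]

lemma interior_nonempty_of_adim {n : ℕ} (P : Set (Fin n → ℝ)) (hP : IsLatticePolytope P)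
    (hd : adim P = n) : (interior P).Nonempty := by
  obtain ⟨V, hne, hV, rfl⟩ := hP
  have hne2 : ((convexHull ℝ (V : Set (Fin n → ℝ)))).Nonempty := hne.to_set.convexHull
  rw [(convex_convexHull ℝ _).interior_nonempty_iff_affineSpan_eq_top]
  have h1 : (affineSpan ℝ (convexHull ℝ (V : Set (Fin n → ℝ)))).direction = ⊤ := by
    apply Submodule.eq_top_of_finrank_eq
    rw [Module.finrank_fin_fun]
    exact hd
  exact (AffineSubspace.direction_eq_top_iff_of_nonempty
    ((affineSpan_nonempty ℝ).2 hne2)).1 h1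

lemma lattice_mem {n : ℕ} (P : Set (Fin n → ℝ)) (hP : IsLatticePolytope P) :
    ∃ w ∈ P, IsLatticePt w := by
  obtain ⟨V, ⟨w, hw⟩, hV, rfl⟩ := hP
  exact ⟨w, subset_convexHull ℝ _ hw, hV w hw⟩

lemma interior_add_mem {n : ℕ} (A B : Set (Fin n → ℝ)) (x w : Fin n → ℝ)
    (hx : x ∈ interior A) (hw : w ∈ B) : x + w ∈ interior (A + B) := by
  have h : interior A + B ⊆ interior (A + B) :=
    interior_maximal (Set.add_subset_add_right interior_subset) isOpen_interior.add_right
  exact h (Set.add_mem_add hx hw)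

lemma hollow_sub {n : ℕ} (P : Fin n → Set (Fin n → ℝ)) (hP : ∀ i, IsLatticePolytope (P i))
    (hhollow : intLat (∑ i, P i) = ∅) (I : Finset (Fin n)) : intLat (∑ i ∈ I, P i) = ∅ := by
  rw [Set.eq_empty_iff_forall_notMem] at hhollow ⊢
  rintro x ⟨hx, hxL⟩
  obtain ⟨w, hw, hwL⟩ := lattice_mem _ (isLatticePolytope_sum Iᶜ P hP)
  refine hhollow (x + w) ⟨?_, fun j => ?_⟩
  · rw [← Finset.sum_add_sum_compl I]
    exact interior_add_mem _ _ _ _ hx hw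
  · obtain ⟨y, hy⟩ := hxL j
    obtain ⟨z, hz⟩ := hwL j
    exact ⟨y + z, by rw [Pi.add_apply, hy, hz]; push_cast; rfl⟩

lemma interior_sub {n : ℕ} (P : Fin n → Set (Fin n → ℝ)) (hP : ∀ i, IsLatticePolytope (P i))
    (hinter : ∀ i, (interior (P i)).Nonempty) (I : Finset (Fin n)) (hI : I.Nonempty) :
    (interior (∑ i ∈ I, P i)).Nonempty := by
  classical
  obtain ⟨i, hi⟩ := hI
  obtain ⟨x, hx⟩ := hinter i
  obtain ⟨w, hw, _⟩ := lattice_mem _ (isLatticePolytope_sum (I.erase i) P hP)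
  rw [← Finset.add_sum_erase I P hi]
  exact ⟨_, interior_add_mem _ _ _ _ hx hw⟩

lemma polytope_compact {n : ℕ} {P : Set (Fin n → ℝ)} (hP : IsLatticePolytope P) :
    IsCompact P := by
  obtain ⟨V, _, _, rfl⟩ := hP
  exact V.finite_toSet.isCompact_convexHull ℝ

lemma polytope_convex {n : ℕ} {P : Set (Fin n → ℝ)} (hP : IsLatticePolytope P) :
    Convex ℝ P := by
  obtain ⟨V, _, _, rfl⟩ := hP
  exact convex_convexHull ℝ _

lemma polytope_nonempty {n : ℕ} {P : Set (Fin n → ℝ)} (hP : IsLatticePolytope P) :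
    P.Nonempty := by
  obtain ⟨w, hw, _⟩ := lattice_mem P hP
  exact ⟨w, hw⟩

/-- weighted Minkowski sum -/
def DD {n : ℕ} (P : Fin n → Set (Fin n → ℝ)) (k : Fin n → ℕ) : Set (Fin n → ℝ) :=
  ∑ i, (k i : ℝ) • P i

lemma DD_compact {n : ℕ} (P : Fin n → Set (Fin n → ℝ)) (hP : ∀ i, IsLatticePolytope (P i))
    (k : Fin n → ℕ) : IsCompact (DD P k) := by
  unfold DD
  refine Finset.sum_induction _ IsCompact (fun _ _ h h' => h.add h') ?_
    (fun i _ => (polytope_compact (hP i)).smul _)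
  exact isCompact_singleton

lemma DD_convex {n : ℕ} (P : Fin n → Set (Fin n → ℝ)) (hP : ∀ i, IsLatticePolytope (P i))
    (k : Fin n → ℕ) : Convex ℝ (DD P k) := by
  unfold DD
  refine Finset.sum_induction _ (Convex ℝ) (fun _ _ h h' => h.add h') ?_
    (fun i _ => (polytope_convex (hP i)).smul _)
  exact convex_singleton 0

lemma DD_add {n : ℕ} (P : Fin n → Set (Fin n → ℝ)) (hP : ∀ i, IsLatticePolytope (P i))
    (k : Fin n → ℕ) (i : Fin n) (a : ℕ) :
    DD P (k + a • Pi.single i 1) = DD P k + (a : ℝ) • P i := by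
  classical
  unfold DD
  rw [← Finset.add_sum_erase _ _ (Finset.mem_univ i),
    ← Finset.add_sum_erase _ (fun j => (k j : ℝ) • P j) (Finset.mem_univ i)]
  rw [Finset.sum_congr rfl (g := fun j => (k j : ℝ) • P j)]
  · simp only [Pi.add_apply, Pi.smul_apply, Pi.single_eq_same, smul_eq_mul, mul_one, Nat.cast_add]
    rw [(polytope_convex (hP i)).add_smul (Nat.cast_nonneg _) (Nat.cast_nonneg _)]
    abel
  · intro j hj
    have : j ≠ i := Finset.ne_of_mem_erase hj
    simp [this]

lemma DD_ind {n : ℕ} (P : Fin n → Set (Fin n → ℝ)) (hP : ∀ i, IsLatticePolytope (P i))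
    (N : ℕ) (I : Finset (Fin n)) :
    DD P (fun i => if i ∈ I then N else 0) = (N : ℝ) • ∑ i ∈ I, P i := by
  classical
  unfold DD
  rw [Finset.smul_sum, ← Finset.sum_add_sum_compl I, Finset.sum_congr rfl
    (g := fun i => (N:ℝ) • P i) (fun i hi => by simp [hi]),
    Finset.sum_eq_zero (s := Iᶜ), add_zero]
  intro i hi
  dsimp only
  rw [if_neg (Finset.mem_compl.1 hi), Nat.cast_zero, Set.zero_smul_set (polytope_nonempty (hP i))]

lemma diff_zero {n : ℕ} (P : Fin n → Set (Fin n → ℝ)) (hP : ∀ i, IsLatticePolytope (P i))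
    (i : Fin n) {K : ℕ} (hK : 0 < K) (v : Fin K → Fin n → ℝ) (hv : ∀ j, IsLatticePt (v j))
    (hPv : P i = convexHull ℝ (Set.range v)) :
    (fwdDiff (Pi.single i 1 : Fin n → ℕ))^[K] (fun k => cnt (DD P k)) = 0 := by
  ext y
  rw [fwdDiff_iter_eq_sum_shift]
  have h := closed_rel hK v hv (DD P y) (DD_compact P hP y) (DD_convex P hP y)
  rw [← hPv] at h
  simp only [← DD_add P hP] at h
  have h' := Finset.sum_powerset_apply_card (fun b => (-1:ℝ) ^ b *
    cnt (DD P (y + (K - b) • (Pi.single i 1 : Fin n → ℕ))))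
    (x := (Finset.univ : Finset (Fin K)))
  rw [Finset.powerset_univ] at h'
  replace h := h'.symm.trans h
  simp only [Finset.card_univ, Fintype.card_fin] at h
  rw [← Finset.sum_flip] at h
  refine Eq.trans (Finset.sum_congr rfl fun a ha => ?_) h
  have ha' : a ≤ K := Nat.lt_succ_iff.1 (Finset.mem_range.1 ha)
  rw [Nat.choose_symm ha', Nat.sub_sub_self ha', nsmul_eq_mul, zsmul_eq_mul]
  push_cast
  ring

end HollowMV

/-- a full-dimensional family with hollow Minkowski sum has mixed volume one. -/
theorem mixedVol_eq_one_of_hollow {n : ℕ}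
    (P : Fin n → Set (Fin n → ℝ)) (hP : ∀ i, IsLatticePolytope (P i))
    (hdim : ∀ i, adim (P i) = n)
    (hhollow : intLat (∑ i, P i) = ∅) :
    mixedVol P = 1 := by
  classical
  have hinter := fun i => HollowMV.interior_nonempty_of_adim (P i) (hP i) (hdim i)
  choose K v hK hv hPv using fun i => HollowMV.param (P i) (hP i)
  obtain ⟨p, hp⟩ := HollowMV.newton K (fun k => HollowMV.cnt (HollowMV.DD P k))
    (fun i => HollowMV.diff_zero P hP i (hK i) (v i) (hv i) (hPv i))
  obtain ⟨r, hr⟩ := HollowMV.incl_excl p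
  -- values along rays
  have hray : ∀ (I : Finset (Fin n)) (N : ℕ),
      MvPolynomial.eval (fun i => if i ∈ I then (N:ℝ) else 0) p
        = HollowMV.cnt ((N:ℝ) • ∑ i ∈ I, P i) := by
    intro I N
    rw [← HollowMV.DD_ind P hP N I]
    have := hp (fun i => if i ∈ I then N else 0)
    simp only [Nat.cast_ite, Nat.cast_zero] at this
    exact this.symm
  -- limit
  have hlim : Filter.Tendsto (fun N : ℕ => r.eval (N:ℝ)) Filter.atTop (nhds (mixedVol P)) := by
    have h1 : Filter.Tendsto (fun N : ℕ => ∑ I : Finset (Fin n), (-1:ℝ) ^ (n - I.card) *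
        (HollowMV.cnt ((N:ℝ) • ∑ i ∈ I, P i) / (N:ℝ) ^ n)) Filter.atTop (nhds (mixedVol P)) := by
      unfold mixedVol
      refine tendsto_finsetSum _ fun I _ => Filter.Tendsto.const_mul _ ?_
      have hL := HollowMV.isLatticePolytope_sum I P hP
      exact HollowMV.asymp _ (HollowMV.polytope_compact hL) (HollowMV.polytope_convex hL)
    refine h1.congr' ?_
    filter_upwards [Filter.eventually_gt_atTop 0] with N hN
    have hN' : (N:ℝ) ^ n ≠ 0 := by positivity
    simp only [← hray, ← mul_div_assoc]
    rw [← Finset.sum_div, hr, mul_div_cancel_left₀ _ hN']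
  have hconst : ∀ t, r.eval t = mixedVol P := by
    by_cases hdeg : 0 < r.degree
    · exfalso
      have hinf := (Polynomial.abs_tendsto_atTop r hdeg).comp
        (tendsto_natCast_atTop_atTop (R := ℝ))
      exact not_tendsto_nhds_of_tendsto_atTop hinf _ hlim.abs
    · have hC := Polynomial.eq_C_of_degree_le_zero (not_lt.1 hdeg)
      rw [hC] at hlim ⊢
      simp only [Polynomial.eval_C] at hlim ⊢
      intro _
      exact tendsto_nhds_unique tendsto_const_nhds hlim
  have hm := hr (-1)
  rw [hconst, Finset.sum_eq_single ∅] at hm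
  · have h0 := hp 0
    have h1 : HollowMV.DD P 0 = 0 := by
      unfold HollowMV.DD
      refine Finset.sum_eq_zero fun i _ => ?_
      rw [Pi.zero_apply, Nat.cast_zero,
        Set.zero_smul_set (HollowMV.polytope_nonempty (hP i))]
    have h2 : HollowMV.cnt (0 : Set (Fin n → ℝ)) = 1 := by
      unfold HollowMV.cnt
      have : {z : Fin n → ℤ | (fun i => (z i : ℝ)) ∈ (0 : Set (Fin n → ℝ))} = {0} := by
        ext z
        simp [funext_iff]
      rw [this]; simp
    have h3 : MvPolynomial.eval (fun i : Fin n => if i ∈ (∅ : Finset (Fin n)) then (-1:ℝ) else 0) p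
        = 1 := by
      simp only [h1, h2] at h0
      rw [h0]
      congr 2
      ext i; simp
    rw [h3] at hm
    simp only [Finset.card_empty, Nat.sub_zero, mul_one] at hm
    have h4 : (-1:ℝ) ^ n ≠ 0 := by positivity
    have h5 : (-1:ℝ) ^ n * 1 = (-1) ^ n * mixedVol P := by rw [mul_one]; exact hm
    exact (mul_left_cancel₀ h4 h5).symm
  · intro I _ hI
    have hI' : I.Nonempty := Finset.nonempty_iff_ne_empty.2 hI
    obtain ⟨k, w, hk, hw, hPw⟩ := HollowMV.param _ (HollowMV.isLatticePolytope_sum I P hP)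
    have hq : ∀ t : ℝ, (MvPolynomial.aeval
        (fun i => if i ∈ I then (Polynomial.X : Polynomial ℝ) else 0) p).eval t
        = MvPolynomial.eval (fun i => if i ∈ I then t else 0) p := by
      intro t
      have := MvPolynomial.map_aeval
        (fun i => if i ∈ I then (Polynomial.X : Polynomial ℝ) else 0) (Polynomial.evalRingHom t) p
      rw [Polynomial.coe_evalRingHom] at this
      rw [this, MvPolynomial.coe_eval₂Hom, MvPolynomial.eval, MvPolynomial.coe_eval₂Hom]
      congr 1
      · ext; simp
      · ext i; split_ifs <;> simp
    rw [← hq, HollowMV.neg_one hk w hw, mul_zero]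
    · rw [← hPw]; exact HollowMV.interior_sub P hP hinter I hI'
    · rw [← hPw]; exact HollowMV.hollow_sub P hP hhollow I
    · intro N
      rw [hq, hray, hPw]
  · intro h; exact absurd (Finset.mem_univ _) h
end
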